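/- arXiv:1311.3887 — 2 statements merged into one kernel-verified Lean document; each statement's English description precedes it below -/
import Mathlib

section
/- Entropic uncertainty relation for H^↓: Let ρ_ABC be a density matrix on ℂ^(A×B×C), let {M_x}_{x∈X} and {N_y}_{y∈Y} be POVMs on the A-system (finite families of positive semidefinite matrices summing to the identity), and let c := max_{x,y} ‖ M_x^{1/2} N_y^{1/2} ‖ where ‖·‖ is the operator norm. Define the classical-quantum post-measurement states ρ_XB on ℂ^(X×B) by ρ_XB (x,b)(x',b') = (if x = x' then (tr_{AC}((M_x ⊗ 1_{BC}) ρ_ABC)) b b' else 0), and ρ_YC on ℂ^(Y×C) analogously with N_y and tr_{AB}. Then for all α, β ∈ (0,2) with α + β = 2 and α ≠ 1: H_α^↓(X|B)_ρ + H_β^↓(Y|C)_ρ ≥ log(1/c), where H_γ^↓(X|B)_ρ := −D_γ(ρ_XB ‖ 1_X ⊗ ρ_B) with ρ_B = tr_X ρ_XB. -/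
open scoped Kronecker ComplexOrder
open Matrix

/-- Real power of a matrix via the functional calculus on the eigenvalues,
with the convention `0 ^ t = 0` (powers taken on the support). -/
noncomputable def matRpow {n : Type*} [Fintype n] [DecidableEq n]
    (A : Matrix n n ℂ) (t : ℝ) : Matrix n n ℂ :=
  if hA : A.IsHermitian then
    (hA.eigenvectorUnitary : Matrix n n ℂ) *
      Matrix.diagonal (fun i =>
        ((if hA.eigenvalues i = 0 then (0 : ℝ) else (hA.eigenvalues i) ^ t : ℝ) : ℂ)) *
      star (hA.eigenvectorUnitary : Matrix n n ℂ)
  else 0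

/-- Matrix logarithm on the support. -/
noncomputable def matLog {n : Type*} [Fintype n] [DecidableEq n]
    (A : Matrix n n ℂ) : Matrix n n ℂ :=
  if hA : A.IsHermitian then
    (hA.eigenvectorUnitary : Matrix n n ℂ) *
      Matrix.diagonal (fun i => ((Real.log (hA.eigenvalues i) : ℝ) : ℂ)) *
      star (hA.eigenvectorUnitary : Matrix n n ℂ)
  else 0

/-- Partial trace over the first tensor factor. -/
noncomputable def trFst {a b : Type*} [Fintype a] (M : Matrix (a × b) (a × b) ℂ) :
    Matrix b b ℂ :=
  Matrix.of fun j j' => ∑ i, M (i, j) (i, j')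

/-- Partial trace over the second tensor factor. -/
noncomputable def trSnd {a b : Type*} [Fintype b] (M : Matrix (a × b) (a × b) ℂ) :
    Matrix a a ℂ :=
  Matrix.of fun i i' => ∑ j, M (i, j) (i', j)

/-- Partial trace over the third factor of a tripartite system. -/
noncomputable def trThird {a b c : Type*} [Fintype c]
    (M : Matrix (a × b × c) (a × b × c) ℂ) : Matrix (a × b) (a × b) ℂ :=
  Matrix.of fun p p' => ∑ k, M (p.1, p.2, k) (p'.1, p'.2, k)

/-- Partial trace over the second factor of a tripartite system. -/
noncomputable def trSecond {a b c : Type*} [Fintype b]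
    (M : Matrix (a × b × c) (a × b × c) ℂ) : Matrix (a × c) (a × c) ℂ :=
  Matrix.of fun p p' => ∑ j, M (p.1, j, p.2) (p'.1, j, p'.2)

/-- Partial trace over the first two factors of a tripartite system. -/
noncomputable def trFstSnd {a b c : Type*} [Fintype a] [Fintype b]
    (M : Matrix (a × b × c) (a × b × c) ℂ) : Matrix c c ℂ :=
  Matrix.of fun k k' => ∑ i, ∑ j, M (i, j, k) (i, j, k')

/-- Partial trace over the first and third factors of a tripartite system. -/
noncomputable def trFstThird {a b c : Type*} [Fintype a] [Fintype c]
    (M : Matrix (a × b × c) (a × b × c) ℂ) : Matrix b b ℂ :=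
  Matrix.of fun j j' => ∑ i, ∑ k, M (i, j, k) (i, j', k)

/-- Quantum Rényi relative entropy `D_α(ρ‖σ)`. -/
noncomputable def renyiDiv {n : Type*} [Fintype n] [DecidableEq n]
    (α : ℝ) (ρ σ : Matrix n n ℂ) : ℝ :=
  (α - 1)⁻¹ * Real.log ((matRpow ρ α * matRpow σ (1 - α)).trace.re)

/-- Sandwiched quantum Rényi divergence `D̃_α(ρ‖σ)`. -/
noncomputable def sandwichedRenyiDiv {n : Type*} [Fintype n] [DecidableEq n]
    (α : ℝ) (ρ σ : Matrix n n ℂ) : ℝ :=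
  (α - 1)⁻¹ * Real.log
    ((matRpow (matRpow σ ((1 - α) / (2 * α)) * ρ * matRpow σ ((1 - α) / (2 * α))) α).trace.re)

/-- Quantum relative entropy `D(ρ‖σ)`. -/
noncomputable def relEntropy {n : Type*} [Fintype n] [DecidableEq n]
    (ρ σ : Matrix n n ℂ) : ℝ :=
  (ρ * (matLog ρ - matLog σ)).trace.re

/-!
Purifying `ρ` by a system `D` turns the sum of traces over `C` with exponents `1 + s`, `-s` into a
sum of Lieb functionals `tr (P^(1-s) Z Q^s Zᴴ)` on `A × B × D`. In eigencoordinates, the scalar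
identity `p^(1-s) q^s ∝ ∫ t^(s-2) · tpq/(tp+q) dt` exhibits such a functional as an integral over
`t` of `min_W (t tr (P W Wᴴ) + tr ((Z-W) Q (Z-W)ᴴ))`, so two families of Lieb functionals can be
compared by comparing minimisation problems. From minimisers `W x` for the outcomes of `M` on the
`B` side, put `T = ∑ₓ M x ⊗ W x`: Kadison–Schwarz, together with `N y * M x * N y ≤ c² N y`, shows
that `T (S y)ᴴ`, where `(S y)ᴴ * S y = N y`, are good enough candidates for the outcomes of `N`.
The case `α > 1` follows by exchanging the two measurements and `B` with `C`.
-/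

/-- The real power `x ^ t` with the convention `0 ^ t = 0` of `matRpow` for every exponent,
including `t ≤ 0`. -/
noncomputable def suppRpow (t x : ℝ) : ℝ := if x = 0 then 0 else x ^ t

lemma suppRpow_eq_rpow {t : ℝ} (ht : t ≠ 0) : suppRpow t = fun x => x ^ t := by
  ext x
  by_cases hx : x = 0 <;> simp [suppRpow, hx, Real.zero_rpow ht]

lemma suppRpow_nonneg (t : ℝ) {x : ℝ} (hx : 0 ≤ x) : 0 ≤ suppRpow t x := by
  unfold suppRpow
  split_ifs <;> positivity

lemma suppRpow_add (a b : ℝ) {x : ℝ} (hx : 0 ≤ x) :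
    suppRpow (a + b) x = suppRpow a x * suppRpow b x := by
  by_cases h : x = 0
  · simp [suppRpow, h]
  · simp [suppRpow, h, Real.rpow_add (hx.lt_of_ne' h)]

section MatRpow

variable {m n : Type*} [Fintype m] [DecidableEq m] [Fintype n] [DecidableEq n]

lemma matRpow_eq_conj {A : Matrix n n ℂ} (hA : A.IsHermitian) (t : ℝ) :
    matRpow A t = (hA.eigenvectorUnitary : Matrix n n ℂ) *
      diagonal (fun i => (suppRpow t (hA.eigenvalues i) : ℂ)) *
      (hA.eigenvectorUnitary : Matrix n n ℂ)ᴴ := by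
  rw [matRpow, dif_pos hA]
  rfl

lemma matRpow_eq_cfc {A : Matrix n n ℂ} (hA : A.IsHermitian) (t : ℝ) :
    matRpow A t = cfc (suppRpow t) A := by
  rw [matRpow_eq_conj hA, hA.cfc_eq, IsHermitian.cfc, Unitary.conjStarAlgAut_apply]
  rfl

lemma isHermitian_matRpow (A : Matrix n n ℂ) (t : ℝ) : (matRpow A t).IsHermitian := by
  by_cases hA : A.IsHermitian
  · rw [matRpow_eq_cfc hA]
    exact cfc_predicate (suppRpow t) A
  · rw [matRpow, dif_neg hA]
    exact isHermitian_zero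

open scoped MatrixOrder in
lemma posSemidef_matRpow {A : Matrix n n ℂ} (hA : A.PosSemidef) (t : ℝ) :
    (matRpow A t).PosSemidef := by
  rw [matRpow_eq_cfc hA.1, ← nonneg_iff_posSemidef]
  exact cfc_nonneg fun x hx => suppRpow_nonneg t
    (spectrum_nonneg_of_nonneg (nonneg_iff_posSemidef.2 hA) hx)

open scoped MatrixOrder in
lemma matRpow_add {A : Matrix n n ℂ} (hA : A.PosSemidef) (a b : ℝ) :
    matRpow A (a + b) = matRpow A a * matRpow A b := by
  have hcont (f : ℝ → ℝ) : ContinuousOn f (spectrum ℝ A) := A.finite_real_spectrum.continuousOn f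
  simp only [matRpow_eq_cfc hA.1]
  rw [← cfc_mul _ _ A (hcont _) (hcont _)]
  exact cfc_congr fun x hx => suppRpow_add a b
    (spectrum_nonneg_of_nonneg (nonneg_iff_posSemidef.2 hA) hx)

lemma matRpow_one {A : Matrix n n ℂ} (hA : A.IsHermitian) : matRpow A 1 = A := by
  rw [matRpow_eq_cfc hA, suppRpow_eq_rpow one_ne_zero]
  simp only [Real.rpow_one]
  exact cfc_id' ℝ A hA.isSelfAdjoint

open scoped MatrixOrder in
lemma matRpow_smul {A : Matrix n n ℂ} (hA : A.PosSemidef) {k t : ℝ} (hk : 0 ≤ k) (ht : t ≠ 0) :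
    matRpow (k • A) t = k ^ t • matRpow A t := by
  have hkA : (k • A).IsHermitian := (IsSelfAdjoint.all k).smul hA.1.isSelfAdjoint
  rw [matRpow_eq_cfc hA.1, matRpow_eq_cfc hkA, suppRpow_eq_rpow ht,
    ← cfc_comp_smul k _ A ((A.finite_real_spectrum.image _).continuousOn _) hA.1.isSelfAdjoint,
    ← cfc_smul _ _ _ (A.finite_real_spectrum.continuousOn _)]
  exact cfc_congr fun x hx => Real.mul_rpow hk
    (spectrum_nonneg_of_nonneg (nonneg_iff_posSemidef.2 hA) hx)

lemma matRpow_transpose {A : Matrix n n ℂ} (hA : A.IsHermitian) (t : ℝ) :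
    matRpow Aᵀ t = (matRpow A t)ᵀ := by
  -- A Hermitian matrix is transposed by conjugating its entries, which is multiplicative.
  let conj : Matrix n n ℂ ≃⋆ₐ[ℝ] Matrix n n ℂ :=
    .ofAlgEquiv Complex.conjAe.mapMatrix fun A => by ext; simp
  have conj_eq {B : Matrix n n ℂ} (hB : B.IsHermitian) : conj B = Bᵀ :=
    congrArg transpose hB
  rw [matRpow_eq_cfc hA.transpose, ← conj_eq hA, ← conj_eq (isHermitian_matRpow A t),
    matRpow_eq_cfc hA]
  refine (StarAlgHomClass.map_cfc (S := ℝ) conj _ A (A.finite_real_spectrum.continuousOn _)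
    (continuous_id.matrix_map Complex.continuous_conj) hA.isSelfAdjoint ?_).symm
  rw [conj_eq hA]
  exact hA.transpose.isSelfAdjoint

/-- The change of coordinates expressing a matrix in the eigenbases of `A` (rows) and of `B`
(columns). -/
noncomputable def eigenCoords {A : Matrix m m ℂ} {B : Matrix n n ℂ} (hA : A.IsHermitian)
    (hB : B.IsHermitian) : Matrix m n ℂ ≃ Matrix m n ℂ where
  toFun Z := (hA.eigenvectorUnitary : Matrix m m ℂ)ᴴ * Z * (hB.eigenvectorUnitary : Matrix n n ℂ)
  invFun Z := (hA.eigenvectorUnitary : Matrix m m ℂ) * Z * (hB.eigenvectorUnitary : Matrix n n ℂ)ᴴ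
  left_inv Z := by
    simp only [← star_eq_conjTranspose, ← Matrix.mul_assoc, SetLike.coe_mem,
      Unitary.mul_star_self_of_mem, Matrix.one_mul]
    simp [Matrix.mul_assoc]
  right_inv Z := by
    simp only [← star_eq_conjTranspose, ← Matrix.mul_assoc, SetLike.coe_mem,
      Unitary.star_mul_self_of_mem, Matrix.one_mul]
    simp [Matrix.mul_assoc]

section EigenCoords

variable {A : Matrix m m ℂ} {B : Matrix n n ℂ} (hA : A.IsHermitian) (hB : B.IsHermitian)

lemma eigenCoords_sub (Z W : Matrix m n ℂ) :
    eigenCoords hA hB (Z - W) = eigenCoords hA hB Z - eigenCoords hA hB W := by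
  simp [eigenCoords, Matrix.mul_sub, Matrix.sub_mul]

lemma eigenCoords_matRpow_mul (t : ℝ) (Z : Matrix m n ℂ) :
    eigenCoords hA hB (matRpow A t * Z) =
      diagonal (fun i => (suppRpow t (hA.eigenvalues i) : ℂ)) * eigenCoords hA hB Z := by
  rw [matRpow_eq_conj hA]
  simp [eigenCoords, ← star_eq_conjTranspose, ← Matrix.mul_assoc]

lemma eigenCoords_mul_matRpow (t : ℝ) (Z : Matrix m n ℂ) :
    eigenCoords hA hB (Z * matRpow B t) =
      eigenCoords hA hB Z * diagonal (fun j => (suppRpow t (hB.eigenvalues j) : ℂ)) := by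
  rw [matRpow_eq_conj hB]
  simp [eigenCoords, ← star_eq_conjTranspose, Matrix.mul_assoc]

lemma trace_mul_conjTranspose_eq_trace_eigenCoords (Z W : Matrix m n ℂ) :
    (Z * Wᴴ).trace = (eigenCoords hA hB Z * (eigenCoords hA hB W)ᴴ).trace := by
  set U := (hA.eigenvectorUnitary : Matrix m m ℂ)
  set V := (hB.eigenvectorUnitary : Matrix n n ℂ)
  have hU : U * Uᴴ = 1 := Unitary.coe_mul_star_self _
  have hV : V * Vᴴ = 1 := Unitary.coe_mul_star_self _
  calc (Z * Wᴴ).trace = (U * Uᴴ * (Z * (V * Vᴴ) * Wᴴ)).trace := by simp [hU, hV]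
    _ = (Uᴴ * (Z * (V * Vᴴ) * Wᴴ) * U).trace := by rw [Matrix.mul_assoc, trace_mul_comm U]
    _ = (Uᴴ * Z * V * (Uᴴ * W * V)ᴴ).trace := by simp [Matrix.mul_assoc]

end EigenCoords

lemma matRpow_mul_eq_mul_matRpow {A : Matrix m m ℂ} {B : Matrix n n ℂ}
    (hA : A.IsHermitian) (hB : B.IsHermitian) {Z : Matrix m n ℂ} (h : A * Z = Z * B) (t : ℝ) :
    matRpow A t * Z = Z * matRpow B t := by
  refine (eigenCoords hA hB).injective ?_
  rw [← matRpow_one hA, ← matRpow_one hB] at h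
  replace h := congrArg (eigenCoords hA hB) h
  rw [eigenCoords_matRpow_mul, eigenCoords_mul_matRpow] at h ⊢
  ext i j
  replace h := congrFun (congrFun h i) j
  rw [diagonal_mul, mul_diagonal, mul_comm] at h ⊢
  -- A nonzero coordinate of `Z` links equal eigenvalues only.
  rcases mul_eq_mul_left_iff.1 h with h | h
  · have : hA.eigenvalues i = hB.eigenvalues j := by
      simpa [suppRpow_eq_rpow one_ne_zero] using h
    rw [this]
  · rw [h, zero_mul, zero_mul]

lemma mul_matRpow_conjTranspose_mul_self_mul (Z : Matrix m n ℂ) (t : ℝ) :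
    Z * matRpow (Zᴴ * Z) t * Zᴴ = matRpow (Z * Zᴴ) (t + 1) := by
  have h : matRpow (Z * Zᴴ) t * Z = Z * matRpow (Zᴴ * Z) t :=
    matRpow_mul_eq_mul_matRpow (isHermitian_mul_conjTranspose_self Z)
      (isHermitian_conjTranspose_mul_self Z) (Matrix.mul_assoc _ _ _) t
  rw [← h, matRpow_add (posSemidef_self_mul_conjTranspose Z),
    matRpow_one (isHermitian_mul_conjTranspose_self Z), Matrix.mul_assoc]

end MatRpow

section ParallelSum

/-- The parallel sum of two nonnegative reals, with value `0` at `a = b = 0`. -/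
noncomputable def parallelSum (a b : ℝ) : ℝ := a * b / (a + b)

lemma isLeast_parallelSum {a b : ℝ} (ha : 0 ≤ a) (hb : 0 ≤ b) (u : ℂ) :
    IsLeast (Set.range fun w : ℂ => a * ‖w‖ ^ 2 + b * ‖u - w‖ ^ 2) (parallelSum a b * ‖u‖ ^ 2) := by
  rcases (add_nonneg ha hb).eq_or_lt with h | h
  · obtain ⟨rfl, rfl⟩ : a = 0 ∧ b = 0 := ⟨by linarith, by linarith⟩
    simp [parallelSum]
  have complete_square (w : ℂ) : a * ‖w‖ ^ 2 + b * ‖u - w‖ ^ 2 =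
      parallelSum a b * ‖u‖ ^ 2 + (a + b) * ‖w - (b / (a + b) : ℝ) * u‖ ^ 2 := by
    simp only [parallelSum, ← Complex.normSq_eq_norm_sq, Complex.normSq_apply, Complex.sub_re,
      Complex.sub_im, Complex.re_ofReal_mul, Complex.im_ofReal_mul]
    field_simp
    ring
  refine ⟨⟨(b / (a + b) : ℝ) * u, ?_⟩, ?_⟩
  · simp only [complete_square, sub_self, norm_zero]
    ring
  · rintro _ ⟨w, rfl⟩
    simp only [complete_square]
    exact le_add_of_nonneg_right (by positivity)

open MeasureTheory Set

lemma rpow_mul_parallelSum_eq {s p q t : ℝ} (hs : s ∈ Ioo 0 1) (hp : 0 < p) (hq : 0 ≤ q)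
    (ht : 0 < t) :
    t ^ (s - 2) * parallelSum (t * p) q = p * Real.rpowIntegrand₀₁ s t (q / p) := by
  rw [Real.rpowIntegrand₀₁_eq_pow_div hs ht.le (by positivity), parallelSum,
    show s - 1 = s - 2 + 1 by ring, Real.rpow_add_one ht.ne']
  field_simp

lemma integrableOn_rpow_mul_parallelSum {s p q : ℝ} (hs : s ∈ Ioo 0 1) (hp : 0 ≤ p)
    (hq : 0 ≤ q) : IntegrableOn (fun t => t ^ (s - 2) * parallelSum (t * p) q) (Ioi 0) := by
  rcases hp.eq_or_lt with rfl | hp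
  · simp [parallelSum]
  · rw [integrableOn_congr_fun (s := Ioi 0) (fun t ht => rpow_mul_parallelSum_eq hs hp hq ht)
      measurableSet_Ioi]
    exact (Real.integrableOn_rpowIntegrand₀₁_Ioi hs (by positivity)).const_mul p

lemma integral_rpow_mul_parallelSum {s p q : ℝ} (hs : s ∈ Ioo 0 1) (hp : 0 ≤ p) (hq : 0 ≤ q) :
    ∫ t in Ioi 0, t ^ (s - 2) * parallelSum (t * p) q =
      (∫ t in Ioi 0, Real.rpowIntegrand₀₁ s t 1) * (p ^ (1 - s) * q ^ s) := by
  rcases hp.eq_or_lt with rfl | hp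
  · simp [parallelSum, Real.zero_rpow (sub_pos.2 hs.2).ne']
  rw [setIntegral_congr_fun measurableSet_Ioi fun t ht => rpow_mul_parallelSum_eq hs hp hq ht,
    integral_const_mul, Real.integral_rpowIntegrand₀₁_eq_rpow_mul_const hs (by positivity),
    Real.div_rpow hq hp.le, Real.rpow_sub hp, Real.rpow_one]
  field_simp

end ParallelSum

section LiebTrace

/-- Lieb's trace functional `tr (P^(1-s) Z Q^s Zᴴ)`. -/
noncomputable def liebTrace {m n : Type*} [Fintype m] [DecidableEq m] [Fintype n] [DecidableEq n]
    (s : ℝ) (P : Matrix m m ℂ) (Q : Matrix n n ℂ) (Z : Matrix m n ℂ) : ℝ :=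
  (matRpow P (1 - s) * Z * matRpow Q s * Zᴴ).trace.re

/-- The cost of splitting `Z` as `W + (Z - W)`, weighting the first part by `t P` on the left and
the second by `Q` on the right. -/
noncomputable def splitCost {m n : Type*} [Fintype m] [Fintype n] (t : ℝ) (P : Matrix m m ℂ)
    (Q : Matrix n n ℂ) (Z W : Matrix m n ℂ) : ℝ :=
  t * (P * W * Wᴴ).trace.re + ((Z - W) * Q * (Z - W)ᴴ).trace.re

/-- The optimal splitting cost: the quadratic form of the parallel sum of left multiplication by
`t P` and right multiplication by `Q`. -/
noncomputable def minSplitCost {m n : Type*} [Fintype m] [Fintype n] (t : ℝ) (P : Matrix m m ℂ)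
    (Q : Matrix n n ℂ) (Z : Matrix m n ℂ) : ℝ :=
  ⨅ W, splitCost t P Q Z W

variable {m n : Type*} [Fintype m] [Fintype n] {P : Matrix m m ℂ} {Q : Matrix n n ℂ}

lemma trace_diagonal_mul_mul_diagonal_mul_conjTranspose [DecidableEq m] [DecidableEq n] (p : m → ℝ)
    (q : n → ℝ) (u : Matrix m n ℂ) :
    (diagonal (fun i => (p i : ℂ)) * u * diagonal (fun j => (q j : ℂ)) * uᴴ).trace.re =
      ∑ i, ∑ j, p i * q j * ‖u i j‖ ^ 2 := by
  simp only [trace, diag_apply, mul_apply (N := uᴴ), mul_diagonal, diagonal_mul,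
    conjTranspose_apply, Complex.re_sum]
  refine Finset.sum_congr rfl fun i _ => Finset.sum_congr rfl fun j _ => ?_
  have : (p i : ℂ) * u i j * q j * star (u i j) = ((p i * q j * ‖u i j‖ ^ 2 : ℝ) : ℂ) := by
    push_cast
    rw [← Complex.mul_conj', Complex.star_def]
    ring
  rw [this, Complex.ofReal_re]

lemma liebTrace_eq_sum_eigenCoords [DecidableEq m] [DecidableEq n] (hP : P.IsHermitian)
    (hQ : Q.IsHermitian) (s : ℝ) (Z : Matrix m n ℂ) :
    liebTrace s P Q Z = ∑ i, ∑ j, suppRpow (1 - s) (hP.eigenvalues i) *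
      suppRpow s (hQ.eigenvalues j) * ‖eigenCoords hP hQ Z i j‖ ^ 2 := by
  rw [liebTrace, trace_mul_conjTranspose_eq_trace_eigenCoords hP hQ, eigenCoords_mul_matRpow,
    eigenCoords_matRpow_mul, trace_diagonal_mul_mul_diagonal_mul_conjTranspose]

lemma splitCost_eq_sum_eigenCoords [DecidableEq m] [DecidableEq n] (hP : P.IsHermitian)
    (hQ : Q.IsHermitian) (t : ℝ) (Z W : Matrix m n ℂ) :
    splitCost t P Q Z W = ∑ i, ∑ j, (t * hP.eigenvalues i * ‖eigenCoords hP hQ W i j‖ ^ 2 +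
      hQ.eigenvalues j * ‖eigenCoords hP hQ Z i j - eigenCoords hP hQ W i j‖ ^ 2) := by
  have left : (P * W * Wᴴ).trace.re =
      ∑ i, ∑ j, hP.eigenvalues i * ‖eigenCoords hP hQ W i j‖ ^ 2 := by
    conv_lhs => rw [← matRpow_one hP, trace_mul_conjTranspose_eq_trace_eigenCoords hP hQ,
      eigenCoords_matRpow_mul]
    simpa [suppRpow_eq_rpow one_ne_zero] using trace_diagonal_mul_mul_diagonal_mul_conjTranspose
      hP.eigenvalues 1 (eigenCoords hP hQ W)
  have right (V : Matrix m n ℂ) : (V * Q * Vᴴ).trace.re =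
      ∑ i, ∑ j, hQ.eigenvalues j * ‖eigenCoords hP hQ V i j‖ ^ 2 := by
    conv_lhs => rw [← matRpow_one hQ, trace_mul_conjTranspose_eq_trace_eigenCoords hP hQ,
      eigenCoords_mul_matRpow]
    simpa [suppRpow_eq_rpow one_ne_zero] using trace_diagonal_mul_mul_diagonal_mul_conjTranspose
      1 hQ.eigenvalues (eigenCoords hP hQ V)
  simp only [splitCost, left, right, eigenCoords_sub, Matrix.sub_apply, Finset.mul_sum,
    Finset.sum_add_distrib, mul_assoc]

lemma isLeast_splitCost [DecidableEq m] [DecidableEq n] (hP : P.PosSemidef) (hQ : Q.PosSemidef)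
    {t : ℝ} (ht : 0 ≤ t) (Z : Matrix m n ℂ) :
    IsLeast (Set.range (splitCost t P Q Z))
      (∑ i, ∑ j, parallelSum (t * hP.1.eigenvalues i) (hQ.1.eigenvalues j) *
        ‖eigenCoords hP.1 hQ.1 Z i j‖ ^ 2) := by
  have least (i : m) (j : n) := isLeast_parallelSum (mul_nonneg ht (hP.eigenvalues_nonneg i))
    (hQ.eigenvalues_nonneg j) (eigenCoords hP.1 hQ.1 Z i j)
  choose w hw using fun i j => (least i j).1
  refine ⟨⟨(eigenCoords hP.1 hQ.1).symm (of w), ?_⟩, ?_⟩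
  · simp [splitCost_eq_sum_eigenCoords hP.1 hQ.1, ← hw]
  · rintro _ ⟨W, rfl⟩
    rw [splitCost_eq_sum_eigenCoords hP.1 hQ.1]
    exact Finset.sum_le_sum fun i _ => Finset.sum_le_sum fun j _ => (least i j).2 ⟨_, rfl⟩

lemma minSplitCost_eq_sum_eigenCoords [DecidableEq m] [DecidableEq n] (hP : P.PosSemidef)
    (hQ : Q.PosSemidef) {t : ℝ} (ht : 0 ≤ t) (Z : Matrix m n ℂ) :
    minSplitCost t P Q Z =
      ∑ i, ∑ j, parallelSum (t * hP.1.eigenvalues i) (hQ.1.eigenvalues j) *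
        ‖eigenCoords hP.1 hQ.1 Z i j‖ ^ 2 :=
  (isLeast_splitCost hP hQ ht Z).csInf_eq

lemma minSplitCost_le (hP : P.PosSemidef) (hQ : Q.PosSemidef) {t : ℝ} (ht : 0 ≤ t)
    (Z W : Matrix m n ℂ) :
    minSplitCost t P Q Z ≤ splitCost t P Q Z W := by
  classical
  exact ciInf_le (isLeast_splitCost hP hQ ht Z).bddBelow W

lemma exists_splitCost_eq_minSplitCost (hP : P.PosSemidef) (hQ : Q.PosSemidef) {t : ℝ} (ht : 0 ≤ t)
    (Z : Matrix m n ℂ) :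
    ∃ W, splitCost t P Q Z W = minSplitCost t P Q Z := by
  classical
  rw [minSplitCost_eq_sum_eigenCoords hP hQ ht]
  exact (isLeast_splitCost hP hQ ht Z).1

open MeasureTheory Set

lemma rpow_mul_minSplitCost_eq [DecidableEq m] [DecidableEq n] (hP : P.PosSemidef)
    (hQ : Q.PosSemidef) (s : ℝ) {t : ℝ} (ht : 0 ≤ t) (Z : Matrix m n ℂ) :
    t ^ (s - 2) * minSplitCost t P Q Z =
      ∑ i, ∑ j, t ^ (s - 2) * parallelSum (t * hP.1.eigenvalues i) (hQ.1.eigenvalues j) *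
        ‖eigenCoords hP.1 hQ.1 Z i j‖ ^ 2 := by
  simp only [minSplitCost_eq_sum_eigenCoords hP hQ ht, Finset.mul_sum, mul_assoc]

lemma integrableOn_rpow_mul_minSplitCost (hP : P.PosSemidef) (hQ : Q.PosSemidef) {s : ℝ}
    (hs : s ∈ Ioo 0 1) (Z : Matrix m n ℂ) :
    IntegrableOn (fun t => t ^ (s - 2) * minSplitCost t P Q Z) (Ioi 0) := by
  classical
  rw [integrableOn_congr_fun (s := Ioi 0)
    (fun t ht => rpow_mul_minSplitCost_eq hP hQ s (le_of_lt ht) Z) measurableSet_Ioi]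
  exact integrable_finsetSum _ fun i _ => integrable_finsetSum _ fun j _ =>
    (integrableOn_rpow_mul_parallelSum hs (hP.eigenvalues_nonneg i)
      (hQ.eigenvalues_nonneg j)).mul_const _

lemma integral_rpow_mul_minSplitCost [DecidableEq m] [DecidableEq n] (hP : P.PosSemidef)
    (hQ : Q.PosSemidef) {s : ℝ} (hs : s ∈ Ioo 0 1) (Z : Matrix m n ℂ) :
    ∫ t in Ioi 0, t ^ (s - 2) * minSplitCost t P Q Z =
      (∫ t in Ioi 0, Real.rpowIntegrand₀₁ s t 1) * liebTrace s P Q Z := by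
  have integrable (i : m) (j : n) := (integrableOn_rpow_mul_parallelSum hs
    (hP.eigenvalues_nonneg i) (hQ.eigenvalues_nonneg j)).mul_const
      (‖eigenCoords hP.1 hQ.1 Z i j‖ ^ 2)
  rw [setIntegral_congr_fun measurableSet_Ioi
      fun t ht => rpow_mul_minSplitCost_eq hP hQ s (le_of_lt ht) Z,
    integral_finsetSum _ fun i _ => integrable_finsetSum _ fun j _ => integrable i j,
    liebTrace_eq_sum_eigenCoords hP.1 hQ.1, suppRpow_eq_rpow (sub_pos.2 hs.2).ne',
    suppRpow_eq_rpow hs.1.ne']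
  simp only [Finset.mul_sum]
  refine Finset.sum_congr rfl fun i _ => ?_
  rw [integral_finsetSum _ fun j _ => integrable i j]
  refine Finset.sum_congr rfl fun j _ => ?_
  rw [integral_mul_const, integral_rpow_mul_parallelSum hs (hP.eigenvalues_nonneg i)
    (hQ.eigenvalues_nonneg j), mul_assoc]

theorem sum_liebTrace_le_sum_liebTrace [DecidableEq m] [DecidableEq n] {ι κ m' n' : Type*}
    [Fintype ι] [Fintype κ] [Fintype m'] [DecidableEq m'] [Fintype n'] [DecidableEq n']
    {P : ι → Matrix m m ℂ} {Q : ι → Matrix n n ℂ} {Z : ι → Matrix m n ℂ} {P' : κ → Matrix m' m' ℂ}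
    {Q' : κ → Matrix n' n' ℂ} {Z' : κ → Matrix m' n' ℂ} (hP : ∀ i, (P i).PosSemidef)
    (hQ : ∀ i, (Q i).PosSemidef) (hP' : ∀ k, (P' k).PosSemidef) (hQ' : ∀ k, (Q' k).PosSemidef)
    {s : ℝ} (hs : s ∈ Ioo 0 1)
    (h : ∀ t > 0, ∀ W' : κ → Matrix m' n' ℂ, ∃ W : ι → Matrix m n ℂ,
      ∑ i, splitCost t (P i) (Q i) (Z i) (W i) ≤ ∑ k, splitCost t (P' k) (Q' k) (Z' k) (W' k)) :
    ∑ i, liebTrace s (P i) (Q i) (Z i) ≤ ∑ k, liebTrace s (P' k) (Q' k) (Z' k) := by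
  have minSplitCost_le_minSplitCost (t : ℝ) (ht : 0 < t) :
      ∑ i, minSplitCost t (P i) (Q i) (Z i) ≤ ∑ k, minSplitCost t (P' k) (Q' k) (Z' k) := by
    choose W' hW' using fun k => exists_splitCost_eq_minSplitCost (hP' k) (hQ' k) ht.le (Z' k)
    obtain ⟨W, hW⟩ := h t ht W'
    simp only [hW'] at hW
    exact (Finset.sum_le_sum fun i _ => minSplitCost_le (hP i) (hQ i) ht.le _ _).trans hW
  have integrable (i : ι) := integrableOn_rpow_mul_minSplitCost (hP i) (hQ i) hs (Z i)
  have integrable' (k : κ) := integrableOn_rpow_mul_minSplitCost (hP' k) (hQ' k) hs (Z' k)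
  refine le_of_mul_le_mul_left ?_ (Real.integral_rpowIntegrand₀₁_one_pos hs)
  simp only [Finset.mul_sum, ← integral_rpow_mul_minSplitCost, hP, hQ, hP', hQ', hs]
  rw [← integral_finsetSum _ fun i _ => integrable i,
    ← integral_finsetSum _ fun k _ => integrable' k]
  refine setIntegral_mono_on (integrable_finsetSum _ fun i _ => integrable i)
    (integrable_finsetSum _ fun k _ => integrable' k) measurableSet_Ioi fun t ht => ?_
  simp only [← Finset.mul_sum]
  exact mul_le_mul_of_nonneg_left (minSplitCost_le_minSplitCost t ht)
    (Real.rpow_nonneg (le_of_lt ht) _)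

end LiebTrace

section Trace

variable {n : Type*} [Fintype n] {A B : Matrix n n ℂ}

open scoped MatrixOrder in
lemma trace_mul_nonneg (hA : A.PosSemidef) (hB : B.PosSemidef) : 0 ≤ (A * B).trace := by
  classical
  obtain ⟨C, rfl⟩ := CStarAlgebra.nonneg_iff_eq_star_mul_self.1 hA.nonneg
  rw [star_eq_conjTranspose, Matrix.mul_assoc, trace_mul_comm]
  exact (hB.mul_mul_conjTranspose_same C).trace_nonneg

open scoped MatrixOrder in
lemma re_trace_mul_le_re_trace_mul {τ : Matrix n n ℂ} (hτ : τ.PosSemidef) (h : A ≤ B) :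
    (τ * A).trace.re ≤ (τ * B).trace.re := by
  have := Complex.re_le_re (trace_mul_nonneg hτ (le_iff.1 h))
  rwa [Matrix.mul_sub, trace_sub, Complex.sub_re, Complex.zero_re, sub_nonneg] at this

end Trace

lemma sum_kronecker {ι l m n p : Type*} [Fintype ι] (F : ι → Matrix l m ℂ) (K : Matrix n p ℂ) :
    (∑ i, F i) ⊗ₖ K = ∑ i, F i ⊗ₖ K := by
  ext
  simp [Matrix.sum_apply, Finset.sum_mul]

lemma sub_kronecker {l m n p : Type*} (F F' : Matrix l m ℂ) (K : Matrix n p ℂ) :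
    (F - F') ⊗ₖ K = F ⊗ₖ K - F' ⊗ₖ K := by
  ext
  simp [sub_mul]

lemma kronecker_sub {l m n p : Type*} (F : Matrix l m ℂ) (K K' : Matrix n p ℂ) :
    F ⊗ₖ (K - K') = F ⊗ₖ K - F ⊗ₖ K' := by
  ext
  simp [mul_sub]

/-- A positive operator-valued measure on a finite outcome set. -/
structure IsPOVM {A X : Type*} [DecidableEq A] [Fintype X] (M : X → Matrix A A ℂ) : Prop where
  posSemidef (x : X) : (M x).PosSemidef
  sum_eq_one : ∑ x, M x = 1

section Measurement

variable {A E G J X Y : Type*} [Fintype A] [DecidableEq A] [Fintype E] [Fintype J] [Fintype X]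
  [Fintype Y] {M : X → Matrix A A ℂ} {N : Y → Matrix A A ℂ}

open scoped MatrixOrder

-- Kadison–Schwarz for the unital map `K ↦ ∑ₓ Mₓ ⊗ Kₓ`.
lemma IsPOVM.sum_kronecker_mul_conjTranspose_le [Finite G] (hM : IsPOVM M)
    (K : X → Matrix G J ℂ) :
    (∑ x, M x ⊗ₖ K x) * (∑ x, M x ⊗ₖ K x)ᴴ ≤ ∑ x, M x ⊗ₖ (K x * (K x)ᴴ) := by
  classical
  set T := ∑ x, M x ⊗ₖ K x with hT
  have hTstar : Tᴴ = ∑ x, M x ⊗ₖ (K x)ᴴ := by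
    simp only [hT, conjTranspose_sum, conjTranspose_kronecker, (hM.posSemidef _).1.eq]
  let D (x : X) : Matrix (A × G) (A × J) ℂ := 1 ⊗ₖ K x - T
  have variance (x : X) : D x * (M x ⊗ₖ (1 : Matrix J J ℂ)) * (D x)ᴴ =
      M x ⊗ₖ (K x * (K x)ᴴ) - (M x ⊗ₖ K x) * Tᴴ - T * (M x ⊗ₖ (K x)ᴴ) +
        T * (M x ⊗ₖ (1 : Matrix J J ℂ)) * Tᴴ := by
    simp only [D, conjTranspose_sub, conjTranspose_kronecker, conjTranspose_one, Matrix.sub_mul,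
      Matrix.mul_sub, ← mul_kronecker_mul, Matrix.mul_assoc, Matrix.one_mul, Matrix.mul_one]
    abel
  have sum_variance : ∑ x, D x * (M x ⊗ₖ (1 : Matrix J J ℂ)) * (D x)ᴴ =
      ∑ x, M x ⊗ₖ (K x * (K x)ᴴ) - T * Tᴴ := by
    simp only [variance, Finset.sum_add_distrib, Finset.sum_sub_distrib, ← Matrix.sum_mul,
      ← Matrix.mul_sum, ← sum_kronecker, hM.sum_eq_one, one_kronecker_one, ← hT, ← hTstar,
      Matrix.mul_one, sub_add_cancel]
  rw [le_iff, ← sum_variance]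
  exact posSemidef_sum _ fun x _ =>
    ((hM.posSemidef x).kronecker PosSemidef.one).mul_mul_conjTranspose_same _

lemma IsPOVM.conjTranspose_mul_self_sum_kronecker_le [Finite G] (hM : IsPOVM M)
    (K : X → Matrix J G ℂ) :
    (∑ x, M x ⊗ₖ K x)ᴴ * (∑ x, M x ⊗ₖ K x) ≤ ∑ x, M x ⊗ₖ ((K x)ᴴ * K x) := by
  simpa [conjTranspose_sum, conjTranspose_kronecker, (hM.posSemidef _).1.eq] using
    hM.sum_kronecker_mul_conjTranspose_le fun x => (K x)ᴴ

variable [Fintype G]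

lemma IsPOVM.kronecker_one_mul_sum_mul_kronecker_one_le [DecidableEq G] (hM : IsPOVM M)
    {P : Matrix A A ℂ} (hP : P.IsHermitian) {k : ℝ} (hk : ∀ x, P * M x * P ≤ k • P)
    (K : X → Matrix J G ℂ) :
    (P ⊗ₖ (1 : Matrix G G ℂ)) * ((∑ x, M x ⊗ₖ K x)ᴴ * (∑ x, M x ⊗ₖ K x)) *
        (P ⊗ₖ (1 : Matrix G G ℂ)) ≤
      ∑ x, k • (P ⊗ₖ ((K x)ᴴ * K x)) := by
  have hP1 : (P ⊗ₖ (1 : Matrix G G ℂ))ᴴ = P ⊗ₖ (1 : Matrix G G ℂ) := by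
    rw [conjTranspose_kronecker, hP.eq, conjTranspose_one]
  calc _ ≤ (P ⊗ₖ (1 : Matrix G G ℂ)) * (∑ x, M x ⊗ₖ ((K x)ᴴ * K x)) *
          (P ⊗ₖ (1 : Matrix G G ℂ)) := by
        simpa [star_eq_conjTranspose, hP1] using star_left_conjugate_le_conjugate
          (hM.conjTranspose_mul_self_sum_kronecker_le K) (P ⊗ₖ (1 : Matrix G G ℂ))
    _ = ∑ x, (P * M x * P) ⊗ₖ ((K x)ᴴ * K x) := by
        simp only [Matrix.mul_sum, Matrix.sum_mul, ← mul_kronecker_mul, Matrix.one_mul,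
          Matrix.mul_one]
    _ ≤ ∑ x, k • (P ⊗ₖ ((K x)ᴴ * K x)) := Finset.sum_le_sum fun x _ => by
        rw [← smul_kronecker, le_iff, ← sub_kronecker]
        exact (le_iff.1 (hk x)).kronecker (posSemidef_conjTranspose_mul_self _)

lemma splitCost_conjTranspose_mul_conjTranspose {m n : Type*} [Fintype m] [DecidableEq m]
    [Fintype n] (t : ℝ) (τ T : Matrix m m ℂ) (O : Matrix n m ℂ) :
    splitCost t τ (O * τ * Oᴴ) Oᴴ (T * Oᴴ) = t * (τ * (T * (Oᴴ * O) * Tᴴ)).trace.re +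
      (τ * ((Oᴴ * O) * ((1 - T)ᴴ * (1 - T)) * (Oᴴ * O))).trace.re := by
  have hZ : Oᴴ - T * Oᴴ = (1 - T) * Oᴴ := by rw [Matrix.sub_mul, Matrix.one_mul]
  rw [splitCost, hZ]
  congr 2
  · simp only [conjTranspose_mul, conjTranspose_conjTranspose, Matrix.mul_assoc]
  · rw [trace_mul_comm, trace_mul_comm τ]
    simp only [conjTranspose_mul, conjTranspose_conjTranspose, ← Matrix.mul_assoc]
    rw [trace_mul_comm]
    simp only [← Matrix.mul_assoc]

-- A splitting `1 = K x + (1 - K x)` for each outcome of `M` induces, with `T = ∑ₓ M x ⊗ K x`, the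
-- splitting `(S y ⊗ 1)ᴴ = T (S y ⊗ 1)ᴴ + (1 - T) (S y ⊗ 1)ᴴ` for each outcome of `N`.
lemma IsPOVM.sum_splitCost_le [DecidableEq G] (hM : IsPOVM M) (hN : IsPOVM N) {k : ℝ}
    (hk : ∀ x y, N y * M x * N y ≤ k • N y) {S : Y → Matrix E A ℂ}
    (hS : ∀ y, (S y)ᴴ * S y = N y) {τ : Matrix (A × G) (A × G) ℂ} (hτ : τ.PosSemidef)
    {t : ℝ} (ht : 0 ≤ t) (K : X → Matrix G G ℂ) :
    ∑ y, splitCost t τ ((S y ⊗ₖ (1 : Matrix G G ℂ)) * τ * (S y ⊗ₖ (1 : Matrix G G ℂ))ᴴ)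
        (S y ⊗ₖ (1 : Matrix G G ℂ))ᴴ ((∑ x, M x ⊗ₖ K x) * (S y ⊗ₖ (1 : Matrix G G ℂ))ᴴ) ≤
      ∑ x, (t * (τ * (M x ⊗ₖ (K x * (K x)ᴴ))).trace.re +
        k * (τ * ((1 : Matrix A A ℂ) ⊗ₖ ((1 - K x)ᴴ * (1 - K x)))).trace.re) := by
  set T := ∑ x, M x ⊗ₖ K x with hT
  have gram (y : Y) : (S y ⊗ₖ (1 : Matrix G G ℂ))ᴴ * (S y ⊗ₖ (1 : Matrix G G ℂ)) =
      N y ⊗ₖ (1 : Matrix G G ℂ) := by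
    rw [conjTranspose_kronecker, conjTranspose_one, ← mul_kronecker_mul, hS, Matrix.one_mul]
  have one_sub_T : 1 - T = ∑ x, M x ⊗ₖ (1 - K x) := by
    simp only [kronecker_sub, Finset.sum_sub_distrib, ← sum_kronecker, hM.sum_eq_one,
      one_kronecker_one, hT]
  have kept : ∑ y, (τ * (T * (N y ⊗ₖ (1 : Matrix G G ℂ)) * Tᴴ)).trace.re ≤
      ∑ x, (τ * (M x ⊗ₖ (K x * (K x)ᴴ))).trace.re := by
    simp only [← Complex.re_sum, ← trace_sum, ← Matrix.mul_sum, ← Matrix.sum_mul,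
      ← sum_kronecker, hN.sum_eq_one, one_kronecker_one, Matrix.mul_one]
    exact re_trace_mul_le_re_trace_mul hτ (hM.sum_kronecker_mul_conjTranspose_le K)
  have removed : ∑ y, (τ * ((N y ⊗ₖ (1 : Matrix G G ℂ)) * ((1 - T)ᴴ * (1 - T)) *
        (N y ⊗ₖ (1 : Matrix G G ℂ)))).trace.re ≤
      ∑ x, k * (τ * ((1 : Matrix A A ℂ) ⊗ₖ ((1 - K x)ᴴ * (1 - K x)))).trace.re := by
    calc ∑ y, (τ * ((N y ⊗ₖ (1 : Matrix G G ℂ)) * ((1 - T)ᴴ * (1 - T)) *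
            (N y ⊗ₖ (1 : Matrix G G ℂ)))).trace.re
        ≤ ∑ y, (τ * ∑ x, k • (N y ⊗ₖ ((1 - K x)ᴴ * (1 - K x)))).trace.re := by
          refine Finset.sum_le_sum fun y _ => re_trace_mul_le_re_trace_mul hτ ?_
          rw [one_sub_T]
          exact hM.kronecker_one_mul_sum_mul_kronecker_one_le (hN.posSemidef y).1 (hk · y) _
      _ = (τ * ∑ x, k • ((1 : Matrix A A ℂ) ⊗ₖ ((1 - K x)ᴴ * (1 - K x)))).trace.re := by
          simp only [← hN.sum_eq_one, sum_kronecker, ← Complex.re_sum, ← trace_sum,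
            ← Matrix.mul_sum, Finset.smul_sum]
          rw [Finset.sum_comm]
      _ = _ := by
          simp only [Matrix.mul_sum, Matrix.mul_smul, trace_sum, trace_smul, Complex.re_sum,
            Complex.smul_re, smul_eq_mul]
  simp only [splitCost_conjTranspose_mul_conjTranspose, gram, Finset.sum_add_distrib,
    ← Finset.mul_sum] at removed ⊢
  exact add_le_add (mul_le_mul_of_nonneg_left kept ht) removed

end Measurement

section CqState

variable {X B : Type*} [DecidableEq X]

/-- The classical-quantum state `∑ₓ |x⟩⟨x| ⊗ F x`. -/
def cqState (F : X → Matrix B B ℂ) : Matrix (X × B) (X × B) ℂ :=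
  Matrix.of fun p p' => if p.1 = p'.1 then F p.1 p.2 p'.2 else 0

lemma one_kronecker_eq_cqState (σ : Matrix B B ℂ) :
    (1 : Matrix X X ℂ) ⊗ₖ σ = cqState fun _ => σ := by
  ext
  simp [cqState, one_apply]

lemma isHermitian_cqState {F : X → Matrix B B ℂ} (hF : ∀ x, (F x).IsHermitian) :
    (cqState F).IsHermitian := by
  ext ⟨x, b⟩ ⟨x', b'⟩
  by_cases h : x = x'
  · subst h
    simpa [cqState] using (hF x).apply b b'
  · simp [cqState, h, Ne.symm h]

variable [Fintype X]

lemma trFst_cqState (F : X → Matrix B B ℂ) : trFst (cqState F) = ∑ x, F x := by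
  ext
  simp [cqState, trFst, Matrix.sum_apply]

variable [Fintype B]

lemma trace_cqState (F : X → Matrix B B ℂ) : (cqState F).trace = ∑ x, (F x).trace := by
  simp [cqState, trace, Fintype.sum_prod_type]

lemma cqState_mul (F F' : X → Matrix B B ℂ) :
    cqState F * cqState F' = cqState fun x => F x * F' x := by
  ext ⟨x, b⟩ ⟨x', b'⟩
  by_cases h : x = x' <;>
    simp [cqState, mul_apply, Fintype.sum_prod_type, h]

variable [DecidableEq B]

lemma cqState_mul_submatrix_one (F : X → Matrix B B ℂ) (x : X) :
    cqState F * (1 : Matrix (X × B) (X × B) ℂ).submatrix id (Prod.mk x) =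
      (1 : Matrix (X × B) (X × B) ℂ).submatrix id (Prod.mk x) * F x := by
  ext ⟨x', b⟩ b'
  by_cases h : x' = x
  · subst h
    simp [cqState, mul_apply, one_apply]
  · simp [cqState, mul_apply, one_apply, h]

lemma matRpow_cqState {F : X → Matrix B B ℂ} (hF : ∀ x, (F x).IsHermitian) (t : ℝ) :
    matRpow (cqState F) t = cqState fun x => matRpow (F x) t := by
  ext p ⟨x, b⟩
  have h := (matRpow_mul_eq_mul_matRpow (isHermitian_cqState hF) (hF x)
    (cqState_mul_submatrix_one F x) t).trans
    (cqState_mul_submatrix_one (fun x => matRpow (F x) t) x).symm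
  simpa [mul_apply, one_apply] using congrFun (congrFun h p) b

/-- The conditional entropy `H_α^↓(X|B)` of a bipartite state, as minus the divergence relative to
`1 ⊗ tr_X`. -/
noncomputable def renyiCondEntropyDown (α : ℝ) (ρ : Matrix (X × B) (X × B) ℂ) : ℝ :=
  -(renyiDiv α ρ ((1 : Matrix X X ℂ) ⊗ₖ trFst ρ))

lemma renyiCondEntropyDown_cqState {F : X → Matrix B B ℂ} (hF : ∀ x, (F x).IsHermitian) (α : ℝ) :
    renyiCondEntropyDown α (cqState F) = -((α - 1)⁻¹ *
      Real.log (∑ x, (matRpow (F x) α * matRpow (∑ x, F x) (1 - α)).trace.re)) := by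
  have hsum : (∑ x, F x).IsHermitian := isSelfAdjoint_sum _ fun x _ => hF x
  rw [renyiCondEntropyDown, renyiDiv, trFst_cqState, one_kronecker_eq_cqState,
    matRpow_cqState hF, matRpow_cqState fun _ => hsum, cqState_mul, trace_cqState, Complex.re_sum]

end CqState

lemma kronecker_one_mul_apply {A G J : Type*} [Fintype A] [Fintype G] [DecidableEq G]
    (M : Matrix A A ℂ) (T : Matrix (A × G) J ℂ) (a : A) (g : G) (j : J) :
    ((M ⊗ₖ (1 : Matrix G G ℂ)) * T) (a, g) j = ∑ a', M a a' * T (a', g) j := by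
  simp [mul_apply, Fintype.sum_prod_type, one_apply]

lemma trace_trFstThird_mul {A B C : Type*} [Fintype A] [DecidableEq A] [Fintype B] [Fintype C]
    [DecidableEq C] (T : Matrix (A × B × C) (A × B × C) ℂ) (K : Matrix B B ℂ) :
    (trFstThird T * K).trace =
      (T * ((1 : Matrix A A ℂ) ⊗ₖ (K ⊗ₖ (1 : Matrix C C ℂ)))).trace := by
  simp only [trace, diag_apply, mul_apply, trFstThird, of_apply, Fintype.sum_prod_type,
    kroneckerMap_apply, one_apply, Finset.sum_mul]
  simp only [ite_mul, mul_ite, one_mul, mul_one, zero_mul, mul_zero, Finset.sum_ite_irrel,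
    Finset.sum_const_zero, Finset.sum_ite_eq', Finset.mem_univ, if_true]
  simp only [Finset.sum_comm (s := (Finset.univ : Finset B)) (t := (Finset.univ : Finset A)),
    Finset.sum_comm (s := (Finset.univ : Finset B)) (t := (Finset.univ : Finset C))]

section ConditionalStates

variable {A B C D X : Type*} [Fintype A] [Fintype B] [DecidableEq B] [Fintype C] [DecidableEq C]

/-- The unnormalised state of `B` when the measurement of `A` yields the outcome with effect `M`. -/
noncomputable def condStateB (ρ : Matrix (A × B × C) (A × B × C) ℂ) (M : Matrix A A ℂ) :
    Matrix B B ℂ :=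
  trFstThird ((M ⊗ₖ (1 : Matrix (B × C) (B × C) ℂ)) * ρ)

/-- The unnormalised state of `C` when the measurement of `A` yields the outcome with effect `N`. -/
noncomputable def condStateC (ρ : Matrix (A × B × C) (A × B × C) ℂ) (N : Matrix A A ℂ) :
    Matrix C C ℂ :=
  trFstSnd ((N ⊗ₖ (1 : Matrix (B × C) (B × C) ℂ)) * ρ)

/-- The tripartite state with the roles of `B` and `C` exchanged. -/
def swapBC (ρ : Matrix (A × B × C) (A × B × C) ℂ) : Matrix (A × C × B) (A × C × B) ℂ :=
  ρ.submatrix (fun z => (z.1, z.2.2, z.2.1)) (fun z => (z.1, z.2.2, z.2.1))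

lemma condStateC_swapBC (ρ : Matrix (A × B × C) (A × B × C) ℂ) (M : Matrix A A ℂ) :
    condStateC (swapBC ρ) M = condStateB ρ M := by
  ext
  simp only [condStateC, condStateB, trFstThird, trFstSnd, of_apply, kronecker_one_mul_apply,
    swapBC, submatrix_apply]

lemma condStateB_swapBC (ρ : Matrix (A × B × C) (A × B × C) ℂ) (M : Matrix A A ℂ) :
    condStateB (swapBC ρ) M = condStateC ρ M := by
  ext
  simp only [condStateC, condStateB, trFstThird, trFstSnd, of_apply, kronecker_one_mul_apply,
    swapBC, submatrix_apply]

lemma condStateC_sum [Fintype X] (ρ : Matrix (A × B × C) (A × B × C) ℂ) (M : X → Matrix A A ℂ) :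
    condStateC ρ (∑ x, M x) = ∑ x, condStateC ρ (M x) := by
  ext
  simp only [condStateC, trFstSnd, of_apply, sum_kronecker, Matrix.sum_mul, Matrix.sum_apply]
  simp only [Finset.sum_comm (s := (Finset.univ : Finset X))]

lemma condStateB_sum [Fintype X] (ρ : Matrix (A × B × C) (A × B × C) ℂ) (M : X → Matrix A A ℂ) :
    condStateB ρ (∑ x, M x) = ∑ x, condStateB ρ (M x) := by
  simp only [← condStateC_swapBC, condStateC_sum]

lemma trace_condStateC_one [DecidableEq A] (ρ : Matrix (A × B × C) (A × B × C) ℂ) :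
    (condStateC ρ 1).trace = ρ.trace := by
  simp only [condStateC, one_kronecker_one, Matrix.one_mul, trace, diag_apply, trFstSnd, of_apply,
    Fintype.sum_prod_type]
  simp only [Finset.sum_comm (s := (Finset.univ : Finset C))]

lemma trace_condStateB_mul (ρ : Matrix (A × B × C) (A × B × C) ℂ) (M : Matrix A A ℂ)
    (K : Matrix B B ℂ) :
    (condStateB ρ M * K).trace = (ρ * (M ⊗ₖ (K ⊗ₖ (1 : Matrix C C ℂ)))).trace := by
  classical
  rw [condStateB, trace_trFstThird_mul, Matrix.mul_assoc, trace_mul_comm, Matrix.mul_assoc,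
    ← mul_kronecker_mul, Matrix.one_mul, Matrix.mul_one]

/-- A purification `R` of a state on `A × B × C` with purifying system `D`, regrouped as an
operator from `C` to `A × B × D`. -/
def regroup (R : Matrix (A × B × C) D ℂ) : Matrix (A × B × D) C ℂ :=
  Matrix.of fun z c => R (z.1, z.2.1, c) z.2.2

variable [Fintype D] [DecidableEq D]

lemma condStateB_regroup (R : Matrix (A × B × C) D ℂ) (M : Matrix A A ℂ) :
    condStateB (regroup R * (regroup R)ᴴ) M = condStateB (R * Rᴴ) M := by
  ext b b'
  have marginal (a a' : A) : ∑ d, (regroup R * (regroup R)ᴴ) (a, b, d) (a', b', d) =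
      ∑ c, (R * Rᴴ) (a, b, c) (a', b', c) := by
    simp only [mul_apply, conjTranspose_apply]
    exact Finset.sum_comm
  simp only [condStateB, trFstThird, of_apply, kronecker_one_mul_apply,
    Finset.sum_comm (s := (Finset.univ : Finset C)) (t := (Finset.univ : Finset A)),
    Finset.sum_comm (s := (Finset.univ : Finset D)) (t := (Finset.univ : Finset A)),
    ← Finset.mul_sum, marginal]

lemma conjTranspose_regroup_mul_mul_regroup (R : Matrix (A × B × C) D ℂ) (N : Matrix A A ℂ) :
    (regroup R)ᴴ * (N ⊗ₖ (1 : Matrix (B × D) (B × D) ℂ)) * regroup R =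
      (condStateC (R * Rᴴ) N)ᵀ := by
  ext c c'
  rw [Matrix.mul_assoc, transpose_apply, mul_apply]
  simp only [condStateC, trFstSnd, of_apply, kronecker_one_mul_apply, conjTranspose_apply,
    mul_apply (M := R), Fintype.sum_prod_type]
  refine Finset.sum_congr rfl fun a _ => Finset.sum_congr rfl fun b _ => ?_
  simp only [Finset.mul_sum, regroup, of_apply]
  rw [Finset.sum_comm]
  exact Finset.sum_congr rfl fun a' _ => Finset.sum_congr rfl fun d _ => by ring

open scoped MatrixOrder in
lemma exists_regroup_purification [DecidableEq A] {ρ : Matrix (A × B × C) (A × B × C) ℂ}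
    (hρ : ρ.PosSemidef) :
    ∃ Φ : Matrix (A × B × A × B × C) C ℂ,
      (∀ M, condStateB (Φ * Φᴴ) M = condStateB ρ M) ∧
      ∀ N : Matrix A A ℂ, Φᴴ * (N ⊗ₖ (1 : Matrix (B × A × B × C) (B × A × B × C) ℂ)) * Φ =
        (condStateC ρ N)ᵀ := by
  obtain ⟨R, rfl⟩ := CStarAlgebra.nonneg_iff_eq_mul_star_self.1 hρ.nonneg
  exact ⟨regroup R, condStateB_regroup R, conjTranspose_regroup_mul_mul_regroup R⟩

lemma posSemidef_condStateC {ρ : Matrix (A × B × C) (A × B × C) ℂ} (hρ : ρ.PosSemidef)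
    {N : Matrix A A ℂ} (hN : N.PosSemidef) : (condStateC ρ N).PosSemidef := by
  classical
  obtain ⟨Φ, -, hΦ⟩ := exists_regroup_purification hρ
  simpa [hΦ] using ((hN.kronecker PosSemidef.one).conjTranspose_mul_mul_same Φ).transpose

lemma posSemidef_condStateB {ρ : Matrix (A × B × C) (A × B × C) ℂ} (hρ : ρ.PosSemidef)
    {M : Matrix A A ℂ} (hM : M.PosSemidef) : (condStateB ρ M).PosSemidef := by
  rw [← condStateC_swapBC]
  exact posSemidef_condStateC (hρ.submatrix _) hM

end ConditionalStates

open scoped MatrixOrder in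
lemma mul_eq_zero_of_trace_mul_eq_zero {n : Type*} [Fintype n] {A B : Matrix n n ℂ}
    (hA : A.PosSemidef) (hB : B.PosSemidef) (h : (A * B).trace = 0) : A * B = 0 := by
  classical
  obtain ⟨C, rfl⟩ := CStarAlgebra.nonneg_iff_eq_star_mul_self.1 hA.nonneg
  obtain ⟨D, rfl⟩ := CStarAlgebra.nonneg_iff_eq_mul_star_self.1 hB.nonneg
  have hCD : C * D = 0 := by
    rw [← trace_mul_conjTranspose_self_eq_zero_iff, ← h, star_eq_conjTranspose,
      star_eq_conjTranspose, Matrix.mul_assoc Cᴴ, trace_mul_comm Cᴴ, conjTranspose_mul]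
    simp only [Matrix.mul_assoc]
  rw [Matrix.mul_assoc, ← Matrix.mul_assoc C, hCD, Matrix.zero_mul, Matrix.mul_zero]

lemma sum_trace_matRpow_mul_matRpow_sum_pos {n Y : Type*} [Fintype n] [DecidableEq n] [Fintype Y]
    {F : Y → Matrix n n ℂ} (hF : ∀ y, (F y).PosSemidef) (hsum : ∑ y, F y ≠ 0) (a b : ℝ) :
    0 < ∑ y, (matRpow (F y) a * matRpow (∑ y, F y) b).trace.re := by
  set G := ∑ y, F y with hG_def
  have hG : G.PosSemidef := posSemidef_sum _ fun y _ => hF y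
  have term_nonneg (y : Y) : 0 ≤ (matRpow (F y) a * matRpow G b).trace :=
    trace_mul_nonneg (posSemidef_matRpow (hF y) a) (posSemidef_matRpow hG b)
  refine (Finset.sum_nonneg fun y _ => (Complex.nonneg_iff.1 (term_nonneg y)).1).lt_of_ne' ?_
  intro h
  have mul_eq_zero (y : Y) : F y * G = 0 := by
    have hre : (matRpow (F y) a * matRpow G b).trace.re = 0 :=
      (Finset.sum_eq_zero_iff_of_nonneg
        fun y _ => (Complex.nonneg_iff.1 (term_nonneg y)).1).1 h y (Finset.mem_univ y)
    have htr : (matRpow (F y) a * matRpow G b).trace = 0 :=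
      Complex.ext hre (Complex.nonneg_iff.1 (term_nonneg y)).2.symm
    have hpow := mul_eq_zero_of_trace_mul_eq_zero (posSemidef_matRpow (hF y) a)
      (posSemidef_matRpow hG b) htr
    calc F y * G = matRpow (F y) (1 - a + a) * matRpow G (b + (1 - b)) := by
          rw [sub_add_cancel, add_sub_cancel, matRpow_one (hF y).1, matRpow_one hG.1]
      _ = matRpow (F y) (1 - a) * (matRpow (F y) a * matRpow G b) * matRpow G (1 - b) := by
          simp only [matRpow_add (hF y), matRpow_add hG, Matrix.mul_assoc]
      _ = 0 := by rw [hpow, Matrix.mul_zero, Matrix.zero_mul]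
  refine hsum (conjTranspose_mul_self_eq_zero.1 ?_)
  rw [hG.1.eq]
  nth_rw 1 [hG_def]
  rw [Matrix.sum_mul]
  exact Finset.sum_eq_zero fun y _ => mul_eq_zero y

section Overlap

variable {A X Y : Type*} [Fintype A] [DecidableEq A] {M : X → Matrix A A ℂ} {N : Y → Matrix A A ℂ}

lemma matRpow_half_mul_matRpow_half {P : Matrix A A ℂ} (hP : P.PosSemidef) :
    matRpow P (1 / 2) * matRpow P (1 / 2) = P := by
  rw [← matRpow_add hP, add_halves, matRpow_one hP.1]

/-- The constant `c = max_{x,y} ‖M_x^{1/2} N_y^{1/2}‖` measuring the incompatibility of two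
measurements. -/
noncomputable def overlap (M : X → Matrix A A ℂ) (N : Y → Matrix A A ℂ) : ℝ :=
  ⨆ x, ⨆ y, ‖toEuclideanCLM (𝕜 := ℂ) (matRpow (M x) (1 / 2) * matRpow (N y) (1 / 2))‖

lemma overlap_nonneg (M : X → Matrix A A ℂ) (N : Y → Matrix A A ℂ) : 0 ≤ overlap M N :=
  Real.iSup_nonneg fun _ => Real.iSup_nonneg fun _ => norm_nonneg _

open scoped MatrixOrder Matrix.Norms.L2Operator

lemma overlap_le {c : ℝ} (hc : 0 ≤ c)
    (h : ∀ x y, ‖matRpow (M x) (1 / 2) * matRpow (N y) (1 / 2)‖ ≤ c) : overlap M N ≤ c :=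
  Real.iSup_le (fun x => Real.iSup_le (fun y =>
    (l2_opNorm_toEuclideanCLM _).trans_le (h x y)) hc) hc

lemma norm_le_overlap [Finite X] [Finite Y] (M : X → Matrix A A ℂ) (N : Y → Matrix A A ℂ) (x : X)
    (y : Y) : ‖matRpow (M x) (1 / 2) * matRpow (N y) (1 / 2)‖ ≤ overlap M N := by
  simp only [overlap, l2_opNorm_toEuclideanCLM]
  exact (le_ciSup (Set.finite_range _).bddAbove y).trans
    (le_ciSup (f := fun x => ⨆ y, ‖matRpow (M x) (1 / 2) * matRpow (N y) (1 / 2)‖)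
      (Set.finite_range _).bddAbove x)

lemma overlap_comm [Finite X] [Finite Y] (M : X → Matrix A A ℂ) (N : Y → Matrix A A ℂ) :
    overlap M N = overlap N M := by
  have norm_comm (x : X) (y : Y) : ‖matRpow (M x) (1 / 2) * matRpow (N y) (1 / 2)‖ =
      ‖matRpow (N y) (1 / 2) * matRpow (M x) (1 / 2)‖ := by
    rw [← l2_opNorm_conjTranspose, conjTranspose_mul, (isHermitian_matRpow _ _).eq,
      (isHermitian_matRpow _ _).eq]
  exact le_antisymm
    (overlap_le (overlap_nonneg N M) fun x y => (norm_comm x y).trans_le (norm_le_overlap N M y x))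
    (overlap_le (overlap_nonneg M N) fun y x => (norm_comm x y).ge.trans (norm_le_overlap M N x y))

lemma IsPOVM.norm_matRpow_half_le_one [Fintype X] (hM : IsPOVM M) (x : X) :
    ‖matRpow (M x) (1 / 2)‖ ≤ 1 := by
  have hle : M x ≤ 1 := hM.sum_eq_one ▸
    Finset.single_le_sum (fun x _ => (hM.posSemidef x).nonneg) (Finset.mem_univ x)
  have hnorm : ‖M x‖ ≤ 1 :=
    (CStarAlgebra.norm_le_one_iff_of_nonneg _ (hM.posSemidef x).nonneg).2 hle
  rw [← matRpow_half_mul_matRpow_half (hM.posSemidef x)] at hnorm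
  nth_rw 1 [← (isHermitian_matRpow (M x) (1 / 2)).eq] at hnorm
  rw [← star_eq_conjTranspose, CStarRing.norm_star_mul_self] at hnorm
  nlinarith [norm_nonneg (matRpow (M x) (1 / 2))]

lemma IsPOVM.overlap_le_one [Fintype X] [Fintype Y] (hM : IsPOVM M) (hN : IsPOVM N) :
    overlap M N ≤ 1 :=
  overlap_le zero_le_one fun x y => (norm_mul_le _ _).trans <|
    mul_le_one₀ (hM.norm_matRpow_half_le_one x) (norm_nonneg _) (hN.norm_matRpow_half_le_one y)

lemma IsPOVM.log_one_div_overlap_nonneg [Fintype X] [Fintype Y] (hM : IsPOVM M)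
    (hN : IsPOVM N) : 0 ≤ Real.log (1 / overlap M N) := by
  rw [one_div, Real.log_inv, neg_nonneg]
  exact Real.log_nonpos (overlap_nonneg M N) (hM.overlap_le_one hN)

lemma mul_mul_le_overlap_sq_smul [Finite X] [Finite Y] {x : X} {y : Y} (hM : (M x).PosSemidef)
    (hN : (N y).PosSemidef) : N y * M x * N y ≤ overlap M N ^ 2 • N y := by
  set R := matRpow (M x) (1 / 2)
  set S := matRpow (N y) (1 / 2)
  have hR : star R = R := isHermitian_matRpow (M x) (1 / 2)
  have hS : star S = S := isHermitian_matRpow (N y) (1 / 2)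
  have hRR : R * R = M x := matRpow_half_mul_matRpow_half hM
  have hSS : S * S = N y := matRpow_half_mul_matRpow_half hN
  have gram_le : star (R * S) * (R * S) ≤ overlap M N ^ 2 • 1 := by
    refine CStarAlgebra.star_mul_le_algebraMap_norm_sq.trans ?_
    rw [Algebra.algebraMap_eq_smul_one]
    have := norm_le_overlap M N x y
    gcongr
  calc N y * M x * N y = star S * (star (R * S) * (R * S)) * S := by
        rw [star_mul, hR, hS, ← hRR, ← hSS]
        simp only [Matrix.mul_assoc]
    _ ≤ star S * (overlap M N ^ 2 • 1) * S := star_left_conjugate_le_conjugate gram_le S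
    _ = overlap M N ^ 2 • N y := by
        rw [hS, Matrix.mul_smul, Matrix.smul_mul, Matrix.mul_one, hSS]

end Overlap

-- For `Φ` a purification with environment `C`, this moves a trace over `C` to the system side,
-- with the exponents `1 + s`, `-s` turned into `1 - s`, `s`.
lemma liebTrace_mul_conjTranspose_self {m e c : Type*} [Fintype m] [DecidableEq m] [Fintype e]
    [DecidableEq e] [Fintype c] [DecidableEq c] (s : ℝ) (Φ : Matrix m c ℂ) (S : Matrix e m ℂ) :
    liebTrace s (Φ * Φᴴ) (S * (Φ * Φᴴ) * Sᴴ) Sᴴ =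
      (matRpow (Φᴴ * (Sᴴ * S) * Φ) (1 + s) * matRpow (Φᴴ * Φ) (-s)).trace.re := by
  have hgram : S * (Φ * Φᴴ) * Sᴴ = (Φᴴ * Sᴴ)ᴴ * (Φᴴ * Sᴴ) := by
    simp only [conjTranspose_mul, conjTranspose_conjTranspose, Matrix.mul_assoc]
  have hΦ : Φ * matRpow (Φᴴ * Φ) (-s) * Φᴴ = matRpow (Φ * Φᴴ) (1 - s) := by
    rw [mul_matRpow_conjTranspose_mul_self_mul, neg_add_eq_sub]
  have hS : (Φᴴ * Sᴴ) * matRpow ((Φᴴ * Sᴴ)ᴴ * (Φᴴ * Sᴴ)) s * (Φᴴ * Sᴴ)ᴴ =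
      matRpow (Φᴴ * (Sᴴ * S) * Φ) (1 + s) := by
    rw [mul_matRpow_conjTranspose_mul_self_mul, add_comm]
    simp only [conjTranspose_mul, conjTranspose_conjTranspose, Matrix.mul_assoc]
  rw [liebTrace, hgram, ← hΦ, ← hS, trace_mul_comm _ (matRpow (Φᴴ * Φ) (-s))]
  simp only [conjTranspose_mul, conjTranspose_conjTranspose, Matrix.mul_assoc]
  rw [trace_mul_comm Φ]
  simp only [Matrix.mul_assoc]

section UncertaintyDown

variable {A B C X Y : Type*} [Fintype A] [DecidableEq A] [Fintype B] [DecidableEq B] [Fintype C]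
  [DecidableEq C] [Fintype X] [Fintype Y] {ρ : Matrix (A × B × C) (A × B × C) ℂ}
  {M : X → Matrix A A ℂ} {N : Y → Matrix A A ℂ}

open scoped MatrixOrder

lemma splitCost_condStateB (ρ : Matrix (A × B × C) (A × B × C) ℂ) (M : Matrix A A ℂ)
    (W : Matrix B B ℂ) (k t : ℝ) :
    splitCost t (condStateB ρ M) (k • condStateB ρ 1) 1 W =
      t * (ρ * (M ⊗ₖ ((W * Wᴴ) ⊗ₖ (1 : Matrix C C ℂ)))).trace.re +
        k * (ρ * ((1 : Matrix A A ℂ) ⊗ₖ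
          (((1 - W)ᴴ * (1 - W)) ⊗ₖ (1 : Matrix C C ℂ)))).trace.re := by
  rw [splitCost, Matrix.mul_assoc, Matrix.mul_smul, Matrix.smul_mul, trace_smul, Complex.smul_re,
    smul_eq_mul, Matrix.mul_assoc, trace_mul_comm (1 - W), Matrix.mul_assoc,
    trace_condStateB_mul, trace_condStateB_mul]

lemma IsPOVM.sum_liebTrace_le {E : Type*} [Fintype E] [DecidableEq E] (hM : IsPOVM M)
    (hN : IsPOVM N) {k : ℝ} (hk₀ : 0 ≤ k) (hk : ∀ x y, N y * M x * N y ≤ k • N y)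
    {S : Y → Matrix E A ℂ} (hS : ∀ y, (S y)ᴴ * S y = N y) (hρ : ρ.PosSemidef)
    {s : ℝ} (hs : s ∈ Set.Ioo 0 1) :
    ∑ y, liebTrace s ρ ((S y ⊗ₖ (1 : Matrix (B × C) (B × C) ℂ)) * ρ *
        (S y ⊗ₖ (1 : Matrix (B × C) (B × C) ℂ))ᴴ) (S y ⊗ₖ (1 : Matrix (B × C) (B × C) ℂ))ᴴ ≤
      k ^ s * ∑ x, (matRpow (condStateB ρ (M x)) (1 - s) *
        matRpow (condStateB ρ 1) s).trace.re := by
  have hB := posSemidef_condStateB hρ (PosSemidef.one (n := A) (R := ℂ))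
  have one_sub (W : Matrix B B ℂ) : 1 - W ⊗ₖ (1 : Matrix C C ℂ) = (1 - W) ⊗ₖ 1 := by
    rw [sub_kronecker, one_kronecker_one]
  calc _ ≤ ∑ x, liebTrace s (condStateB ρ (M x)) (k • condStateB ρ 1) 1 := by
        refine sum_liebTrace_le_sum_liebTrace (fun _ => hρ)
          (fun y => hρ.mul_mul_conjTranspose_same _)
          (fun x => posSemidef_condStateB hρ (hM.posSemidef x)) (fun _ => hB.smul hk₀) hs
          fun t ht W => ⟨_, (hM.sum_splitCost_le hN hk hS hρ ht.le fun x => W x ⊗ₖ 1).trans_eq ?_⟩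
        simp only [splitCost_condStateB, one_sub, conjTranspose_kronecker, conjTranspose_one,
          ← mul_kronecker_mul, Matrix.mul_one]
    _ = _ := by
        simp only [liebTrace, matRpow_smul hB hk₀ hs.1.ne', conjTranspose_one, Matrix.mul_one,
          Matrix.mul_smul, trace_smul, Complex.smul_re, smul_eq_mul, Finset.mul_sum]

theorem IsPOVM.sum_trace_condStateC_le (hM : IsPOVM M) (hN : IsPOVM N) {k : ℝ} (hk₀ : 0 ≤ k)
    (hk : ∀ x y, N y * M x * N y ≤ k • N y) (hρ : ρ.PosSemidef) {s : ℝ} (hs : s ∈ Set.Ioo 0 1) :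
    ∑ y, (matRpow (condStateC ρ (N y)) (1 + s) * matRpow (condStateC ρ 1) (-s)).trace.re ≤
      k ^ s * ∑ x, (matRpow (condStateB ρ (M x)) (1 - s) *
        matRpow (condStateB ρ 1) s).trace.re := by
  obtain ⟨Φ, hΦB, hΦC⟩ := exists_regroup_purification hρ
  have half_gram (y : Y) : (matRpow (N y) (1 / 2))ᴴ * matRpow (N y) (1 / 2) = N y := by
    rw [(isHermitian_matRpow _ _).eq, matRpow_half_mul_matRpow_half (hN.posSemidef y)]
  have hΦ1 : Φᴴ * Φ = (condStateC ρ 1)ᵀ := by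
    rw [← hΦC, one_kronecker_one, Matrix.mul_one]
  have hermC {P : Matrix A A ℂ} (hP : P.PosSemidef) := (posSemidef_condStateC hρ hP).1
  have h := hM.sum_liebTrace_le hN hk₀ hk half_gram (posSemidef_self_mul_conjTranspose Φ) hs
  simp only [liebTrace_mul_conjTranspose_self] at h
  simp only [conjTranspose_kronecker, conjTranspose_one, ← mul_kronecker_mul, half_gram,
    Matrix.mul_one, hΦB, hΦC, hΦ1] at h
  refine h.trans_eq' (Finset.sum_congr rfl fun y _ => ?_)
  rw [matRpow_transpose (hermC (hN.posSemidef y)), matRpow_transpose (hermC PosSemidef.one),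
    ← transpose_mul, trace_transpose, trace_mul_comm]

lemma two_mul_log_one_div_le {c p q s : ℝ} (hq : 0 < q) (hs : 0 < s)
    (h : q ≤ (c ^ 2) ^ s * p) :
    2 * Real.log (1 / c) ≤ s⁻¹ * Real.log p - s⁻¹ * Real.log q := by
  have hpow : 0 < (c ^ 2) ^ s :=
    (Real.rpow_nonneg (sq_nonneg c) s).lt_of_ne fun h₀ => by
      rw [← h₀, zero_mul] at h
      exact h.not_gt hq
  have hp : 0 < p := pos_of_mul_pos_right (hq.trans_le h) hpow.le
  have hc : c ≠ 0 := by
    rintro rfl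
    simp [Real.zero_rpow hs.ne'] at hpow
  have hlog : Real.log q ≤ s * (2 * Real.log c) + Real.log p := by
    have := Real.log_le_log hq h
    rwa [Real.log_mul hpow.ne' hp.ne', Real.log_rpow (by positivity), Real.log_pow] at this
  rw [one_div, Real.log_inv, ← mul_sub, ← div_eq_inv_mul, le_div_iff₀ hs]
  linarith

theorem two_mul_log_le_renyiCondEntropyDown_one_sub_add_one_add [DecidableEq X] [DecidableEq Y]
    (hM : IsPOVM M) (hN : IsPOVM N) (hρ : ρ.PosSemidef) (hρ₀ : ρ ≠ 0) {s : ℝ}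
    (hs : s ∈ Set.Ioo 0 1) :
    2 * Real.log (1 / overlap M N) ≤
      renyiCondEntropyDown (1 - s) (cqState fun x => condStateB ρ (M x)) +
        renyiCondEntropyDown (1 + s) (cqState fun y => condStateC ρ (N y)) := by
  have hB (x : X) := posSemidef_condStateB hρ (hM.posSemidef x)
  have hC (y : Y) := posSemidef_condStateC hρ (hN.posSemidef y)
  have hB1 : ∑ x, condStateB ρ (M x) = condStateB ρ 1 := by
    rw [← condStateB_sum, hM.sum_eq_one]
  have hC1 : ∑ y, condStateC ρ (N y) = condStateC ρ 1 := by
    rw [← condStateC_sum, hN.sum_eq_one]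
  have condStateC_ne_zero : ∑ y, condStateC ρ (N y) ≠ 0 := fun h => hρ₀ <| by
    rw [← hρ.trace_eq_zero_iff, ← trace_condStateC_one, ← hC1, h, trace_zero]
  have traces_le := hM.sum_trace_condStateC_le hN (sq_nonneg (overlap M N))
    (fun x y => mul_mul_le_overlap_sq_smul (hM.posSemidef x) (hN.posSemidef y)) hρ hs
  have traces_pos := sum_trace_matRpow_mul_matRpow_sum_pos hC condStateC_ne_zero (1 + s) (-s)
  rw [hC1] at traces_pos
  have key := two_mul_log_one_div_le traces_pos hs.1 traces_le
  rw [renyiCondEntropyDown_cqState fun x => (hB x).1,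
    renyiCondEntropyDown_cqState fun y => (hC y).1, hB1, hC1, sub_sub_cancel_left,
    add_sub_cancel_left, sub_sub_cancel, sub_add_cancel_left, inv_neg, neg_mul, neg_neg,
    ← sub_eq_add_neg]
  exact key

theorem uncertainty_down_general [DecidableEq X] [DecidableEq Y] (hρ : ρ.PosSemidef) (hρ₀ : ρ ≠ 0)
    (hM : IsPOVM M) (hN : IsPOVM N) {α β : ℝ} (hα : 0 < α) (hβ : 0 < β) (hαβ : α + β = 2)
    (hα₁ : α ≠ 1) :
    2 * Real.log (1 / overlap M N) ≤
      renyiCondEntropyDown α (cqState fun x => condStateB ρ (M x)) +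
        renyiCondEntropyDown β (cqState fun y => condStateC ρ (N y)) := by
  obtain hlt | hgt := hα₁.lt_or_gt
  · obtain ⟨s, rfl⟩ : ∃ s, α = 1 - s := ⟨1 - α, by ring⟩
    obtain rfl : β = 1 + s := by linarith
    exact two_mul_log_le_renyiCondEntropyDown_one_sub_add_one_add hM hN hρ hρ₀
      ⟨by linarith, by linarith⟩
  · obtain ⟨s, rfl⟩ : ∃ s, β = 1 - s := ⟨1 - β, by ring⟩
    obtain rfl : α = 1 + s := by linarith
    have hswap : (swapBC ρ).PosSemidef := hρ.submatrix _
    have hswap₀ : swapBC ρ ≠ 0 := fun h => hρ₀ (congrArg swapBC h)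
    have := two_mul_log_le_renyiCondEntropyDown_one_sub_add_one_add hN hM hswap hswap₀
      ⟨by linarith, by linarith⟩
    simpa only [condStateB_swapBC, condStateC_swapBC, overlap_comm N M, add_comm] using this

end UncertaintyDown

theorem uncertainty_down {A B C X Y : Type*}
    [Fintype A] [DecidableEq A] [Fintype B] [DecidableEq B] [Fintype C] [DecidableEq C]
    [Fintype X] [DecidableEq X] [Nonempty X] [Fintype Y] [DecidableEq Y] [Nonempty Y]
    (ρ : Matrix (A × B × C) (A × B × C) ℂ) (hρ : ρ.PosSemidef) (hρ1 : ρ.trace = 1)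
    (M : X → Matrix A A ℂ) (N : Y → Matrix A A ℂ)
    (hM : ∀ x, (M x).PosSemidef) (hMsum : ∑ x, M x = 1)
    (hN : ∀ y, (N y).PosSemidef) (hNsum : ∑ y, N y = 1)
    (c : ℝ)
    (hc : c = ⨆ x : X, ⨆ y : Y, ‖Matrix.toEuclideanCLM (𝕜 := ℂ)
      (matRpow (M x) (1 / 2) * matRpow (N y) (1 / 2))‖)
    (α β : ℝ) (hα : α ∈ Set.Ioo (0 : ℝ) 2) (hβ : β ∈ Set.Ioo (0 : ℝ) 2)
    (hab : α + β = 2) (hα1 : α ≠ 1) :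
    let ρXB : Matrix (X × B) (X × B) ℂ := Matrix.of fun p p' =>
      if p.1 = p'.1 then
        trFstThird ((M p.1 ⊗ₖ (1 : Matrix (B × C) (B × C) ℂ)) * ρ) p.2 p'.2 else 0;
    let ρYC : Matrix (Y × C) (Y × C) ℂ := Matrix.of fun p p' =>
      if p.1 = p'.1 then
        trFstSnd ((N p.1 ⊗ₖ (1 : Matrix (B × C) (B × C) ℂ)) * ρ) p.2 p'.2 else 0;
    -(renyiDiv α ρXB ((1 : Matrix X X ℂ) ⊗ₖ trFst ρXB)) +
      -(renyiDiv β ρYC ((1 : Matrix Y Y ℂ) ⊗ₖ trFst ρYC)) ≥ Real.log (1 / c) := by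
  intro _ _
  have hM' : IsPOVM M := ⟨hM, hMsum⟩
  have hN' : IsPOVM N := ⟨hN, hNsum⟩
  have hρ₀ : ρ ≠ 0 := fun h => by simp [h] at hρ1
  calc Real.log (1 / c) = Real.log (1 / overlap M N) := by rw [hc]; rfl
    _ ≤ 2 * Real.log (1 / overlap M N) :=
      le_mul_of_one_le_left (hM'.log_one_div_overlap_nonneg hN') one_le_two
    _ ≤ _ := uncertainty_down_general hρ hρ₀ hM' hN' hα.1 hβ.1 hab hα1
end

section
/- Entropic uncertainty relation for H̃^↑: Let ρ_ABC be a density matrix on ℂ^(A×B×C), let {M_x}_{x∈X} and {N_y}_{y∈Y} be POVMs on the A-system, and let c := max_{x,y} ‖ M_x^{1/2} N_y^{1/2} ‖ where ‖·‖ is the operator norm. Define the classical-quantum post-measurement states ρ_XB on ℂ^(X×B) by ρ_XB (x,b)(x',b') = (if x = x' then (tr_{AC}((M_x ⊗ 1_{BC}) ρ_ABC)) b b' else 0), and ρ_YC on ℂ^(Y×C) analogously with N_y and tr_{AB}. Then for all α, β ∈ (1/2,∞) with 1/α + 1/β = 2 and α ≠ 1: H̃_α^↑(X|B)_ρ + H̃_β^↑(Y|C)_ρ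 ≥ log(1/c), where H̃_γ^↑(X|B)_ρ is the supremum over density matrices σ_B of −D̃_γ(ρ_XB ‖ 1_X ⊗ σ_B) (for γ > 1 over σ_B whose kernel is contained in that of ρ_B = tr_X ρ_XB). -/
open scoped Kronecker ComplexOrder
open Matrix

/-- `H̃_γ^↑(A|B)_ρ`: supremum over density matrices `σ_B` of `−D̃_γ(ρ_AB ‖ 1_A ⊗ σ_B)`
(for `γ > 1` over those `σ_B` whose kernel is contained in that of `ρ_B`). -/
noncomputable def condSandwichedRenyiUp {a b : Type*} [Fintype a] [DecidableEq a] [Fintype b] [DecidableEq b]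
    (gamma : ℝ) (ρ : Matrix (a × b) (a × b) ℂ) : ℝ :=
  sSup {x : ℝ | ∃ σ : Matrix b b ℂ, σ.PosSemidef ∧ σ.trace = 1 ∧
    (1 < gamma → LinearMap.ker σ.mulVecLin ≤ LinearMap.ker (trFst ρ).mulVecLin) ∧
    x = -sandwichedRenyiDiv gamma ρ ((1 : Matrix a a ℂ) ⊗ₖ σ)}

/-!
Purify `ρ` and measure `x` and `y` by isometries `V_X`, `V_Y` that keep two copies of the outcome,
one on either side of the bipartition. Up to a logarithm, `H̃_α(X|B)` is then an infimum over
`σ_B` of a maximum over complementary states `Ω` of the pairing `⟨ψ, V_Xᴴ (Ωᵖ ⊗ σ⁻ᵖ) V_X ψ⟩` with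
`p = (α - 1) / α`. Sion's minimax theorem supplies one `Ω` that works for every `σ`. The relation
`1 / α + 1 / β = 2` means that `H̃_β(Y|C)` belongs to the exponent `-p`.

The two pairings are compared with the states `σ = tr κ` and `τ = tr Ω`. For `p = 1` the operator
`T = V_Y V_Xᴴ` satisfies `T (Ω ⊗ σ⁻¹) Tᴴ ≤ c² (κ⁻¹ ⊗ τ)`: multiplying by the square roots of the
right-hand side turns it into a norm bound for a block-diagonal operator whose blocks are products
`N_y^{1/2} M_x^{1/2}`. Operator concavity and monotonicity of `t ↦ tᵖ` interpolate this to
`p ∈ (0, 1)` with constant `c²ᵖ`, which gives the relation with `2 log (1 / c)`.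
-/

open scoped MatrixOrder Matrix.Norms.L2Operator

section FunctionalCalculus

variable {m n : Type*} [Fintype m] [DecidableEq m] [Fintype n] [DecidableEq n]

theorem exists_polynomial_cfc_eq_aeval (f : ℝ → ℝ) {A : Matrix m m ℂ} {B : Matrix n n ℂ}
    (hA : A.IsHermitian) (hB : B.IsHermitian) :
    ∃ q : Polynomial ℝ, cfc f A = Polynomial.aeval A q ∧ cfc f B = Polynomial.aeval B q := by
  classical
  set s := (Matrix.finite_real_spectrum (A := A)).toFinset ∪
    (Matrix.finite_real_spectrum (A := B)).toFinset
  have heval : ∀ x ∈ s, (Lagrange.interpolate s id f).eval x = f x := fun x hx =>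
    Lagrange.eval_interpolate_at_node f Function.injective_id.injOn hx
  refine ⟨Lagrange.interpolate s id f, ?_, ?_⟩
  · rw [← cfc_polynomial _ A hA.isSelfAdjoint]
    exact cfc_congr fun x hx => (heval x (by simp [s, hx])).symm
  · rw [← cfc_polynomial _ B hB.isSelfAdjoint]
    exact cfc_congr fun x hx => (heval x (by simp [s, hx])).symm

theorem aeval_mul_of_intertwine {A : Matrix m m ℂ} {B : Matrix n n ℂ} {K : Matrix m n ℂ}
    (h : A * K = K * B) (q : Polynomial ℝ) :
    Polynomial.aeval A q * K = K * Polynomial.aeval B q := by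
  have hpow (k : ℕ) : A ^ k * K = K * B ^ k := by
    induction k with
    | zero => simp
    | succ k ih => rw [pow_succ, Matrix.mul_assoc, h, ← Matrix.mul_assoc, ih, Matrix.mul_assoc,
        ← pow_succ]
  simp only [Polynomial.aeval_eq_sum_range, Matrix.sum_mul, Matrix.mul_sum, Matrix.smul_mul,
    Matrix.mul_smul, hpow]

theorem cfc_mul_of_intertwine (f : ℝ → ℝ) {A : Matrix m m ℂ} {B : Matrix n n ℂ}
    {K : Matrix m n ℂ} (hA : A.IsHermitian) (hB : B.IsHermitian) (h : A * K = K * B) :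
    cfc f A * K = K * cfc f B := by
  obtain ⟨q, hqA, hqB⟩ := exists_polynomial_cfc_eq_aeval f hA hB
  rw [hqA, hqB, aeval_mul_of_intertwine h]

theorem cfc_transpose (f : ℝ → ℝ) {A : Matrix n n ℂ} (hA : A.IsHermitian) :
    cfc f Aᵀ = (cfc f A)ᵀ := by
  obtain ⟨q, hqT, hqA⟩ := exists_polynomial_cfc_eq_aeval f hA.transpose hA
  simp [hqT, hqA, Polynomial.aeval_eq_sum_range, Matrix.transpose_sum, Matrix.transpose_pow]

theorem trace_cfc (f : ℝ → ℝ) {A : Matrix n n ℂ} (hA : A.IsHermitian) :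
    (cfc f A).trace = ∑ i, (f (hA.eigenvalues i) : ℂ) := by
  simp [hA.cfc_eq, IsHermitian.cfc, Unitary.conjStarAlgAut_apply, Matrix.trace_mul_cycle]

theorem rpow_eq_cfc {A : Matrix n n ℂ} (hA : A.PosSemidef) (t : ℝ) :
    A ^ t = cfc (fun x : ℝ => x ^ t) A :=
  CFC.rpow_eq_cfc_real hA.nonneg

theorem rpow_mul_of_intertwine {A : Matrix m m ℂ} {B : Matrix n n ℂ} {K : Matrix m n ℂ}
    (hA : A.PosSemidef) (hB : B.PosSemidef) (h : A * K = K * B) (t : ℝ) :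
    A ^ t * K = K * B ^ t := by
  rw [rpow_eq_cfc hA, rpow_eq_cfc hB]
  exact cfc_mul_of_intertwine _ hA.isHermitian hB.isHermitian h

theorem smul_rpow {A : Matrix n n ℂ} (hA : A.PosSemidef) {r : ℝ} (hr : 0 ≤ r) (t : ℝ) :
    (r • A) ^ t = r ^ t • A ^ t := by
  have hfin (f : ℝ → ℝ) (s : Set ℝ) (hs : s.Finite) : ContinuousOn f s := hs.continuousOn f
  rw [rpow_eq_cfc (hA.smul hr), rpow_eq_cfc hA, ← cfc_smul_id (R := ℝ) r A,
    ← cfc_comp' (fun x : ℝ => x ^ t) (fun x : ℝ => r • x) A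
      (hfin _ _ (A.finite_real_spectrum.image _)),
    ← cfc_smul (r ^ t) _ A (hfin _ _ A.finite_real_spectrum)]
  exact cfc_congr fun x hx => Real.mul_rpow hr (spectrum_nonneg_of_nonneg hA.nonneg hx)

end FunctionalCalculus

theorem conjTranspose_mul_mul_mono {m n : Type*} [Fintype m] [Finite n] {A B : Matrix m m ℂ}
    (h : A ≤ B) (K : Matrix m n ℂ) : Kᴴ * A * K ≤ Kᴴ * B * K := by
  rw [Matrix.le_iff, ← Matrix.sub_mul, ← Matrix.mul_sub]
  exact (Matrix.le_iff.mp h).conjTranspose_mul_mul_same K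

section Powers

variable {m n : Type*} [Fintype m] [DecidableEq m] [Fintype n] [DecidableEq n]

theorem transpose_rpow {A : Matrix n n ℂ} (hA : A.PosSemidef) (t : ℝ) : Aᵀ ^ t = (A ^ t)ᵀ := by
  rw [rpow_eq_cfc hA, rpow_eq_cfc hA.transpose, cfc_transpose _ hA.isHermitian]

theorem trace_rpow {A : Matrix n n ℂ} (hA : A.PosSemidef) (t : ℝ) :
    (A ^ t).trace = ∑ i, ((hA.isHermitian.eigenvalues i ^ t : ℝ) : ℂ) := by
  rw [rpow_eq_cfc hA, trace_cfc _ hA.isHermitian]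

theorem rpow_sub_one_mul_self {A : Matrix n n ℂ} (hA : A.PosSemidef) {t : ℝ} (ht : t ≠ 0) :
    A ^ (t - 1) * A = A ^ t := by
  have hcont (f : ℝ → ℝ) : ContinuousOn f (spectrum ℝ A) := A.finite_real_spectrum.continuousOn f
  rw [rpow_eq_cfc hA, rpow_eq_cfc hA]
  nth_rw 2 [← cfc_id' ℝ A]
  rw [← cfc_mul _ _ A (hcont _) (hcont _)]
  refine cfc_congr fun x hx => ?_
  rcases (spectrum_nonneg_of_nonneg hA.nonneg hx).eq_or_lt with h0 | hpos
  · simp [← h0, ht]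
  · simp [Real.rpow_sub_one hpos.ne', hpos.ne']

theorem rpow_mul_rpow_self {A : Matrix n n ℂ} (hA : A.PosSemidef) (t : ℝ) :
    A ^ t * A ^ t = A ^ (2 * t) := by
  rw [rpow_eq_cfc hA, rpow_eq_cfc hA, ← cfc_mul _ _ A (A.finite_real_spectrum.continuousOn _)
    (A.finite_real_spectrum.continuousOn _)]
  refine cfc_congr fun x hx => ?_
  have hx : 0 ≤ x := spectrum_nonneg_of_nonneg hA.nonneg hx
  rw [mul_comm 2 t, Real.rpow_mul hx, Real.rpow_two, sq]

theorem rpow_half_mul_rpow_half {A : Matrix n n ℂ} (hA : A.PosSemidef) :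
    A ^ (1 / 2 : ℝ) * A ^ (1 / 2 : ℝ) = A := by
  rw [rpow_mul_rpow_self hA, mul_one_div_cancel two_ne_zero, CFC.rpow_one A hA.nonneg]

theorem trace_rpow_mul_conjTranspose_comm (K : Matrix m n ℂ) {t : ℝ} (ht : t ≠ 0) :
    ((K * Kᴴ) ^ t).trace = ((Kᴴ * K) ^ t).trace := by
  have hint := rpow_mul_of_intertwine (posSemidef_self_mul_conjTranspose K)
    (posSemidef_conjTranspose_mul_self K) (Matrix.mul_assoc K Kᴴ K) (t - 1)
  rw [← rpow_sub_one_mul_self (posSemidef_self_mul_conjTranspose K) ht,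
    ← rpow_sub_one_mul_self (posSemidef_conjTranspose_mul_self K) ht,
    ← Matrix.mul_assoc, hint, Matrix.mul_assoc, Matrix.trace_mul_comm, Matrix.mul_assoc]

theorem cfc_diagonal (f : ℝ → ℝ) (d : n → ℝ) :
    cfc f (diagonal fun i => (d i : ℂ)) = diagonal fun i => (f (d i) : ℂ) := by
  have hD : (diagonal fun i => (d i : ℂ)).IsHermitian :=
    isHermitian_diagonal_of_self_adjoint _ (by ext i; simp)
  ext i j
  have hcol := cfc_mul_of_intertwine (B := algebraMap ℝ (Matrix Unit Unit ℂ) (d j))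
    (K := replicateCol Unit (Pi.single j 1)) f hD (by ext; simp [Matrix.algebraMap_eq_diagonal]) (by
      ext k
      by_cases hkj : k = j <;> simp [Matrix.algebraMap_eq_diagonal, hkj])
  rw [cfc_algebraMap] at hcol
  have hij := congr_fun₂ hcol i ()
  by_cases h : i = j <;>
    simpa [Matrix.mul_apply, Pi.single_apply, Matrix.algebraMap_eq_diagonal, h] using hij

theorem rpow_eq_conj_diagonal {A : Matrix n n ℂ} (hA : A.PosSemidef) (t : ℝ) :
    A ^ t = (hA.isHermitian.eigenvectorUnitary : Matrix n n ℂ) *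
      diagonal (fun i => ((hA.isHermitian.eigenvalues i ^ t : ℝ) : ℂ)) *
      (hA.isHermitian.eigenvectorUnitary : Matrix n n ℂ)ᴴ := by
  rw [rpow_eq_cfc hA, hA.isHermitian.cfc_eq, IsHermitian.cfc, Unitary.conjStarAlgAut_apply]
  rfl

theorem kronecker_rpow {A : Matrix m m ℂ} {B : Matrix n n ℂ} (hA : A.PosSemidef)
    (hB : B.PosSemidef) (t : ℝ) : (A ⊗ₖ B) ^ t = (A ^ t) ⊗ₖ (B ^ t) := by
  set a := hA.isHermitian.eigenvalues
  set b := hB.isHermitian.eigenvalues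
  set U : Matrix m m ℂ := (hA.isHermitian.eigenvectorUnitary).1
  set V : Matrix n n ℂ := (hB.isHermitian.eigenvectorUnitary).1
  have hU : Uᴴ * U = 1 := Unitary.coe_star_mul_self hA.isHermitian.eigenvectorUnitary
  have hV : Vᴴ * V = 1 := Unitary.coe_star_mul_self hB.isHermitian.eigenvectorUnitary
  have hUV : (U ⊗ₖ V) * (U ⊗ₖ V)ᴴ = 1 := by
    rw [mul_eq_one_comm, conjTranspose_kronecker, ← mul_kronecker_mul, hU, hV, one_kronecker_one]
  set D : Matrix (m × n) (m × n) ℂ := diagonal fun i => ((a i.1 * b i.2 : ℝ) : ℂ)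
  have hD : D.PosSemidef := PosSemidef.diagonal fun i =>
    Complex.zero_le_real.mpr <| mul_nonneg (hA.eigenvalues_nonneg i.1) (hB.eigenvalues_nonneg i.2)
  have hDt (t : ℝ) : (U * diagonal (fun i => ((a i ^ t : ℝ) : ℂ)) * Uᴴ) ⊗ₖ
      (V * diagonal (fun i => ((b i ^ t : ℝ) : ℂ)) * Vᴴ) = (U ⊗ₖ V) * D ^ t * (U ⊗ₖ V)ᴴ := by
    rw [rpow_eq_cfc hD, cfc_diagonal]
    simp only [mul_kronecker_mul, conjTranspose_kronecker, diagonal_kronecker_diagonal,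
      Real.mul_rpow (hA.eigenvalues_nonneg _) (hB.eigenvalues_nonneg _), Complex.ofReal_mul, a, b]
  have hint : (A ⊗ₖ B) * (U ⊗ₖ V) = (U ⊗ₖ V) * D := by
    rw [← CFC.rpow_one A hA.nonneg, ← CFC.rpow_one B hB.nonneg, rpow_eq_conj_diagonal hA,
      rpow_eq_conj_diagonal hB, hDt, CFC.rpow_one D hD.nonneg, Matrix.mul_assoc,
      mul_eq_one_comm.mp hUV, Matrix.mul_one]
  calc (A ⊗ₖ B) ^ t = (A ⊗ₖ B) ^ t * (U ⊗ₖ V) * (U ⊗ₖ V)ᴴ := by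
        rw [Matrix.mul_assoc, hUV, Matrix.mul_one]
    _ = (U ⊗ₖ V) * D ^ t * (U ⊗ₖ V)ᴴ := by
        rw [rpow_mul_of_intertwine (hA.kronecker hB) hD hint]
    _ = (A ^ t) ⊗ₖ (B ^ t) := by
        rw [rpow_eq_conj_diagonal hA, rpow_eq_conj_diagonal hB, hDt]

theorem rpow_conj_isometry {u : Matrix m n ℂ} (hu : uᴴ * u = 1) {W : Matrix n n ℂ}
    (hW : W.PosSemidef) (t : ℝ) : (u * W * uᴴ) ^ t * u = u * W ^ t := by
  refine rpow_mul_of_intertwine (hW.mul_mul_conjTranspose_same u) hW ?_ t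
  rw [Matrix.mul_assoc, hu, Matrix.mul_one]

theorem conj_isometry_rpow_le {u : Matrix m n ℂ} (hu : uᴴ * u = 1) {Q : Matrix m m ℂ}
    (hQ : Q.PosSemidef) {p : ℝ} (hp : p ∈ Set.Icc (0 : ℝ) 1) :
    uᴴ * Q ^ p * u ≤ (uᴴ * Q * u) ^ p := by
  -- Averaging `Q` with its conjugate under the reflection `Z` yields a matrix that commutes with
  -- the projection `u * uᴴ`, to which concavity of `t ↦ tᵖ` applies.
  set Z : Matrix m m ℂ := (2 : ℂ) • (u * uᴴ) - 1 with hZ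
  have hZH : Zᴴ = Z := by simp [hZ]
  have hZu : Z * u = u := by
    rw [hZ, Matrix.sub_mul, Matrix.smul_mul, Matrix.mul_assoc, hu, Matrix.mul_one, two_smul,
      Matrix.one_mul, add_sub_cancel_right]
  have hZZ : Z * Z = 1 := by
    nth_rw 2 [hZ]
    rw [Matrix.mul_sub, Matrix.mul_smul, ← Matrix.mul_assoc, hZu, Matrix.mul_one, hZ,
      sub_sub_cancel]
  have hZQ : (Z * Q * Z).PosSemidef := by simpa [hZH] using hQ.mul_mul_conjTranspose_same Z
  have hZQp : (Z * Q * Z) ^ p = Z * Q ^ p * Z := by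
    rw [← rpow_mul_of_intertwine hZQ hQ (K := Z) (by simp [Matrix.mul_assoc, hZZ]) p,
      Matrix.mul_assoc _ Z Z, hZZ, Matrix.mul_one]
  set pinch : Matrix m m ℂ := (1 / 2 : ℝ) • Q + (1 / 2 : ℝ) • (Z * Q * Z)
  have hpinch : pinch.PosSemidef := (hQ.smul (by norm_num)).add (hZQ.smul (by norm_num))
  have hpinch_u : pinch * u = u * (uᴴ * Q * u) := by
    calc pinch * u = (1 / 2 : ℝ) • (Q * u + Z * (Q * (Z * u))) := by
          simp only [pinch, Matrix.add_mul, Matrix.smul_mul, Matrix.mul_assoc, smul_add]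
      _ = u * (uᴴ * Q * u) := by
          rw [hZu, hZ, Matrix.sub_mul, Matrix.smul_mul, Matrix.one_mul, Matrix.mul_assoc u,
            ← Matrix.mul_assoc uᴴ]
          module
  have hconc : (1 / 2 : ℝ) • Q ^ p + (1 / 2 : ℝ) • (Z * Q ^ p * Z) ≤ pinch ^ p := by
    rw [← hZQp]
    exact (CFC.concaveOn_rpow hp).2 hQ.nonneg hZQ.nonneg (by norm_num) (by norm_num) (by norm_num)
  calc uᴴ * Q ^ p * u = uᴴ * ((1 / 2 : ℝ) • Q ^ p + (1 / 2 : ℝ) • (Z * Q ^ p * Z)) * u := by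
        have hZu' : uᴴ * Z = uᴴ := by simpa [hZH] using congr_arg conjTranspose hZu
        simp only [Matrix.mul_add, Matrix.add_mul, Matrix.mul_smul, Matrix.smul_mul,
          ← Matrix.mul_assoc, hZu']
        rw [Matrix.mul_assoc _ Z u, hZu]
        module
    _ ≤ uᴴ * pinch ^ p * u := conjTranspose_mul_mul_mono hconc u
    _ = (uᴴ * Q * u) ^ p := by
        rw [Matrix.mul_assoc, rpow_mul_of_intertwine hpinch (hQ.conjTranspose_mul_mul_same u)
          hpinch_u, ← Matrix.mul_assoc, hu, Matrix.one_mul]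

theorem conj_rpow_le_conj_rpow {k : Type*} [Fintype k] [DecidableEq k] {u : Matrix m k ℂ}
    {v : Matrix n k ℂ} (hu : uᴴ * u = 1) (hv : vᴴ * v = 1) {Q : Matrix m m ℂ} {R : Matrix n n ℂ}
    (hQ : Q.PosSemidef) (hQR : v * uᴴ * Q * (v * uᴴ)ᴴ ≤ R) {p : ℝ} (hp : p ∈ Set.Icc (0 : ℝ) 1) :
    uᴴ * Q ^ p * u ≤ vᴴ * R ^ p * v := by
  have hW := hQ.conjTranspose_mul_mul_same u
  calc uᴴ * Q ^ p * u ≤ (uᴴ * Q * u) ^ p := conj_isometry_rpow_le hu hQ hp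
    _ = vᴴ * (v * (uᴴ * Q * u) * vᴴ) ^ p * v := by
        rw [Matrix.mul_assoc vᴴ, rpow_conj_isometry hv hW, ← Matrix.mul_assoc, hv, Matrix.one_mul]
    _ = vᴴ * (v * uᴴ * Q * (v * uᴴ)ᴴ) ^ p * v := by simp [Matrix.mul_assoc]
    _ ≤ vᴴ * R ^ p * v := conjTranspose_mul_mul_mono (CFC.rpow_le_rpow hp hQR) v

end Powers

theorem exists_forall_le_of_forall_exists_le {E F : Type*}
    [AddCommGroup E] [Module ℝ E] [TopologicalSpace E] [IsTopologicalAddGroup E]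
    [ContinuousSMul ℝ E] [AddCommGroup F] [Module ℝ F] [TopologicalSpace F]
    [IsTopologicalAddGroup F] [ContinuousSMul ℝ F] {s : Set E} {t : Set F} {f : E → F → ℝ} {a : ℝ}
    (hs : IsCompact s) (hne : s.Nonempty) (hcs : Convex ℝ s)
    (hf : ∀ y ∈ t, ConcaveOn ℝ s (f · y)) (hfc : ∀ y ∈ t, ContinuousOn (f · y) s)
    (ht : Convex ℝ t) (hf' : ∀ x ∈ s, ConvexOn ℝ t (f x)) (hfc' : ∀ x ∈ s, ContinuousOn (f x) t)
    (h : ∀ y ∈ t, ∃ x ∈ s, a ≤ f x y) : ∃ x ∈ s, ∀ y ∈ t, a ≤ f x y := by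
  by_contra! hcon
  have hlsc : ∀ y ∈ t, LowerSemicontinuousOn (fun x => -f x y) s := fun y hy =>
    (hfc y hy).neg.lowerSemicontinuousOn
  obtain ⟨u, hu⟩ : ∃ u : Finset t, ∀ x ∈ s, ∃ y ∈ u, -a < -f x y := by
    rw [← LowerSemicontinuousOn.inter_biInter_preimage_Iic_eq_empty_iff_exists_finset hs
      (f := fun y x => -f x y) hlsc]
    refine Set.eq_empty_of_forall_notMem fun x ⟨hx, hx'⟩ => ?_
    obtain ⟨y, hy, hlt⟩ := hcon x hx
    have : -f x y ≤ -a := Set.mem_iInter₂.mp hx' y hy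
    linarith
  obtain ⟨y, hy, hlt⟩ := Sion.exists_lt_iInf_of_lt_iInf_of_finite hne hs hlsc
    (fun y hy => (hf y hy).neg.quasiconvexOn) ht
    (fun x hx => (hfc' x hx).neg.upperSemicontinuousOn)
    (fun x hx => (hf' x hx).neg.quasiconcaveOn) hcs (u.finite_toSet.image Subtype.val)
    (Subtype.coe_image_subset t u) (t := -a) fun x hx => by simpa using hu x hx
  obtain ⟨x, hx, hax⟩ := h y hy
  linarith [hlt x hx]

section Densities

variable {n : Type*} [Fintype n]

theorem le_algebraMap_trace_re [DecidableEq n] {A : Matrix n n ℂ} (hA : A.PosSemidef) :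
    A ≤ algebraMap ℝ (Matrix n n ℂ) A.trace.re := by
  refine le_algebraMap_of_spectrum_le (fun x hx => ?_) hA.isHermitian.isSelfAdjoint
  rw [hA.isHermitian.spectrum_real_eq_range_eigenvalues] at hx
  obtain ⟨i, rfl⟩ := hx
  rw [hA.isHermitian.trace_eq_sum_eigenvalues]
  simpa using Finset.single_le_sum (fun j _ => hA.eigenvalues_nonneg j) (Finset.mem_univ i)

/-- The density matrices on `ℂⁿ`, as a subset of the space of all matrices. -/
def densityMatrices (n : Type*) [Fintype n] : Set (Matrix n n ℂ) :=
  {ρ | ρ.PosSemidef ∧ ρ.trace = 1}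

theorem le_one_of_mem_densityMatrices [DecidableEq n] {ρ : Matrix n n ℂ}
    (hρ : ρ ∈ densityMatrices n) : ρ ≤ 1 := by
  simpa [hρ.2] using le_algebraMap_trace_re hρ.1

theorem convex_densityMatrices : Convex ℝ (densityMatrices n) := by
  rintro ρ ⟨hρ, hρ1⟩ σ ⟨hσ, hσ1⟩ a b ha hb hab
  refine ⟨(hρ.smul ha).add (hσ.smul hb), ?_⟩
  rw [trace_add, trace_smul, trace_smul, hρ1, hσ1, ← add_smul, hab, one_smul]

theorem isCompact_densityMatrices : IsCompact (densityMatrices n) := by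
  classical
  have : ProperSpace (Matrix n n ℂ) := FiniteDimensional.proper ℂ _
  refine Metric.isCompact_of_isClosed_isBounded ?_ ?_
  · have hpos : IsClosed {ρ : Matrix n n ℂ | ρ.PosSemidef} := by
      simpa only [Set.Ici, nonneg_iff_posSemidef] using isClosed_Ici (a := (0 : Matrix n n ℂ))
    exact hpos.inter (isClosed_eq continuous_id.matrix_trace continuous_const)
  · refine isBounded_iff_forall_norm_le.mpr ⟨‖(1 : Matrix n n ℂ)‖, fun ρ hρ => ?_⟩
    exact CStarAlgebra.norm_le_norm_of_nonneg_of_le hρ.1.nonneg (le_one_of_mem_densityMatrices hρ)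

theorem inv_card_smul_one_mem_densityMatrices {n : Type*} [Fintype n] [DecidableEq n]
    [Nonempty n] : (Fintype.card n : ℝ)⁻¹ • (1 : Matrix n n ℂ) ∈ densityMatrices n :=
  ⟨PosSemidef.one.smul (by positivity), by simp [trace_smul]⟩

theorem nonempty_densityMatrices (n : Type*) [Fintype n] [Nonempty n] :
    (densityMatrices n).Nonempty := by
  classical
  exact ⟨_, inv_card_smul_one_mem_densityMatrices⟩

end Densities

section PowerPairing

variable {m n : Type*} [Fintype m] [DecidableEq m] [Fintype n] [DecidableEq n]

theorem continuousOn_rpow_posSemidef {p : ℝ} (hp : 0 ≤ p) :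
    ContinuousOn (fun A : Matrix n n ℂ => A ^ p) {A | A.PosSemidef} :=
  ContinuousOn.cfc_nnreal_of_mem_nhdsSet (s := Set.univ) _ Filter.univ_mem continuousOn_id
    (fun _ hA => hA.nonneg) (NNReal.continuous_rpow_const hp).continuousOn

theorem continuousOn_rpow_posDef (p : ℝ) :
    ContinuousOn (fun A : Matrix n n ℂ => A ^ p) {A | A.PosDef} := by
  refine ContinuousOn.cfc_nnreal_of_mem_nhdsSet (s := {0}ᶜ) _ ?_ continuousOn_id
    (fun _ hA => hA.posSemidef.nonneg) ?_
  · refine isOpen_compl_singleton.mem_nhdsSet.mpr <| Set.iUnion₂_subset fun A hA => ?_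
    rw [Set.subset_compl_singleton_iff]
    exact spectrum.zero_notMem _ hA.isUnit
  · exact fun x hx => (NNReal.continuousAt_rpow_const (Or.inl hx)).continuousWithinAt

theorem convexOn_rpow_neg {p : ℝ} (hp : p ∈ Set.Ioc (0 : ℝ) 1) :
    ConvexOn ℝ {A : Matrix n n ℂ | A.PosDef} fun A => A ^ (-p) := by
  have hconv : Convex ℝ {A : Matrix n n ℂ | A.PosDef} := by
    simpa only [isStrictlyPositive_iff_posDef] using
      (CStarAlgebra.convexOn_ringInverse (A := Matrix n n ℂ)).1
  refine ⟨hconv, fun A hA B hB a b ha hb hab => ?_⟩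
  have hApos := hA.isStrictlyPositive
  have hBpos := hB.isStrictlyPositive
  have hAp : IsStrictlyPositive (A ^ p) := hApos.rpow A p
  have hBp : IsStrictlyPositive (B ^ p) := hBpos.rpow B p
  have hABp : IsStrictlyPositive (a • A ^ p + b • B ^ p) :=
    (CStarAlgebra.convexOn_ringInverse (A := Matrix n n ℂ)).1 hAp hBp ha hb hab
  have hAB : IsStrictlyPositive (a • A + b • B) := (hconv hA hB ha hb hab).isStrictlyPositive
  calc (a • A + b • B) ^ (-p) = Ring.inverse ((a • A + b • B) ^ p) :=
        (CFC.inverse_rpow _ p hp.1.ne' hAB).symm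
    _ ≤ Ring.inverse (a • A ^ p + b • B ^ p) :=
        CStarAlgebra.ringInverse_le_ringInverse ((CFC.concaveOn_rpow ⟨hp.1.le, hp.2⟩).2
          hApos.nonneg hBpos.nonneg ha hb hab) hABp
    _ ≤ a • Ring.inverse (A ^ p) + b • Ring.inverse (B ^ p) :=
        CStarAlgebra.convexOn_ringInverse.2 hAp hBp ha hb hab
    _ = a • A ^ (-p) + b • B ^ (-p) := by
        rw [CFC.inverse_rpow _ p hp.1.ne' hApos, CFC.inverse_rpow _ p hp.1.ne' hBpos]

theorem posSemidef_rpow (A : Matrix n n ℂ) (t : ℝ) : (A ^ t).PosSemidef :=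
  CFC.rpow_nonneg.posSemidef

omit [DecidableEq n] in
theorem trace_mul_re_mono {A B T : Matrix n n ℂ} (hAB : A ≤ B) (hT : T.PosSemidef) :
    (A * T).trace.re ≤ (B * T).trace.re := by
  classical
  have hmono : CFC.sqrt T * A * CFC.sqrt T ≤ CFC.sqrt T * B * CFC.sqrt T := by
    simpa using conjugate_le_conjugate_of_nonneg hAB (CFC.sqrt_nonneg T)
  have htrace (C : Matrix n n ℂ) : (C * T).trace = (CFC.sqrt T * C * CFC.sqrt T).trace := by
    nth_rw 1 [← CFC.sqrt_mul_sqrt_self T hT.nonneg]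
    rw [← Matrix.mul_assoc, trace_mul_comm, Matrix.mul_assoc]
  rw [htrace, htrace]
  exact (Complex.le_def.mp (tracePositiveLinearMap n ℂ ℂ |>.monotone' hmono)).1

/-- The pairing `tr (Ωᵖ R(σ⁻ᵖ))` of two states through a positive map `R`, whose minimax value
expresses a sandwiched conditional entropy. -/
noncomputable def powerPairing (R : Matrix n n ℂ →ₚ[ℂ] Matrix m m ℂ) (p : ℝ) (Ω : Matrix m m ℂ)
    (σ : Matrix n n ℂ) : ℝ :=
  (Ω ^ p * R (σ ^ (-p))).trace.re

variable (R : Matrix n n ℂ →ₚ[ℂ] Matrix m m ℂ) {p : ℝ}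

theorem concaveOn_powerPairing_left (hp : p ∈ Set.Icc (0 : ℝ) 1) (σ : Matrix n n ℂ) :
    ConcaveOn ℝ (densityMatrices m) (powerPairing R p · σ) := by
  refine ⟨convex_densityMatrices, fun Ω hΩ Ω' hΩ' a b ha hb hab => ?_⟩
  have h := trace_mul_re_mono ((CFC.concaveOn_rpow hp).2 hΩ.1.nonneg hΩ'.1.nonneg ha hb hab)
    (map_nonneg R (CFC.rpow_nonneg (a := σ) (y := -p))).posSemidef
  simpa [powerPairing, Matrix.add_mul] using h

theorem convexOn_powerPairing_right (hp : p ∈ Set.Ioc (0 : ℝ) 1) (Ω : Matrix m m ℂ) :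
    ConvexOn ℝ {σ : Matrix n n ℂ | σ.PosDef} (powerPairing R p Ω) := by
  refine ⟨(convexOn_rpow_neg hp).1, fun σ hσ σ' hσ' a b ha hb hab => ?_⟩
  have h := trace_mul_re_mono (R.monotone' ((convexOn_rpow_neg hp).2 hσ hσ' ha hb hab))
    (posSemidef_rpow Ω p)
  simpa [powerPairing, Matrix.add_mul, trace_mul_comm (Ω ^ p)] using h

theorem continuousOn_powerPairing_left (hp : 0 ≤ p) (σ : Matrix n n ℂ) :
    ContinuousOn (powerPairing R p · σ) (densityMatrices m) :=
  Complex.continuous_re.comp_continuousOn <| Continuous.comp_continuousOn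
    (g := fun A : Matrix m m ℂ => (A * R (σ ^ (-p))).trace) (by fun_prop)
    ((continuousOn_rpow_posSemidef hp).mono fun _ h => h.1)

theorem continuousOn_powerPairing_right (Ω : Matrix m m ℂ) :
    ContinuousOn (powerPairing R p Ω) {σ : Matrix n n ℂ | σ.PosDef} := by
  have hR : Continuous R := LinearMap.continuous_of_finiteDimensional R.toLinearMap
  exact Complex.continuous_re.comp_continuousOn <| Continuous.comp_continuousOn
    (g := fun A : Matrix n n ℂ => (Ω ^ p * R A).trace) (by fun_prop)
    (continuousOn_rpow_posDef (-p))

theorem exists_forall_le_powerPairing [Nonempty m] (hp : p ∈ Set.Ioc (0 : ℝ) 1) {a : ℝ}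
    (h : ∀ σ ∈ densityMatrices n, σ.PosDef → ∃ Ω ∈ densityMatrices m, a ≤ powerPairing R p Ω σ) :
    ∃ Ω ∈ densityMatrices m, ∀ σ ∈ densityMatrices n, σ.PosDef → a ≤ powerPairing R p Ω σ := by
  have hp' : p ∈ Set.Icc (0 : ℝ) 1 := ⟨hp.1.le, hp.2⟩
  have hconv : Convex ℝ (densityMatrices n ∩ {σ | σ.PosDef}) :=
    convex_densityMatrices.inter (convexOn_rpow_neg hp).1
  obtain ⟨Ω, hΩ, hle⟩ := exists_forall_le_of_forall_exists_le isCompact_densityMatrices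
    (nonempty_densityMatrices m) convex_densityMatrices
    (fun σ _ => concaveOn_powerPairing_left R hp' σ)
    (fun σ _ => continuousOn_powerPairing_left R hp'.1 σ) hconv
    (fun Ω _ => (convexOn_powerPairing_right R hp Ω).subset Set.inter_subset_right hconv)
    (fun Ω _ => (continuousOn_powerPairing_right R Ω).mono Set.inter_subset_right)
    fun σ hσ => h σ hσ.1 hσ.2
  exact ⟨Ω, hΩ, fun σ hσ hσd => hle σ ⟨hσ, hσd⟩⟩

end PowerPairing

section Duality

theorem trace_re_nonneg {n : Type*} [Fintype n] {A : Matrix n n ℂ} (hA : A.PosSemidef) :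
    0 ≤ A.trace.re :=
  (Complex.le_def.mp hA.trace_nonneg).1

theorem inv_trace_smul_mem_densityMatrices {n : Type*} [Fintype n] {A : Matrix n n ℂ}
    (hA : A.PosSemidef) (hpos : 0 < A.trace.re) : A.trace.re⁻¹ • A ∈ densityMatrices n := by
  refine ⟨hA.smul (by positivity), ?_⟩
  have htr : A.trace = (A.trace.re : ℂ) :=
    Complex.ext rfl (Complex.le_def.mp hA.trace_nonneg).2.symm
  rw [trace_smul, Complex.real_smul, htr, Complex.ofReal_re, ← Complex.ofReal_mul,
    inv_mul_cancel₀ hpos.ne', Complex.ofReal_one]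

variable {k l m n : Type*} [Fintype k] [DecidableEq k] [Fintype l] [DecidableEq l]
  [Fintype m] [DecidableEq m] [Fintype n] [DecidableEq n] {p : ℝ}

theorem exists_trace_rpow_mul_eq [Nonempty n] (hp : p ∈ Set.Ioo (0 : ℝ) 1) {W : Matrix n n ℂ}
    (hW : W.PosSemidef) : ∃ Ω ∈ densityMatrices n,
      (Ω ^ p * W).trace.re = (W ^ (1 / (1 - p))).trace.re ^ (1 - p) := by
  have hp1 : 0 < 1 - p := sub_pos.mpr hp.2
  have hα : (1 / (1 - p)) * p = 1 / (1 - p) - 1 := by field_simp; ring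
  set Q := (W ^ (1 / (1 - p))).trace.re with hQ
  have hWpos := posSemidef_rpow W (1 / (1 - p))
  rcases (trace_re_nonneg hWpos).eq_or_lt with h0 | hpos
  · obtain ⟨Ω, hΩ⟩ := nonempty_densityMatrices n
    have htr : (W ^ (1 / (1 - p))).trace = 0 :=
      Complex.ext h0.symm (Complex.le_def.mp hWpos.trace_nonneg).2.symm
    have hW0 : W = 0 := by
      rw [← CFC.rpow_one W hW.nonneg, ← one_div_mul_cancel hp1.ne',
        ← CFC.rpow_rpow_of_exponent_nonneg W _ _ (by positivity) hp1.le hW.nonneg,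
        hWpos.trace_eq_zero_iff.mp htr]
      exact CFC.zero_rpow hp1.ne'
    exact ⟨Ω, hΩ, by rw [hQ, htr, Complex.zero_re, Real.zero_rpow hp1.ne', hW0]; simp⟩
  · refine ⟨Q⁻¹ • W ^ (1 / (1 - p)), inv_trace_smul_mem_densityMatrices hWpos hpos, ?_⟩
    have hpow : (W ^ (1 / (1 - p))) ^ p * W = W ^ (1 / (1 - p)) := by
      rw [CFC.rpow_rpow_of_exponent_nonneg W _ _ (by positivity) hp.1.le, hα,
        rpow_sub_one_mul_self hW (by positivity)]
    rw [smul_rpow hWpos (by positivity), Matrix.smul_mul, hpow, trace_smul, Complex.smul_re, ← hQ,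
      smul_eq_mul, Real.inv_rpow hpos.le, Real.rpow_sub hpos, Real.rpow_one,
      inv_mul_eq_div]

theorem mul_add_rpow_neg_le {x δ : ℝ} (hx : 0 ≤ x) (hδ : 0 < δ) (hp : 0 < p) :
    x * (x ^ (1 / (1 + p)) + δ) ^ (-p) ≤ x ^ (1 / (1 + p)) := by
  have hexp : 1 + 1 / (1 + p) * -p = 1 / (1 + p) := by
    field_simp
    ring
  rcases hx.eq_or_lt with rfl | hx
  · simpa using Real.rpow_nonneg le_rfl _
  calc x * (x ^ (1 / (1 + p)) + δ) ^ (-p) ≤ x * (x ^ (1 / (1 + p))) ^ (-p) := by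
        gcongr ?_ * ?_
        exact Real.rpow_le_rpow_of_nonpos (by positivity) (by linarith) (by linarith)
    _ = x ^ (1 / (1 + p)) := by
        have hne : 1 + 1 / (1 + p) * -p ≠ 0 := by
          rw [hexp]
          positivity
        rw [← Real.rpow_mul hx.le, ← Real.rpow_one_add' hx.le hne, hexp]

theorem trace_rpow_neg_mul_le (hp : 0 < p) {W : Matrix n n ℂ} (hW : W.PosSemidef) {δ : ℝ}
    (hδ : 0 < δ) : ((W ^ (1 / (1 + p)) + algebraMap ℝ _ δ) ^ (-p) * W).trace.re ≤
      (W ^ (1 / (1 + p))).trace.re := by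
  have hcont (f : ℝ → ℝ) : ContinuousOn f (spectrum ℝ W) := W.finite_real_spectrum.continuousOn f
  have hκ : W ^ (1 / (1 + p)) + algebraMap ℝ _ δ = cfc (fun x : ℝ => x ^ (1 / (1 + p)) + δ) W := by
    rw [cfc_add_const _ _ _ (hcont _), rpow_eq_cfc hW]
  have hκpos : (W ^ (1 / (1 + p)) + algebraMap ℝ _ δ).PosSemidef :=
    (posSemidef_rpow _ _).add (algebraMap_nonneg _ hδ.le).posSemidef
  have hprod : (W ^ (1 / (1 + p)) + algebraMap ℝ _ δ) ^ (-p) * W =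
      cfc (fun x : ℝ => x * (x ^ (1 / (1 + p)) + δ) ^ (-p)) W := by
    rw [rpow_eq_cfc hκpos, hκ, ← cfc_comp' _ _ W (W.finite_real_spectrum.image _ |>.continuousOn _)
      (hcont _)]
    nth_rw 2 [← cfc_id' ℝ W]
    rw [← cfc_mul _ _ W (hcont _) (hcont _)]
    simp only [mul_comm]
  rw [hprod, trace_cfc _ hW.isHermitian, trace_rpow hW, ← Complex.ofReal_sum, ← Complex.ofReal_sum]
  exact Finset.sum_le_sum fun i _ => mul_add_rpow_neg_le (hW.eigenvalues_nonneg i) hδ hp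

theorem exists_posDef_trace_rpow_neg_mul_lt [Nonempty n] (hp : 0 < p) {W : Matrix n n ℂ}
    (hW : W.PosSemidef) {b : ℝ} (hb : (W ^ (1 / (1 + p))).trace.re ^ (1 + p) < b) :
    ∃ κ ∈ densityMatrices n, κ.PosDef ∧ (κ ^ (-p) * W).trace.re < b := by
  set Q := (W ^ (1 / (1 + p))).trace.re with hQ
  have hQ0 : 0 ≤ Q := trace_re_nonneg (posSemidef_rpow _ _)
  obtain ⟨δ, hδb, hδ⟩ : ∃ δ : ℝ, (Q + δ * Fintype.card n) ^ p * Q < b ∧ 0 < δ := by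
    have hcont : Continuous fun δ : ℝ => (Q + δ * Fintype.card n) ^ p * Q :=
      ((by fun_prop : Continuous fun δ : ℝ => Q + δ * Fintype.card n).rpow_const
        fun _ => Or.inr hp.le).mul_const Q
    have hlt : (Q + 0 * Fintype.card n) ^ p * Q < b := by
      rwa [zero_mul, add_zero, ← Real.rpow_add_one' hQ0 (by positivity), add_comm p]
    exact ((hcont.continuousAt.eventually_lt_const hlt).filter_mono nhdsWithin_le_nhds |>.and
      self_mem_nhdsWithin).exists (f := nhdsWithin 0 (Set.Ioi 0))
  set κ := W ^ (1 / (1 + p)) + algebraMap ℝ (Matrix n n ℂ) δ with hκ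
  have hκpos : κ.PosDef := by
    rw [hκ, Algebra.algebraMap_eq_smul_one]
    exact (PosDef.one.smul hδ).posSemidef_add (posSemidef_rpow _ _)
  have htr : κ.trace.re = Q + δ * Fintype.card n := by
    simp [hκ, hQ, Matrix.algebraMap_eq_diagonal, mul_comm]
  have htr0 : 0 < κ.trace.re := htr ▸ by positivity
  refine ⟨κ.trace.re⁻¹ • κ, inv_trace_smul_mem_densityMatrices hκpos.posSemidef htr0,
    hκpos.smul (by positivity), ?_⟩
  rw [smul_rpow hκpos.posSemidef (by positivity), Matrix.smul_mul, trace_smul, Complex.smul_re,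
    smul_eq_mul, Real.inv_rpow htr0.le, Real.rpow_neg htr0.le, inv_inv, htr]
  refine lt_of_le_of_lt ?_ hδb
  gcongr
  exact trace_rpow_neg_mul_le hp hW hδ

theorem exists_posDef_rpow_le [Nonempty n] (hp : p ∈ Set.Icc (0 : ℝ) 1) {Ω : Matrix n n ℂ}
    (hΩ : Ω ∈ densityMatrices n) {r : ℝ} (hr : 1 < r) :
    ∃ Ω' ∈ densityMatrices n, Ω'.PosDef ∧ Ω ^ p ≤ r ^ p • Ω' ^ p := by
  set π : Matrix n n ℂ := (Fintype.card n : ℝ)⁻¹ • 1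
  have hπ : π ∈ densityMatrices n := inv_card_smul_one_mem_densityMatrices
  have hπd : π.PosDef := PosDef.one.smul (by positivity)
  have hr1 : 0 < 1 - r⁻¹ := sub_pos.mpr (inv_lt_one_of_one_lt₀ hr)
  have hΩ' : (r⁻¹ • Ω + (1 - r⁻¹) • π).PosDef :=
    ((hπd.smul hr1).posSemidef_add (hΩ.1.smul (by positivity)))
  refine ⟨_, convex_densityMatrices hΩ hπ (by positivity) hr1.le (by ring), hΩ', ?_⟩
  rw [← smul_rpow hΩ'.posSemidef (by positivity)]
  refine CFC.rpow_le_rpow hp ?_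
  rw [smul_add, smul_smul, mul_inv_cancel₀ (by positivity), one_smul]
  exact le_add_of_nonneg_right ((hπd.posSemidef.smul hr1.le).smul (by positivity)).nonneg

theorem le_mul_of_powerPairing_le [Nonempty k] [Nonempty l] (hp : p ∈ Set.Ioo (0 : ℝ) 1)
    (R : Matrix m m ℂ →ₚ[ℂ] Matrix k k ℂ) (S : Matrix n n ℂ →ₚ[ℂ] Matrix l l ℂ)
    {F : Matrix k k ℂ → Matrix n n ℂ} {G : Matrix l l ℂ → Matrix m m ℂ} {a b C : ℝ} (hC : 0 ≤ C)
    (hF : ∀ Ω ∈ densityMatrices k, Ω.PosDef → F Ω ∈ densityMatrices n ∧ (F Ω).PosDef)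
    (hG : ∀ κ ∈ densityMatrices l, κ.PosDef → G κ ∈ densityMatrices m ∧ (G κ).PosDef)
    (hFG : ∀ Ω κ, Ω.PosDef → κ.PosDef →
      powerPairing R p Ω (G κ) ≤ C * (κ ^ (-p) * S (F Ω ^ p)).trace.re)
    (ha : ∀ σ ∈ densityMatrices m, σ.PosDef →
      a ≤ (R (σ ^ (-p)) ^ (1 / (1 - p))).trace.re ^ (1 - p))
    (hb : ∀ τ ∈ densityMatrices n, τ.PosDef →
      (S (τ ^ p) ^ (1 / (1 + p))).trace.re ^ (1 + p) ≤ b) : a ≤ C * b := by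
  have hR (σ : Matrix m m ℂ) : (R (σ ^ (-p))).PosSemidef :=
    (map_nonneg R (CFC.rpow_nonneg (a := σ) (y := -p))).posSemidef
  obtain ⟨Ω, hΩ, hΩle⟩ := exists_forall_le_powerPairing R ⟨hp.1, hp.2.le⟩ fun σ hσ hσd => by
    obtain ⟨Ω, hΩ, heq⟩ := exists_trace_rpow_mul_eq hp (hR σ)
    exact ⟨Ω, hΩ, (ha σ hσ hσd).trans_eq heq.symm⟩
  have hbound (r : ℝ) (hr : 1 < r) (b' : ℝ) (hb' : b < b') : a ≤ r ^ p * (C * b') := by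
    obtain ⟨Ω', hΩ', hΩd, hle⟩ := exists_posDef_rpow_le ⟨hp.1.le, hp.2.le⟩ hΩ hr
    obtain ⟨hτ, hτd⟩ := hF Ω' hΩ' hΩd
    obtain ⟨κ, hκ, hκd, hlt⟩ := exists_posDef_trace_rpow_neg_mul_lt hp.1
      (map_nonneg S (CFC.rpow_nonneg (a := F Ω') (y := p))).posSemidef
      ((hb _ hτ hτd).trans_lt hb')
    obtain ⟨hσ, hσd⟩ := hG κ hκ hκd
    calc a ≤ powerPairing R p Ω (G κ) := hΩle _ hσ hσd
      _ ≤ r ^ p * powerPairing R p Ω' (G κ) := by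
          simpa [powerPairing] using trace_mul_re_mono hle (hR (G κ))
      _ ≤ r ^ p * (C * b') := by
          gcongr
          exact (hFG Ω' κ hΩd hκd).trans (by gcongr)
  have hbound_one (b' : ℝ) (hb' : b < b') : a ≤ C * b' := by
    have hcont : ContinuousWithinAt (fun r : ℝ => r ^ p * (C * b')) (Set.Ioi 1) 1 :=
      ((Real.continuousAt_rpow_const 1 p (Or.inl one_ne_zero)).mul_const _).continuousWithinAt
    simpa using ge_of_tendsto hcont (eventually_mem_nhdsWithin.mono fun r hr => hbound r hr b' hb')
  have hcont : ContinuousWithinAt (fun b' : ℝ => C * b') (Set.Ioi b) b := by fun_prop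
  exact ge_of_tendsto hcont (eventually_mem_nhdsWithin.mono hbound_one)

end Duality

section PartialTrace

variable {a b : Type*} [Fintype a]

theorem trFst_eq_sum_submatrix (M : Matrix (a × b) (a × b) ℂ) :
    trFst M = ∑ i, M.submatrix (i, ·) (i, ·) := by
  ext j j'
  simp [trFst, Matrix.sum_apply]

theorem posSemidef_trFst {M : Matrix (a × b) (a × b) ℂ} (hM : M.PosSemidef) :
    (trFst M).PosSemidef := by
  rw [trFst_eq_sum_submatrix]
  exact posSemidef_sum _ fun i _ => hM.submatrix _

theorem posDef_trFst [Nonempty a] {M : Matrix (a × b) (a × b) ℂ} (hM : M.PosDef) :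
    (trFst M).PosDef := by
  rw [trFst_eq_sum_submatrix]
  exact posDef_sum Finset.univ_nonempty fun i _ => hM.submatrix (Prod.mk_right_injective i)

variable [Fintype b]

theorem trace_trFst (M : Matrix (a × b) (a × b) ℂ) : (trFst M).trace = M.trace := by
  simp [trFst, trace, Fintype.sum_prod_type_right]

theorem trFst_mem_densityMatrices {M : Matrix (a × b) (a × b) ℂ}
    (hM : M ∈ densityMatrices (a × b)) : trFst M ∈ densityMatrices b :=
  ⟨posSemidef_trFst hM.1, (trace_trFst M).trans hM.2⟩

theorem trFst_one_kronecker_conj [DecidableEq a] (M : Matrix (a × b) (a × b) ℂ) (s : Matrix b b ℂ) :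
    trFst (((1 : Matrix a a ℂ) ⊗ₖ s) * M * ((1 : Matrix a a ℂ) ⊗ₖ s)) = s * trFst M * s := by
  ext b b'
  simp only [trFst, of_apply, mul_apply, kroneckerMap_apply, one_apply, Fintype.sum_prod_type,
    ite_mul, one_mul, zero_mul, mul_ite, mul_zero, Finset.sum_ite_irrel, Finset.sum_const_zero,
    Finset.sum_ite_eq, Finset.sum_ite_eq', Finset.mem_univ, if_true, Finset.sum_mul, Finset.mul_sum]
  rw [Finset.sum_comm]
  exact Finset.sum_congr rfl fun _ _ => Finset.sum_comm

end PartialTrace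

section CopyOverlap

variable {A X Y I J : Type*} [DecidableEq X] [DecidableEq Y]

/-- The operator `T = V_Y V_Xᴴ`, where `V_X` and `V_Y` are the isometries `copyIsometry` of two
measurements and `G y x` is the product of the `y`-th operator of the second and the adjoint of the
`x`-th operator of the first. Both outcomes are copied, once next to `A` and once next to `B`
(resp. `C`). -/
def copyOverlap (B C : Type*) [DecidableEq B] [DecidableEq C] (G : Y → X → Matrix A A ℂ) :
    Matrix (((Y × A) × B) × (Y × C)) (((X × A) × C) × (X × B)) ℂ :=
  Matrix.of fun p q => if p.1.1.1 = p.2.1 ∧ q.1.1.1 = q.2.1 ∧ p.1.2 = q.2.2 ∧ p.2.2 = q.1.2 then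
    G p.2.1 q.2.1 p.1.1.2 q.1.1.2 else 0

variable {B C : Type*} [DecidableEq B] [DecidableEq C] [Fintype A] [DecidableEq A] [Fintype B]
  [Fintype C] [Fintype X] [Fintype Y]

theorem mul_conjTranspose_le_one {m n : Type*} [Fintype m] [DecidableEq m] [Fintype n]
    [DecidableEq n] {u : Matrix m n ℂ} (hu : uᴴ * u = 1) : u * uᴴ ≤ 1 := by
  have h : 1 - u * uᴴ = (1 - u * uᴴ)ᴴ * (1 - u * uᴴ) := by
    have huu : u * uᴴ * (u * uᴴ) = u * uᴴ := by
      rw [Matrix.mul_assoc, ← Matrix.mul_assoc uᴴ, hu, Matrix.one_mul]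
    simp [Matrix.sub_mul, Matrix.mul_sub, huu]
  rw [Matrix.le_iff, h]
  exact posSemidef_conjTranspose_mul_self _

theorem posSemidef_blockDiagonal {o m : Type*} [Finite o] [DecidableEq o] [Finite m]
    {M : o → Matrix m m ℂ} (hM : ∀ k, (M k).PosSemidef) : (blockDiagonal M).PosSemidef := by
  classical
  have := Fintype.ofFinite o
  have := Fintype.ofFinite m
  choose S hS using fun k => CStarAlgebra.nonneg_iff_eq_star_mul_self.mp (hM k).nonneg
  rw [funext hS]
  simp only [star_eq_conjTranspose, blockDiagonal_mul, ← blockDiagonal_conjTranspose]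
  exact posSemidef_conjTranspose_mul_self _

theorem blockDiagonal_mul_conjTranspose_le {o m : Type*} [Fintype o] [DecidableEq o] [Fintype m]
    [DecidableEq m] {M : o → Matrix m m ℂ} {r : ℝ} (hM : ∀ k, M k * (M k)ᴴ ≤ r • 1) :
    blockDiagonal M * (blockDiagonal M)ᴴ ≤ r • 1 := by
  rw [Matrix.le_iff, blockDiagonal_conjTranspose, ← blockDiagonal_mul, ← blockDiagonal_one,
    ← blockDiagonal_smul, ← blockDiagonal_sub]
  exact posSemidef_blockDiagonal fun k => Matrix.le_iff.mp (hM k)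

theorem copyOverlap_intertwine (G : Y → X → Matrix A A ℂ) (s : Matrix B B ℂ) (t : Matrix C C ℂ)
    (P : Matrix I ((Y × A) × B) ℂ) (Q : Matrix ((X × A) × C) J ℂ) :
    (P ⊗ₖ ((1 : Matrix Y Y ℂ) ⊗ₖ t)) * copyOverlap B C G * (Q ⊗ₖ ((1 : Matrix X X ℂ) ⊗ₖ s)) =
      ((P * ((1 : Matrix (Y × A) (Y × A) ℂ) ⊗ₖ s)) ⊗ₖ (1 : Matrix (Y × C) (Y × C) ℂ)) *
        copyOverlap B C G *
        ((((1 : Matrix (X × A) (X × A) ℂ) ⊗ₖ t) * Q) ⊗ₖ (1 : Matrix (X × B) (X × B) ℂ)) := by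
  ext ⟨i, y, c⟩ ⟨j, x, b⟩
  simp only [copyOverlap, of_apply, mul_apply, kroneckerMap_apply, one_apply,
    Fintype.sum_prod_type, ite_mul, one_mul, zero_mul, mul_ite, mul_one, mul_zero, Prod.mk.injEq,
    ite_and, Finset.sum_ite_irrel, Finset.sum_const_zero, Finset.sum_ite_eq, Finset.sum_ite_eq',
    Finset.mem_univ, if_true]
  refine Finset.sum_congr rfl fun a _ => ?_
  simp only [Finset.sum_mul, Finset.mul_sum]
  refine Finset.sum_congr rfl fun _ _ => ?_
  rw [Finset.sum_comm]
  exact Finset.sum_congr rfl fun _ _ => Finset.sum_congr rfl fun _ _ => by ring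

theorem conjTranspose_mul_self_eq_one_of_trFst {I S B O Q W : Type*} [Fintype I] [Fintype S]
    [Finite O] [DecidableEq O] [DecidableEq B] [Fintype Q] [DecidableEq W]
    (e : Q ≃ (I × S) × O) (f : W ≃ O × B) {k : Matrix I (S × B) ℂ} (hk : trFst (kᴴ * k) = 1)
    {v : Matrix Q W ℂ} (hv : ∀ q w, v q w =
      if (e q).2 = (f w).1 then k (e q).1.1 ((e q).1.2, (f w).2) else 0) : vᴴ * v = 1 := by
  have := Fintype.ofFinite O
  ext w w'
  have h := congr_fun (congr_fun hk (f w).2) (f w').2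
  simp only [trFst, of_apply, mul_apply, conjTranspose_apply] at h
  simp only [mul_apply, conjTranspose_apply, hv, apply_ite star, star_zero, ite_mul, mul_ite,
    zero_mul, mul_zero]
  rw [e.sum_comp fun x => if x.2 = (f w').1 then if x.2 = (f w).1 then
    star (k x.1.1 (x.1.2, (f w).2)) * k x.1.1 (x.1.2, (f w').2) else 0 else 0]
  have hone : (1 : Matrix W W ℂ) w w' =
      if (f w').1 = (f w).1 then (1 : Matrix B B ℂ) (f w).2 (f w').2 else 0 := by
    simp only [one_apply, ← f.injective.eq_iff, Prod.ext_iff, ite_and, eq_comm (a := (f w').1)]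
  simp only [hone, ← h, Fintype.sum_prod_type, Finset.sum_ite_eq', Finset.mem_univ, if_true]
  split_ifs
  · exact Finset.sum_comm
  · simp

theorem compress_copyOverlap_mul_conjTranspose_le [Fintype I] [DecidableEq I] [Fintype J]
    (G : Y → X → Matrix A A ℂ) {r : ℝ}
    (hG : ∀ y x, (G y x)ᴴ * G y x ≤ r • 1) {k : Matrix I ((Y × A) × B) ℂ}
    {l : Matrix ((X × A) × C) J ℂ} (hk : trFst (kᴴ * k) = 1) (hl : trFst (l * lᴴ) = 1) :
    ((k ⊗ₖ (1 : Matrix (Y × C) (Y × C) ℂ)) * copyOverlap B C G *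
        (l ⊗ₖ (1 : Matrix (X × B) (X × B) ℂ))) *
      ((k ⊗ₖ (1 : Matrix (Y × C) (Y × C) ℂ)) * copyOverlap B C G *
        (l ⊗ₖ (1 : Matrix (X × B) (X × B) ℂ)))ᴴ ≤ r • 1 := by
  classical
  set K := (k ⊗ₖ (1 : Matrix (Y × C) (Y × C) ℂ)) * copyOverlap B C G *
    (l ⊗ₖ (1 : Matrix (X × B) (X × B) ℂ)) with hK
  -- For fixed `i`, `y`, `j`, `x` the compression acts on `A` alone as `G y x`, hence it is block
  -- diagonal between two isometries.
  let u : Matrix (A × ((I × Y) × (J × X))) (J × (X × B)) ℂ := of fun q w =>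
    if q.2.2 = (w.1, w.2.1) then k q.2.1.1 ((q.2.1.2, q.1), w.2.2) else 0
  let v : Matrix (A × ((I × Y) × (J × X))) (I × (Y × C)) ℂ := of fun q w =>
    if q.2.1 = (w.1, w.2.1) then lᴴ q.2.2.1 ((q.2.2.2, q.1), w.2.2) else 0
  let D := blockDiagonal fun o : (I × Y) × (J × X) => (G o.1.2 o.2.2)ᵀ
  have hu : uᴴ * u = 1 := conjTranspose_mul_self_eq_one_of_trFst
    (e := ⟨fun q => ((q.2.1.1, q.2.1.2, q.1), q.2.2),
      fun q => (q.1.2.2, (q.1.1, q.1.2.1), q.2), fun _ => rfl, fun _ => rfl⟩)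
    (Equiv.prodAssoc J X B).symm hk fun _ _ => rfl
  have hv : vᴴ * v = 1 := conjTranspose_mul_self_eq_one_of_trFst
    (e := ⟨fun q => ((q.2.2.1, q.2.2.2, q.1), q.2.1),
      fun q => (q.1.2.2, q.2, (q.1.1, q.1.2.1)), fun _ => rfl, fun _ => rfl⟩)
    (Equiv.prodAssoc I Y C).symm (k := lᴴ) (by rwa [conjTranspose_conjTranspose]) fun _ _ => rfl
  have hfactor : K = vᴴ * D * u := by
    ext ⟨i, y, c⟩ ⟨j, x, b⟩
    simp only [hK, copyOverlap, u, v, D, blockDiagonal_apply, transpose_apply, of_apply, mul_apply,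
      conjTranspose_apply, kroneckerMap_apply, one_apply, Fintype.sum_prod_type, Prod.mk.injEq,
      ite_and, ite_mul, zero_mul, mul_ite, mul_one, mul_zero, apply_ite star, star_zero, star_star,
      Finset.sum_ite_irrel, Finset.sum_const_zero, Finset.sum_ite_eq, Finset.sum_ite_eq',
      Finset.mem_univ, if_true, Finset.sum_mul]
    rw [Finset.sum_comm]
    exact Finset.sum_congr rfl fun _ _ => Finset.sum_congr rfl fun _ _ => by ring
  have hD : D * Dᴴ ≤ r • 1 := blockDiagonal_mul_conjTranspose_le fun o => by
    have h := (Matrix.le_iff.mp (hG o.1.2 o.2.2)).transpose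
    rwa [transpose_sub, transpose_mul, transpose_smul, transpose_one, ← Matrix.le_iff] at h
  calc K * Kᴴ = (Dᴴ * v)ᴴ * (u * uᴴ) * (Dᴴ * v) := by simp [hfactor, Matrix.mul_assoc]
    _ ≤ (Dᴴ * v)ᴴ * 1 * (Dᴴ * v) := conjTranspose_mul_mul_mono (mul_conjTranspose_le_one hu) _
    _ = vᴴ * (D * Dᴴ) * v := by simp [Matrix.mul_assoc]
    _ ≤ vᴴ * (r • 1) * v := conjTranspose_mul_mul_mono hD _
    _ = r • 1 := by simp [hv]

end CopyOverlap

section Endpoint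

variable {A B C X Y : Type*} [Fintype A] [DecidableEq A] [Fintype B] [DecidableEq B] [Fintype C]
  [DecidableEq C] [Fintype X] [DecidableEq X] [Fintype Y] [DecidableEq Y]

theorem conjTranspose_rpow {n : Type*} [Fintype n] [DecidableEq n] (A : Matrix n n ℂ) (t : ℝ) :
    (A ^ t)ᴴ = A ^ t :=
  (posSemidef_rpow A t).isHermitian

theorem trFst_conjTranspose_mul_self_rpow_half {a b : Type*} [Fintype a] [DecidableEq a]
    [Nonempty a] [Fintype b] [DecidableEq b] {M : Matrix (a × b) (a × b) ℂ} (hM : M.PosDef) :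
    trFst ((M ^ (1 / 2 : ℝ) * ((1 : Matrix a a ℂ) ⊗ₖ (trFst M ^ (-(1 / 2) : ℝ))))ᴴ *
      (M ^ (1 / 2 : ℝ) * ((1 : Matrix a a ℂ) ⊗ₖ (trFst M ^ (-(1 / 2) : ℝ))))) = 1 := by
  set σ := trFst M with hσ
  have hσpos : σ.PosDef := posDef_trFst hM
  rw [conjTranspose_mul, conjTranspose_kronecker, conjTranspose_one, conjTranspose_rpow,
    conjTranspose_rpow, Matrix.mul_assoc, ← Matrix.mul_assoc (M ^ (1 / 2 : ℝ)),
    rpow_half_mul_rpow_half hM.posSemidef, ← Matrix.mul_assoc, trFst_one_kronecker_conj, ← hσ]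
  nth_rw 2 [← rpow_half_mul_rpow_half hσpos.posSemidef]
  rw [← Matrix.mul_assoc, CFC.rpow_neg_mul_rpow _ hσpos.isStrictlyPositive, Matrix.one_mul,
    CFC.rpow_mul_rpow_neg _ hσpos.isStrictlyPositive]

theorem copyOverlap_conj_le [Nonempty A] [Nonempty X] [Nonempty Y] (G : Y → X → Matrix A A ℂ)
    {r : ℝ} (hG : ∀ y x, (G y x)ᴴ * G y x ≤ r • 1) {κ : Matrix ((Y × A) × B) ((Y × A) × B) ℂ}
    {Ω : Matrix ((X × A) × C) ((X × A) × C) ℂ} (hκ : κ.PosDef) (hΩ : Ω.PosDef) :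
    copyOverlap B C G * (Ω ⊗ₖ ((1 : Matrix X X ℂ) ⊗ₖ (trFst κ ^ (-1 : ℝ)))) *
      (copyOverlap B C G)ᴴ ≤ r • ((κ ^ (-1 : ℝ)) ⊗ₖ ((1 : Matrix Y Y ℂ) ⊗ₖ trFst Ω)) := by
  have hσ := posDef_trFst hκ
  have hτ := posDef_trFst hΩ
  have hk := trFst_conjTranspose_mul_self_rpow_half hκ
  have hl := trFst_conjTranspose_mul_self_rpow_half hΩ
  set σ := trFst κ
  set τ := trFst Ω
  set T := copyOverlap B C G
  set k := κ ^ (1 / 2 : ℝ) * ((1 : Matrix (Y × A) (Y × A) ℂ) ⊗ₖ (σ ^ (-(1 / 2) : ℝ)))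
  set l := Ω ^ (1 / 2 : ℝ) * ((1 : Matrix (X × A) (X × A) ℂ) ⊗ₖ (τ ^ (-(1 / 2) : ℝ)))
  set q := (Ω ^ (1 / 2 : ℝ)) ⊗ₖ ((1 : Matrix X X ℂ) ⊗ₖ (σ ^ (-(1 / 2) : ℝ)))
  set R := (κ ^ (-(1 / 2) : ℝ)) ⊗ₖ ((1 : Matrix Y Y ℂ) ⊗ₖ (τ ^ (1 / 2 : ℝ)))
  set S := (κ ^ (1 / 2 : ℝ)) ⊗ₖ ((1 : Matrix Y Y ℂ) ⊗ₖ (τ ^ (-(1 / 2) : ℝ)))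
  set K := (k ⊗ₖ (1 : Matrix (Y × C) (Y × C) ℂ)) * T * (lᴴ ⊗ₖ (1 : Matrix (X × B) (X × B) ℂ))
  have hK : S * T * q = K := by
    rw [copyOverlap_intertwine, ← conjTranspose_rpow Ω, ← conjTranspose_rpow τ,
      ← conjTranspose_one (n := X × A), ← conjTranspose_kronecker, ← conjTranspose_mul]
  have hRS : R * S = 1 := by
    rw [← mul_kronecker_mul, ← mul_kronecker_mul, CFC.rpow_neg_mul_rpow _ hκ.isStrictlyPositive,
      CFC.rpow_mul_rpow_neg _ hτ.isStrictlyPositive, Matrix.one_mul, one_kronecker_one,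
      one_kronecker_one]
  have hq : q * qᴴ = (Ω ⊗ₖ ((1 : Matrix X X ℂ) ⊗ₖ (σ ^ (-1 : ℝ)))) := by
    rw [conjTranspose_kronecker, conjTranspose_kronecker, conjTranspose_one, conjTranspose_rpow,
      conjTranspose_rpow, ← mul_kronecker_mul, ← mul_kronecker_mul, Matrix.one_mul,
      rpow_half_mul_rpow_half hΩ.posSemidef, ← CFC.rpow_add hσ.isUnit, ← neg_add, add_halves]
  have hR : R * Rᴴ = ((κ ^ (-1 : ℝ)) ⊗ₖ ((1 : Matrix Y Y ℂ) ⊗ₖ τ)) := by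
    rw [conjTranspose_kronecker, conjTranspose_kronecker, conjTranspose_one, conjTranspose_rpow,
      conjTranspose_rpow, ← mul_kronecker_mul, ← mul_kronecker_mul, Matrix.one_mul,
      rpow_half_mul_rpow_half hτ.posSemidef, ← CFC.rpow_add hκ.isUnit, ← neg_add, add_halves]
  have hTq : T * q = R * K := by
    rw [← hK, Matrix.mul_assoc S, ← Matrix.mul_assoc R, hRS, Matrix.one_mul]
  calc T * (Ω ⊗ₖ ((1 : Matrix X X ℂ) ⊗ₖ (σ ^ (-1 : ℝ)))) * Tᴴ
      = Rᴴᴴ * (K * Kᴴ) * Rᴴ := by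
        rw [← hq, ← Matrix.mul_assoc, hTq, Matrix.mul_assoc (R * K), ← conjTranspose_mul, hTq]
        simp [Matrix.mul_assoc]
    _ ≤ Rᴴᴴ * (r • 1) * Rᴴ := conjTranspose_mul_mul_mono
        (compress_copyOverlap_mul_conjTranspose_le G hG hk (by rwa [conjTranspose_conjTranspose])) _
    _ = r • ((κ ^ (-1 : ℝ)) ⊗ₖ ((1 : Matrix Y Y ℂ) ⊗ₖ τ)) := by simp [← hR]

end Endpoint

section CopyIsometry

/-- The positive map `s ↦ (Vᴴ (1 ⊗ s) V)ᵀ`. If `V` reshapes a vector `v`, then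
`⟨v, (Ω ⊗ (1 ⊗ s)) v⟩ = tr (Ω (Vᴴ (1 ⊗ s) V)ᵀ)`. -/
noncomputable def reshapedCompression {B X k : Type*} [Fintype B] [Fintype X] [DecidableEq X]
    [Fintype k] (V : Matrix (X × B) k ℂ) : Matrix B B ℂ →ₚ[ℂ] Matrix k k ℂ :=
  PositiveLinearMap.mk₀
    { toFun := fun s => (Vᴴ * ((1 : Matrix X X ℂ) ⊗ₖ s) * V)ᵀ
      map_add' := fun s t => by
        rw [kronecker_add, Matrix.mul_add, Matrix.add_mul, transpose_add]
      map_smul' := fun a s => by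
        rw [kronecker_smul, Matrix.mul_smul, Matrix.smul_mul, transpose_smul, RingHom.id_apply] }
    fun _ hs =>
      ((PosSemidef.one.kronecker hs.posSemidef).conjTranspose_mul_mul_same V).transpose.nonneg

theorem star_vec_dotProduct_kronecker_mulVec_vec {B X k : Type*} [Fintype B] [Fintype X]
    [DecidableEq X] [Fintype k] (V : Matrix (X × B) k ℂ) (Ω : Matrix k k ℂ) (s : Matrix B B ℂ) :
    star V.vec ⬝ᵥ (Ω ⊗ₖ ((1 : Matrix X X ℂ) ⊗ₖ s)) *ᵥ V.vec =
      (Ω * reshapedCompression V s).trace := by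
  have h : reshapedCompression V s = (Vᴴ * ((1 : Matrix X X ℂ) ⊗ₖ s) * V)ᵀ := rfl
  rw [kronecker_mulVec_vec, star_vec_dotProduct_vec, h, ← trace_transpose (Ω * _),
    transpose_mul, transpose_transpose, Matrix.mul_assoc, Matrix.mul_assoc, Matrix.mul_assoc]

/-- The interchange of the last two factors of a tripartite system. -/
def swapSndThird (A B C : Type*) : A × B × C ≃ A × C × B :=
  (Equiv.refl A).prodCongr (Equiv.prodComm B C)

/-- The isometry `|ψ⟩ ↦ ∑ₓ |x⟩ (mₓ ⊗ 1)|ψ⟩ |x⟩` of a measurement with operators `m x`, which keeps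
one copy of the outcome next to `A` and another one next to `B`. -/
def copyIsometry {A X : Type*} [DecidableEq X] (B C : Type*) [DecidableEq B] [DecidableEq C]
    (m : X → Matrix A A ℂ) : Matrix (((X × A) × C) × (X × B)) (A × B × C) ℂ :=
  of fun p q => if p.1.1.1 = p.2.1 ∧ p.2.2 = q.2.1 ∧ p.1.2 = q.2.2 then m p.2.1 p.1.1.2 q.1 else 0

variable {A B C X Y : Type*} [Fintype A] [Fintype B] [DecidableEq B] [Fintype C] [DecidableEq C]
  [Fintype X] [DecidableEq X] [DecidableEq Y]

theorem conjTranspose_mul_copyIsometry [DecidableEq A] {m : X → Matrix A A ℂ}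
    (hm : ∑ x, (m x)ᴴ * m x = 1) : (copyIsometry B C m)ᴴ * copyIsometry B C m = 1 := by
  ext ⟨a, b, c⟩ ⟨a', b', c'⟩
  have h := congr_fun (congr_fun hm a) a'
  simp only [Matrix.sum_apply, mul_apply, conjTranspose_apply] at h
  have hone : (1 : Matrix (A × B × C) (A × B × C) ℂ) (a, b, c) (a', b', c') =
      if b' = b then if c' = c then (1 : Matrix A A ℂ) a a' else 0 else 0 := by
    simp only [one_apply, Prod.mk.injEq, ite_and]
    split_ifs <;> simp_all
  simp only [copyIsometry, of_apply, mul_apply, conjTranspose_apply, Fintype.sum_prod_type,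
    ite_and, apply_ite star, star_zero, ite_mul, zero_mul, mul_ite, mul_zero,
    Finset.sum_ite_irrel, Finset.sum_const_zero, Finset.sum_ite_eq, Finset.sum_ite_eq',
    Finset.mem_univ, if_true, ← h, hone]

omit [Fintype X] in
theorem copyIsometry_mul_conjTranspose (m : X → Matrix A A ℂ) (n : Y → Matrix A A ℂ) :
    (copyIsometry C B n).submatrix id (swapSndThird A B C) * (copyIsometry B C m)ᴴ =
      copyOverlap B C fun y x => n y * (m x)ᴴ := by
  ext ⟨⟨⟨y, a⟩, b⟩, ⟨y', c⟩⟩ ⟨⟨⟨x, a'⟩, c'⟩, ⟨x', b'⟩⟩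
  simp only [copyIsometry, copyOverlap, swapSndThird, submatrix_apply, id, of_apply, mul_apply,
    conjTranspose_apply, Fintype.sum_prod_type, Equiv.prodCongr_apply, Equiv.coe_refl,
    Equiv.coe_prodComm, Prod.map, Prod.swap, ite_and, apply_ite star, star_zero,
    ite_mul, zero_mul, mul_ite, mul_zero, Finset.sum_ite_irrel, Finset.sum_const_zero,
    Finset.sum_ite_eq, Finset.mem_univ, if_true]
  split_ifs <;> rfl

/-- The vector `copyIsometry B C m *ᵥ ψ`, reshaped into a matrix `V`. Tracing out `A` and `C` from
the pure state `ψ` measured by `m` leaves the classical-quantum state `V Vᴴ`. -/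
def copyState (B C : Type*) [Fintype B] [DecidableEq B] [Fintype C] [DecidableEq C]
    (m : X → Matrix A A ℂ) (ψ : A × B × C → ℂ) : Matrix (X × B) ((X × A) × C) ℂ :=
  of fun p q => (copyIsometry B C m *ᵥ ψ) (q, p)

omit [Fintype X] in
theorem vec_copyState (m : X → Matrix A A ℂ) (ψ : A × B × C → ℂ) :
    (copyState B C m ψ).vec = copyIsometry B C m *ᵥ ψ := rfl

theorem copyIsometry_conj_rpow_le [DecidableEq A] [Fintype Y] [Nonempty A] [Nonempty X] [Nonempty Y]
    {m : X → Matrix A A ℂ} {n : Y → Matrix A A ℂ} (hm : ∑ x, (m x)ᴴ * m x = 1)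
    {v : Matrix (((Y × A) × B) × (Y × C)) (A × B × C) ℂ} (hv : vᴴ * v = 1)
    (hvm : v * (copyIsometry B C m)ᴴ = copyOverlap B C fun y x => n y * (m x)ᴴ)
    {r p : ℝ} (hr : 0 ≤ r) (hp : p ∈ Set.Icc 0 1)
    (hmn : ∀ y x, (n y * (m x)ᴴ)ᴴ * (n y * (m x)ᴴ) ≤ r • 1)
    {Ω : Matrix ((X × A) × C) ((X × A) × C) ℂ} {κ : Matrix ((Y × A) × B) ((Y × A) × B) ℂ}
    (hΩ : Ω.PosDef) (hκ : κ.PosDef) :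
    (copyIsometry B C m)ᴴ * ((Ω ^ p) ⊗ₖ ((1 : Matrix X X ℂ) ⊗ₖ (trFst κ ^ (-p)))) *
        copyIsometry B C m ≤
      r ^ p • (vᴴ * ((κ ^ (-p)) ⊗ₖ ((1 : Matrix Y Y ℂ) ⊗ₖ (trFst Ω ^ p))) * v) := by
  have hσ := posDef_trFst hκ
  have hτ := (posDef_trFst hΩ).posSemidef
  have hσ1 := PosSemidef.one (n := X) (R := ℂ) |>.kronecker (posSemidef_rpow (trFst κ) (-1))
  have hτ1 := PosSemidef.one (n := Y) (R := ℂ) |>.kronecker hτ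
  have hQ : (Ω ⊗ₖ ((1 : Matrix X X ℂ) ⊗ₖ (trFst κ ^ (-1 : ℝ)))) ^ p =
      (Ω ^ p) ⊗ₖ ((1 : Matrix X X ℂ) ⊗ₖ (trFst κ ^ (-p))) := by
    rw [kronecker_rpow hΩ.posSemidef hσ1, kronecker_rpow PosSemidef.one (posSemidef_rpow _ _),
      CFC.one_rpow, CFC.rpow_rpow _ _ _ (by norm_num) hσ.isStrictlyPositive, neg_one_mul]
  have hR : (r • ((κ ^ (-1 : ℝ)) ⊗ₖ ((1 : Matrix Y Y ℂ) ⊗ₖ trFst Ω))) ^ p =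
      r ^ p • ((κ ^ (-p)) ⊗ₖ ((1 : Matrix Y Y ℂ) ⊗ₖ (trFst Ω ^ p))) := by
    rw [smul_rpow ((posSemidef_rpow _ _).kronecker hτ1) hr,
      kronecker_rpow (posSemidef_rpow _ _) hτ1, kronecker_rpow PosSemidef.one hτ, CFC.one_rpow,
      CFC.rpow_rpow _ _ _ (by norm_num) hκ.isStrictlyPositive, neg_one_mul]
  rw [← hQ, ← Matrix.smul_mul, ← Matrix.mul_smul, ← hR]
  refine conj_rpow_le_conj_rpow (conjTranspose_mul_copyIsometry hm) hv
    (hΩ.posSemidef.kronecker hσ1) ?_ hp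
  rw [hvm]
  exact copyOverlap_conj_le _ hmn hκ hΩ

theorem re_star_dotProduct_conj_mulVec_mono {k l q : Type*} [Fintype k] [Fintype l] [Fintype q]
    {u : Matrix k q ℂ} {v : Matrix l q ℂ} {P : Matrix k k ℂ} {Q : Matrix l l ℂ} {t : ℝ}
    (h : uᴴ * P * u ≤ t • (vᴴ * Q * v)) (ψ : q → ℂ) :
    (star (u *ᵥ ψ) ⬝ᵥ P *ᵥ (u *ᵥ ψ)).re ≤ t * (star (v *ᵥ ψ) ⬝ᵥ Q *ᵥ (v *ᵥ ψ)).re := by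
  have hψ := Complex.re_le_re ((Matrix.le_iff.mp h).dotProduct_mulVec_nonneg ψ)
  rw [sub_mulVec, dotProduct_sub, smul_mulVec, dotProduct_smul, Complex.sub_re, Complex.smul_re,
    Complex.zero_re, smul_eq_mul, sub_nonneg] at hψ
  simpa only [star_mulVec, ← dotProduct_mulVec, mulVec_mulVec, Matrix.mul_assoc] using hψ

theorem powerPairing_copyState_le [DecidableEq A] [Fintype Y] [Nonempty A] [Nonempty X] [Nonempty Y]
    {m : X → Matrix A A ℂ} {n : Y → Matrix A A ℂ} (hm : ∑ x, (m x)ᴴ * m x = 1)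
    (hn : ∑ y, (n y)ᴴ * n y = 1) {r p : ℝ} (hr : 0 ≤ r) (hp : p ∈ Set.Icc 0 1)
    (hmn : ∀ y x, (n y * (m x)ᴴ)ᴴ * (n y * (m x)ᴴ) ≤ r • 1) (ψ : A × B × C → ℂ)
    {Ω : Matrix ((X × A) × C) ((X × A) × C) ℂ} {κ : Matrix ((Y × A) × B) ((Y × A) × B) ℂ}
    (hΩ : Ω.PosDef) (hκ : κ.PosDef) :
    powerPairing (reshapedCompression (copyState B C m ψ)) p Ω (trFst κ) ≤
      r ^ p * (κ ^ (-p) * reshapedCompression (copyState C B n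
        (ψ ∘ (swapSndThird A B C).symm)) (trFst Ω ^ p)).trace.re := by
  set e := swapSndThird A B C
  set v := (copyIsometry C B n).submatrix id e
  have hv : vᴴ * v = 1 := by
    rw [conjTranspose_submatrix, ← submatrix_mul _ _ _ _ _ Function.bijective_id,
      conjTranspose_mul_copyIsometry hn, submatrix_one_equiv]
  have hvψ : v *ᵥ ψ = (copyState C B n (ψ ∘ e.symm)).vec :=
    submatrix_mulVec_equiv (copyIsometry C B n) ψ id e
  have hle := copyIsometry_conj_rpow_le hm hv (copyIsometry_mul_conjTranspose m n) hr hp hmn hΩ hκ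
  have hψ := re_star_dotProduct_conj_mulVec_mono hle ψ
  rwa [hvψ, ← vec_copyState, star_vec_dotProduct_kronecker_mulVec_vec,
    star_vec_dotProduct_kronecker_mulVec_vec] at hψ

theorem le_mul_of_copyState [DecidableEq A] [Fintype Y] [Nonempty A] [Nonempty B] [Nonempty C]
    [Nonempty X] [Nonempty Y] {m : X → Matrix A A ℂ} {n : Y → Matrix A A ℂ}
    (hm : ∑ x, (m x)ᴴ * m x = 1) (hn : ∑ y, (n y)ᴴ * n y = 1) {r p a b : ℝ} (hr : 0 ≤ r)
    (hp : p ∈ Set.Ioo 0 1) (hmn : ∀ y x, (n y * (m x)ᴴ)ᴴ * (n y * (m x)ᴴ) ≤ r • 1)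
    (ψ : A × B × C → ℂ)
    (ha : ∀ σ ∈ densityMatrices B, σ.PosDef →
      a ≤ (reshapedCompression (copyState B C m ψ) (σ ^ (-p)) ^ (1 / (1 - p))).trace.re ^ (1 - p))
    (hb : ∀ τ ∈ densityMatrices C, τ.PosDef →
      (reshapedCompression (copyState C B n
        (ψ ∘ (swapSndThird A B C).symm)) (τ ^ p) ^
          (1 / (1 + p))).trace.re ^ (1 + p) ≤ b) : a ≤ r ^ p * b :=
  le_mul_of_powerPairing_le hp _ _ (Real.rpow_nonneg hr p)
    (fun _ hΩ hΩ' => ⟨trFst_mem_densityMatrices hΩ, posDef_trFst hΩ'⟩)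
    (fun _ hκ hκ' => ⟨trFst_mem_densityMatrices hκ, posDef_trFst hκ'⟩)
    (fun _ _ hΩ hκ => powerPairing_copyState_le hm hn hr (Set.Ioo_subset_Icc_self hp) hmn ψ hΩ hκ)
    ha hb

end CopyIsometry

section Entropy

variable {n : Type*} [Fintype n] [DecidableEq n]

theorem matRpow_eq_rpow {A : Matrix n n ℂ} (hA : A.PosSemidef) {t : ℝ} (ht : t ≠ 0) :
    matRpow A t = A ^ t := by
  have h (x : ℝ) : (if x = 0 then 0 else x ^ t) = x ^ t := by
    split_ifs with hx
    · rw [hx, Real.zero_rpow ht]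
    · rfl
  simp only [matRpow, dif_pos hA.isHermitian, h, rpow_eq_conj_diagonal hA, star_eq_conjTranspose]

theorem spectrum_subset_Icc_of_mem_densityMatrices {σ : Matrix n n ℂ}
    (hσ : σ ∈ densityMatrices n) : spectrum ℝ σ ⊆ Set.Icc 0 1 := fun x hx =>
  ⟨spectrum_nonneg_of_nonneg hσ.1.nonneg hx,
    (CFC.le_one_iff σ hσ.1.isHermitian).mp (le_one_of_mem_densityMatrices hσ) x hx⟩

theorem rpow_le_one_of_mem_densityMatrices {σ : Matrix n n ℂ} (hσ : σ ∈ densityMatrices n) {t : ℝ}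
    (ht : 0 ≤ t) : σ ^ t ≤ 1 := by
  rw [rpow_eq_cfc hσ.1]
  refine cfc_le_one _ _ fun x hx => ?_
  obtain ⟨hx0, hx1⟩ := spectrum_subset_Icc_of_mem_densityMatrices hσ hx
  exact Real.rpow_le_one hx0 hx1 ht

theorem one_le_re_trace_rpow_neg_mul {p : ℝ} (hp : 0 ≤ p) {σ ρ : Matrix n n ℂ}
    (hσ : σ ∈ densityMatrices n) (hρ : ρ ∈ densityMatrices n)
    (hker : LinearMap.ker σ.mulVecLin ≤ LinearMap.ker ρ.mulVecLin) :
    1 ≤ (σ ^ (-p) * ρ).trace.re := by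
  have hcont (f : ℝ → ℝ) : ContinuousOn f (spectrum ℝ σ) := σ.finite_real_spectrum.continuousOn f
  set P := cfc (fun x : ℝ => if x = 0 then 1 else 0) σ
  have hσP : σ * P = 0 := by
    have hsa : IsSelfAdjoint σ := hσ.1.isHermitian
    nth_rw 1 [← cfc_id ℝ σ hsa]
    rw [← cfc_mul _ _ σ (hcont _) (hcont _), ← cfc_const_zero ℝ σ]
    exact cfc_congr fun x _ => by by_cases h : x = 0 <;> simp [h]
  have hρP : ρ * P = 0 := by
    ext i j
    have hcol : σ *ᵥ P.col j = 0 := congr_arg (fun M => M.col j) hσP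
    exact congr_fun (hker hcol) i
  have hle : 1 ≤ σ ^ (-p) + P := by
    rw [rpow_eq_cfc hσ.1, ← cfc_add (hf := hcont _) (hg := hcont _)]
    refine one_le_cfc (fun x : ℝ => _) σ (fun x hx => ?_) (hcont _) hσ.1.isHermitian
    obtain ⟨hx0, hx1⟩ := spectrum_subset_Icc_of_mem_densityMatrices hσ hx
    rcases hx0.eq_or_lt' with rfl | h
    · simpa using Real.rpow_nonneg le_rfl _
    · simpa [h.ne'] using Real.one_le_rpow_of_pos_of_le_one_of_nonpos h hx1 (neg_nonpos.mpr hp)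
  have htr := trace_mul_re_mono hle hρ.1
  rwa [Matrix.one_mul, hρ.2, Matrix.add_mul, trace_add, trace_mul_comm P, hρP, trace_zero,
    add_zero] at htr

theorem rpow_re_trace_le {A : Matrix n n ℂ} (hA : A.PosSemidef) {γ : ℝ} (hγ : 1 ≤ γ) :
    A.trace.re ^ γ ≤ (Fintype.card n : ℝ) ^ (γ - 1) * (A ^ γ).trace.re := by
  rw [hA.isHermitian.trace_eq_sum_eigenvalues, trace_rpow hA]
  simpa using Real.rpow_sum_le_const_mul_sum_rpow_of_nonneg Finset.univ hγ
    fun i _ => hA.eigenvalues_nonneg i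

omit [DecidableEq n] in
theorem ker_mulVecLin_le_of_posDef {σ : Matrix n n ℂ} (hσ : σ.PosDef) (ρ : Matrix n n ℂ) :
    LinearMap.ker σ.mulVecLin ≤ LinearMap.ker ρ.mulVecLin := by
  classical
  rw [LinearMap.ker_eq_bot.mpr (mulVec_injective_iff_isUnit.mpr hσ.isUnit)]
  exact bot_le

variable {X B k : Type*} [Fintype X] [DecidableEq X] [Fintype B] [Fintype k]

theorem posSemidef_reshapedCompression (V : Matrix (X × B) k ℂ) {s : Matrix B B ℂ}
    (hs : s.PosSemidef) : (reshapedCompression V s).PosSemidef :=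
  (map_nonneg (reshapedCompression V) hs.nonneg).posSemidef

theorem trace_reshapedCompression (V : Matrix (X × B) k ℂ) (s : Matrix B B ℂ) :
    (reshapedCompression V s).trace = (s * trFst (V * Vᴴ)).trace := by
  have h : reshapedCompression V s = (Vᴴ * ((1 : Matrix X X ℂ) ⊗ₖ s) * V)ᵀ := rfl
  rw [h, trace_transpose, Matrix.trace_mul_cycle, Matrix.trace_mul_comm]
  simp only [trace, trFst, diag_apply, mul_apply, of_apply, kroneckerMap_apply, one_apply,
    Fintype.sum_prod_type, ite_mul, one_mul, zero_mul, Finset.sum_ite_irrel,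
    Finset.sum_const_zero, Finset.sum_ite_eq, Finset.mem_univ, if_true]
  rw [Finset.sum_comm]
  refine Finset.sum_congr rfl fun _ _ => ?_
  rw [Finset.sum_comm]
  simp only [Finset.mul_sum]

variable [DecidableEq B] [DecidableEq k]

theorem sandwichedRenyiDiv_one_kronecker (V : Matrix (X × B) k ℂ) {σ : Matrix B B ℂ}
    (hσ : σ.PosSemidef) {γ : ℝ} (hγ : 0 < γ) (hγ1 : γ ≠ 1) :
    sandwichedRenyiDiv γ (V * Vᴴ) ((1 : Matrix X X ℂ) ⊗ₖ σ) =
      (γ - 1)⁻¹ * Real.log (reshapedCompression V (σ ^ ((1 - γ) / γ)) ^ γ).trace.re := by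
  have hS := PosSemidef.one (n := X) (R := ℂ) |>.kronecker hσ
  have ht : (1 - γ) / (2 * γ) ≠ 0 := div_ne_zero (sub_ne_zero.mpr hγ1.symm) (by positivity)
  set S := ((1 : Matrix X X ℂ) ⊗ₖ σ) ^ ((1 - γ) / (2 * γ)) with hSdef
  have htwice : 2 * ((1 - γ) / (2 * γ)) = (1 - γ) / γ := by field_simp
  have hSS : S * S = (1 : Matrix X X ℂ) ⊗ₖ (σ ^ ((1 - γ) / γ)) := by
    rw [rpow_mul_rpow_self hS, kronecker_rpow PosSemidef.one hσ, CFC.one_rpow, htwice]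
  have hSH : Sᴴ = S := conjTranspose_rpow _ _
  have hleft : S * (V * Vᴴ) * S = (S * V) * (S * V)ᴴ := by
    rw [conjTranspose_mul, hSH]
    simp only [Matrix.mul_assoc]
  have hright : (S * V)ᴴ * (S * V) = (reshapedCompression V (σ ^ ((1 - γ) / γ)))ᵀ := by
    change _ = (Vᴴ * ((1 : Matrix X X ℂ) ⊗ₖ (σ ^ ((1 - γ) / γ))) * V)ᵀᵀ
    rw [transpose_transpose, ← hSS, conjTranspose_mul, hSH]
    simp only [Matrix.mul_assoc]
  have hR := posSemidef_reshapedCompression V (posSemidef_rpow σ ((1 - γ) / γ))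
  rw [sandwichedRenyiDiv, matRpow_eq_rpow hS ht, ← hSdef, hleft,
    matRpow_eq_rpow (posSemidef_self_mul_conjTranspose _) hγ.ne',
    trace_rpow_mul_conjTranspose_comm _ hγ.ne', hright, transpose_rpow hR, trace_transpose]

theorem neg_sandwichedRenyiDiv_le_of_lt_one (V : Matrix (X × B) k ℂ) {σ : Matrix B B ℂ}
    (hσ : σ ∈ densityMatrices B) {γ : ℝ} (hγ : 0 < γ) (hγ1 : γ < 1) :
    -sandwichedRenyiDiv γ (V * Vᴴ) ((1 : Matrix X X ℂ) ⊗ₖ σ) ≤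
      (1 - γ)⁻¹ * (reshapedCompression V 1 ^ γ).trace.re := by
  have hσ1 : σ ^ ((1 - γ) / γ) ≤ 1 :=
    rpow_le_one_of_mem_densityMatrices hσ (div_nonneg (sub_nonneg.mpr hγ1.le) hγ.le)
  have hle : reshapedCompression V (σ ^ ((1 - γ) / γ)) ^ γ ≤ reshapedCompression V 1 ^ γ :=
    CFC.rpow_le_rpow ⟨hγ.le, hγ1.le⟩ ((reshapedCompression V).monotone' hσ1)
  have htr := trace_mul_re_mono hle PosSemidef.one
  rw [Matrix.mul_one, Matrix.mul_one] at htr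
  rw [sandwichedRenyiDiv_one_kronecker V hσ.1 hγ hγ1.ne, ← neg_mul, ← inv_neg, neg_sub]
  exact mul_le_mul_of_nonneg_left
    ((Real.log_le_self (trace_re_nonneg (posSemidef_rpow _ _))).trans htr)
    (inv_nonneg.mpr (sub_nonneg.mpr hγ1.le))

theorem one_le_card_rpow_mul_trace_reshapedCompression_rpow {V : Matrix (X × B) k ℂ}
    (hV : (V * Vᴴ).trace = 1) {σ : Matrix B B ℂ} (hσ : σ ∈ densityMatrices B)
    (hker : LinearMap.ker σ.mulVecLin ≤ LinearMap.ker (trFst (V * Vᴴ)).mulVecLin)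
    {γ : ℝ} (hγ : 1 < γ) :
    1 ≤ (Fintype.card k : ℝ) ^ (γ - 1) *
      (reshapedCompression V (σ ^ ((1 - γ) / γ)) ^ γ).trace.re := by
  have hp : (1 - γ) / γ = -((γ - 1) / γ) := by ring
  have htr : 1 ≤ (reshapedCompression V (σ ^ ((1 - γ) / γ))).trace.re := by
    rw [trace_reshapedCompression, hp]
    exact one_le_re_trace_rpow_neg_mul (div_nonneg (by linarith) (by linarith)) hσ
      (trFst_mem_densityMatrices ⟨posSemidef_self_mul_conjTranspose V, hV⟩) hker
  exact (Real.one_le_rpow htr (by linarith)).trans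
    (rpow_re_trace_le (posSemidef_reshapedCompression V (posSemidef_rpow _ _)) hγ.le)

omit [DecidableEq k] in
theorem neg_sandwichedRenyiDiv_le_of_one_lt {V : Matrix (X × B) k ℂ}
    (hV : (V * Vᴴ).trace = 1) {σ : Matrix B B ℂ} (hσ : σ ∈ densityMatrices B)
    (hker : LinearMap.ker σ.mulVecLin ≤ LinearMap.ker (trFst (V * Vᴴ)).mulVecLin)
    {γ : ℝ} (hγ : 1 < γ) :
    -sandwichedRenyiDiv γ (V * Vᴴ) ((1 : Matrix X X ℂ) ⊗ₖ σ) ≤ Real.log (Fintype.card k) := by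
  classical
  have hQ := one_le_card_rpow_mul_trace_reshapedCompression_rpow hV hσ hker hγ
  rw [sandwichedRenyiDiv_one_kronecker V hσ.1 (by linarith) hγ.ne']
  set Q := (reshapedCompression V (σ ^ ((1 - γ) / γ)) ^ γ).trace.re
  have hd : (0 : ℝ) < Fintype.card k := (Nat.cast_nonneg _).lt_of_ne' fun h => by
    rw [h, Real.zero_rpow (sub_ne_zero.mpr hγ.ne'), zero_mul] at hQ
    exact zero_lt_one.not_ge hQ
  have hQ0 : 0 < Q := pos_of_mul_pos_right (zero_lt_one.trans_le hQ) (by positivity)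
  have hlog := Real.log_nonneg hQ
  rw [Real.log_mul (by positivity) hQ0.ne', Real.log_rpow hd] at hlog
  rw [neg_le, le_inv_mul_iff₀ (sub_pos.mpr hγ)]
  linarith

omit [DecidableEq k] in
theorem neg_sandwichedRenyiDiv_le_condSandwichedRenyiUp {V : Matrix (X × B) k ℂ}
    (hV : (V * Vᴴ).trace = 1) {σ : Matrix B B ℂ} (hσ : σ ∈ densityMatrices B) (hσ' : σ.PosDef)
    {γ : ℝ} (hγ : 0 < γ) (hγ1 : γ ≠ 1) :
    -sandwichedRenyiDiv γ (V * Vᴴ) ((1 : Matrix X X ℂ) ⊗ₖ σ) ≤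
      condSandwichedRenyiUp γ (V * Vᴴ) := by
  classical
  refine le_csSup ?_ ⟨σ, hσ.1, hσ.2, fun _ => ker_mulVecLin_le_of_posDef hσ' _, rfl⟩
  rcases hγ1.lt_or_gt with hγ1 | hγ1
  · refine ⟨(1 - γ)⁻¹ * (reshapedCompression V 1 ^ γ).trace.re, ?_⟩
    rintro _ ⟨τ, hτ, hτ1, -, rfl⟩
    exact neg_sandwichedRenyiDiv_le_of_lt_one V ⟨hτ, hτ1⟩ hγ hγ1
  · refine ⟨Real.log (Fintype.card k), ?_⟩
    rintro _ ⟨τ, hτ, hτ1, hker, rfl⟩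
    exact neg_sandwichedRenyiDiv_le_of_one_lt hV ⟨hτ, hτ1⟩ (hker hγ1) hγ1

theorem exp_mul_condSandwichedRenyiUp_le_trace_rpow {V : Matrix (X × B) k ℂ}
    (hV : (V * Vᴴ).trace = 1) {σ : Matrix B B ℂ} (hσ : σ ∈ densityMatrices B) (hσ' : σ.PosDef)
    {γ : ℝ} (hγ : 1 < γ) :
    Real.exp ((1 - γ) / γ * condSandwichedRenyiUp γ (V * Vᴴ)) ≤
      (reshapedCompression V (σ ^ ((1 - γ) / γ)) ^ γ).trace.re ^ (1 / γ) := by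
  have hH := neg_sandwichedRenyiDiv_le_condSandwichedRenyiUp hV hσ hσ' (by linarith) hγ.ne'
  have hQ := one_le_card_rpow_mul_trace_reshapedCompression_rpow hV hσ
    (ker_mulVecLin_le_of_posDef hσ' _) hγ
  rw [sandwichedRenyiDiv_one_kronecker V hσ.1 (by linarith) hγ.ne', neg_le,
    le_inv_mul_iff₀ (sub_pos.mpr hγ)] at hH
  set Q := (reshapedCompression V (σ ^ ((1 - γ) / γ)) ^ γ).trace.re
  have hQ0 : 0 < Q := pos_of_mul_pos_right (zero_lt_one.trans_le hQ) (by positivity)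
  rw [Real.rpow_def_of_pos hQ0, mul_one_div, div_mul_eq_mul_div]
  gcongr
  linarith

theorem trace_rpow_le_exp_mul_condSandwichedRenyiUp {V : Matrix (X × B) k ℂ}
    (hV : (V * Vᴴ).trace = 1) {σ : Matrix B B ℂ} (hσ : σ ∈ densityMatrices B) (hσ' : σ.PosDef)
    {γ : ℝ} (hγ : 0 < γ) (hγ1 : γ < 1) :
    (reshapedCompression V (σ ^ ((1 - γ) / γ)) ^ γ).trace.re ^ (1 / γ) ≤
      Real.exp ((1 - γ) / γ * condSandwichedRenyiUp γ (V * Vᴴ)) := by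
  have hH := neg_sandwichedRenyiDiv_le_condSandwichedRenyiUp hV hσ hσ' hγ hγ1.ne
  rw [sandwichedRenyiDiv_one_kronecker V hσ.1 hγ hγ1.ne, ← neg_mul, ← inv_neg, neg_sub,
    inv_mul_le_iff₀ (sub_pos.mpr hγ1)] at hH
  set Q := (reshapedCompression V (σ ^ ((1 - γ) / γ)) ^ γ).trace.re
  have hQ0 : 0 ≤ Q := trace_re_nonneg (posSemidef_rpow _ _)
  calc Q ^ (1 / γ) ≤ Real.exp ((1 - γ) * condSandwichedRenyiUp γ (V * Vᴴ)) ^ (1 / γ) := by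
        gcongr
        exact (Real.le_exp_log Q).trans (Real.exp_le_exp.mpr hH)
    _ = Real.exp ((1 - γ) / γ * condSandwichedRenyiUp γ (V * Vᴴ)) := by
        rw [← Real.exp_mul, mul_one_div, div_mul_eq_mul_div]

end Entropy

theorem nonempty_of_mem_densityMatrices {n : Type*} [Fintype n] {ρ : Matrix n n ℂ}
    (hρ : ρ ∈ densityMatrices n) : Nonempty n := by
  by_contra h
  rw [not_nonempty_iff] at h
  simpa [Matrix.trace] using hρ.2

theorem sum_conjTranspose_mul_self_kronecker_one {k l ι : Type*} [Fintype k] [DecidableEq l]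
    (D : Type*) [Fintype D] [DecidableEq D] {s : Finset ι} {m : ι → Matrix k l ℂ}
    (hm : ∑ i ∈ s, (m i)ᴴ * m i = 1) :
    ∑ i ∈ s, (m i ⊗ₖ (1 : Matrix D D ℂ))ᴴ * (m i ⊗ₖ (1 : Matrix D D ℂ)) = 1 := by
  simp only [conjTranspose_kronecker, ← mul_kronecker_mul, conjTranspose_one, Matrix.one_mul]
  rw [← one_kronecker_one, ← hm]
  ext
  simp only [Matrix.sum_apply, kroneckerMap_apply, Finset.sum_mul]

theorem conjTranspose_mul_self_kronecker_one_le {k l : Type*} [Fintype k] [Finite l]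
    [DecidableEq l] (D : Type*) [Fintype D] [DecidableEq D] {G : Matrix k l ℂ} {r : ℝ}
    (hG : Gᴴ * G ≤ r • (1 : Matrix l l ℂ)) :
    (G ⊗ₖ (1 : Matrix D D ℂ))ᴴ * (G ⊗ₖ (1 : Matrix D D ℂ)) ≤ r • 1 := by
  have := Fintype.ofFinite l
  have h : r • (1 : Matrix (l × D) (l × D) ℂ) - (Gᴴ * G) ⊗ₖ (1 : Matrix D D ℂ) =
      (r • (1 : Matrix l l ℂ) - Gᴴ * G) ⊗ₖ (1 : Matrix D D ℂ) := by
    rw [← one_kronecker_one, ← smul_kronecker]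
    ext
    simp only [Matrix.sub_apply, kroneckerMap_apply, sub_mul]
  rw [conjTranspose_kronecker, ← mul_kronecker_mul, conjTranspose_one, Matrix.one_mul,
    Matrix.le_iff, h]
  exact (Matrix.le_iff.mp hG).kronecker PosSemidef.one

section Uncertainty

variable {A B C D X Y : Type*} [Fintype A] [Fintype B] [DecidableEq B] [Fintype C] [DecidableEq C]
  [Fintype X] [DecidableEq X] [DecidableEq Y]

theorem trace_copyState_mul_conjTranspose [DecidableEq A] {m : X → Matrix A A ℂ}
    (hm : ∑ x, (m x)ᴴ * m x = 1) (ψ : A × B × C → ℂ) :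
    (copyState B C m ψ * (copyState B C m ψ)ᴴ).trace = star ψ ⬝ᵥ ψ := by
  rw [trace_mul_comm, ← star_vec_dotProduct_vec, vec_copyState, star_mulVec, ← dotProduct_mulVec,
    mulVec_mulVec, conjTranspose_mul_copyIsometry hm, one_mulVec]

theorem neg_log_le_condSandwichedRenyiUp_copyState [DecidableEq A] [Fintype Y] [Nonempty A]
    [Nonempty B] [Nonempty C] [Nonempty X] [Nonempty Y] {m : X → Matrix A A ℂ}
    {n : Y → Matrix A A ℂ} (hm : ∑ x, (m x)ᴴ * m x = 1) (hn : ∑ y, (n y)ᴴ * n y = 1)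
    {r α β : ℝ} (hr : 0 ≤ r) (hmn : ∀ y x, (n y * (m x)ᴴ)ᴴ * (n y * (m x)ᴴ) ≤ r • 1)
    {ψ : A × B × C → ℂ} (hψ : star ψ ⬝ᵥ ψ = 1) (hα : 1 < α) (hβ : 0 < β) (hαβ : 1 / α + 1 / β = 2) :
    -Real.log r ≤
      condSandwichedRenyiUp α (copyState B C m ψ * (copyState B C m ψ)ᴴ) +
      condSandwichedRenyiUp β (copyState C B n (ψ ∘ (swapSndThird A B C).symm) *
        (copyState C B n (ψ ∘ (swapSndThird A B C).symm))ᴴ) := by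
  set V := copyState B C m ψ
  set W := copyState C B n (ψ ∘ (swapSndThird A B C).symm)
  have hV : (V * Vᴴ).trace = 1 := (trace_copyState_mul_conjTranspose hm ψ).trans hψ
  have hW : (W * Wᴴ).trace = 1 := by
    rw [trace_copyState_mul_conjTranspose hn, ← hψ]
    exact comp_equiv_dotProduct_comp_equiv (star ψ) ψ (swapSndThird A B C).symm
  obtain ⟨p, hp⟩ : ∃ p, p = 1 - 1 / α := ⟨_, rfl⟩
  have hα' : 1 / α < 1 := by rw [div_lt_one] <;> linarith
  have hα0 : 0 < 1 / α := by positivity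
  have hβ1 : β < 1 := (one_lt_div hβ).mp (by linarith)
  have hpα : 1 - p = 1 / α := by linarith
  have hpβ : 1 + p = 1 / β := by linarith
  have hαp : (1 - α) / α = -p := by rw [sub_div, div_self] <;> linarith
  have hβp : (1 - β) / β = p := by rw [sub_div, div_self] <;> linarith
  have key := le_mul_of_copyState hm hn hr (p := p) ⟨by linarith, by linarith⟩ hmn ψ
    (a := Real.exp (-p * condSandwichedRenyiUp α (V * Vᴴ)))
    (b := Real.exp (p * condSandwichedRenyiUp β (W * Wᴴ)))
    (fun σ hσ hσ' => by
      rw [hpα, one_div_one_div, ← hαp]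
      exact exp_mul_condSandwichedRenyiUp_le_trace_rpow hV hσ hσ' hα)
    (fun τ hτ hτ' => by
      rw [hpβ, one_div_one_div, ← hβp]
      exact trace_rpow_le_exp_mul_condSandwichedRenyiUp hW hτ hτ' hβ hβ1)
  have hp0 : 0 < p := by linarith
  have hr' : 0 < r := by
    refine hr.lt_of_ne fun h => ?_
    rw [← h, Real.zero_rpow hp0.ne', zero_mul] at key
    exact (Real.exp_pos _).not_ge key
  rw [Real.rpow_def_of_pos hr', ← Real.exp_add, Real.exp_le_exp] at key
  nlinarith

/-- The classical-quantum state of the outcome of the POVM `M` on the first factor of `ρ` and the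
untouched second factor, with the third factor traced out. -/
noncomputable def postMeasurementState (M : X → Matrix A A ℂ)
    (ρ : Matrix (A × B × C) (A × B × C) ℂ) : Matrix (X × B) (X × B) ℂ :=
  of fun p p' => if p.1 = p'.1 then
    trFstThird ((M p.1 ⊗ₖ (1 : Matrix (B × C) (B × C) ℂ)) * ρ) p.2 p'.2 else 0

theorem postMeasurementState_swapSndThird (N : Y → Matrix A A ℂ)
    (ρ : Matrix (A × B × C) (A × B × C) ℂ) :
    postMeasurementState N (ρ.submatrix (swapSndThird A B C).symm (swapSndThird A B C).symm) =
      of fun p p' => if p.1 = p'.1 then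
        trFstSnd ((N p.1 ⊗ₖ (1 : Matrix (B × C) (B × C) ℂ)) * ρ) p.2 p'.2 else 0 := by
  have h (y : Y) : N y ⊗ₖ (1 : Matrix (C × B) (C × B) ℂ) =
      (N y ⊗ₖ (1 : Matrix (B × C) (B × C) ℂ)).submatrix (swapSndThird A B C).symm
        (swapSndThird A B C).symm := by
    ext ⟨a, c, b⟩ ⟨a', c', b'⟩
    simp [swapSndThird, one_apply, and_comm]
  ext p p'
  simp only [postMeasurementState, of_apply, h, submatrix_mul_equiv]
  rfl

/-- The purification of `S Sᴴ`, with the purifying system `D` attached to the first factor. -/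
def purification (S : Matrix (A × B × C) D ℂ) : (A × D) × B × C → ℂ :=
  fun q => S (q.1.1, q.2) q.1.2

variable [Fintype D]

omit [DecidableEq B] [DecidableEq C] in
theorem star_purification_dotProduct_purification (S : Matrix (A × B × C) D ℂ) :
    star (purification S) ⬝ᵥ purification S = (S * Sᴴ).trace := by
  simp only [dotProduct, purification, Matrix.trace, diag_apply, mul_apply, conjTranspose_apply,
    Fintype.sum_prod_type, Pi.star_apply, mul_comm]
  refine Finset.sum_congr rfl fun a _ => ?_
  rw [Finset.sum_comm]
  exact Finset.sum_congr rfl fun b _ => Finset.sum_comm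

variable [DecidableEq D]

theorem copyState_purification_mul_conjTranspose (m : X → Matrix A A ℂ)
    (S : Matrix (A × B × C) D ℂ) :
    copyState B C (fun x => m x ⊗ₖ (1 : Matrix D D ℂ)) (purification S) *
        (copyState B C (fun x => m x ⊗ₖ (1 : Matrix D D ℂ)) (purification S))ᴴ =
      postMeasurementState (fun x => (m x)ᴴ * m x) (S * Sᴴ) := by
  ext ⟨x, b⟩ ⟨x', b'⟩
  simp only [copyState, copyIsometry, postMeasurementState, purification, trFstThird, of_apply,
    mul_apply, mulVec, dotProduct, conjTranspose_apply, kroneckerMap_apply, one_apply,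
    Fintype.sum_prod_type, ite_and, apply_ite star, star_zero, ite_mul, zero_mul,
    mul_ite, mul_one, mul_zero, Finset.sum_ite_irrel, Finset.sum_const_zero, Finset.sum_ite_eq,
    Finset.sum_ite_eq', Finset.mem_univ, if_true]
  by_cases hx : x = x'
  · subst hx
    let T (b : B) : Matrix A (D × C) ℂ := of fun a q => S (a, b, q.2) q.1
    have hT : (m x * T b * (m x * T b')ᴴ).trace = ((m x)ᴴ * m x * (T b * (T b')ᴴ)).trace := by
      rw [conjTranspose_mul, ← Matrix.mul_assoc, trace_mul_comm]
      simp only [Matrix.mul_assoc]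
    simp only [T, Matrix.trace, diag_apply, mul_apply, conjTranspose_apply, of_apply,
      Fintype.sum_prod_type] at hT
    rw [if_pos rfl, if_pos rfl, hT]
    refine Finset.sum_congr rfl fun a _ => ?_
    rw [Finset.sum_comm]
    refine Finset.sum_congr rfl fun a' _ => ?_
    rw [Finset.sum_comm, Finset.mul_sum]
  · rw [if_neg hx, if_neg (Ne.symm hx)]

theorem neg_log_le_condSandwichedRenyiUp_postMeasurementState [DecidableEq A] [Fintype Y]
    [Nonempty X] [Nonempty Y] {m : X → Matrix A A ℂ} {n : Y → Matrix A A ℂ}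
    (hm : ∑ x, (m x)ᴴ * m x = 1) (hn : ∑ y, (n y)ᴴ * n y = 1)
    {r α β : ℝ} (hr : 0 ≤ r) (hmn : ∀ y x, (n y * (m x)ᴴ)ᴴ * (n y * (m x)ᴴ) ≤ r • 1)
    {ρ : Matrix (A × B × C) (A × B × C) ℂ} (hρ : ρ ∈ densityMatrices (A × B × C))
    (hα : 1 < α) (hβ : 0 < β) (hαβ : 1 / α + 1 / β = 2) :
    -Real.log r ≤
      condSandwichedRenyiUp α (postMeasurementState (fun x => (m x)ᴴ * m x) ρ) +
      condSandwichedRenyiUp β (postMeasurementState (fun y => (n y)ᴴ * n y)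
        (ρ.submatrix (swapSndThird A B C).symm (swapSndThird A B C).symm)) := by
  obtain ⟨⟨a, b, c⟩⟩ := nonempty_of_mem_densityMatrices hρ
  have : Nonempty A := ⟨a⟩
  have : Nonempty B := ⟨b⟩
  have : Nonempty C := ⟨c⟩
  obtain ⟨S, rfl⟩ := CStarAlgebra.nonneg_iff_eq_mul_star_self.mp hρ.1.nonneg
  rw [star_eq_conjTranspose] at hρ ⊢
  have hmn' (y x) : (n y ⊗ₖ (1 : Matrix (A × B × C) (A × B × C) ℂ) * (m x ⊗ₖ 1)ᴴ)ᴴ *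
      (n y ⊗ₖ 1 * (m x ⊗ₖ 1)ᴴ) ≤ r • 1 := by
    have h := conjTranspose_mul_self_kronecker_one_le (A × B × C) (hmn y x)
    rwa [conjTranspose_kronecker (m x), conjTranspose_one, ← mul_kronecker_mul, Matrix.one_mul]
  have hψ : star (purification S) ⬝ᵥ purification S = 1 :=
    (star_purification_dotProduct_purification S).trans hρ.2
  have hswap : purification S ∘ (swapSndThird (A × A × B × C) B C).symm =
      purification (S.submatrix (swapSndThird A B C).symm id) := rfl
  have key := neg_log_le_condSandwichedRenyiUp_copyState
    (sum_conjTranspose_mul_self_kronecker_one (A × B × C) hm)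
    (sum_conjTranspose_mul_self_kronecker_one (A × B × C) hn) hr hmn' hψ hα hβ hαβ
  rwa [hswap, copyState_purification_mul_conjTranspose, copyState_purification_mul_conjTranspose,
    conjTranspose_submatrix, ← submatrix_mul _ _ _ _ _ Function.bijective_id] at key

theorem conjTranspose_mul_self_le_of_norm_le {n : Type*} [Fintype n] [DecidableEq n]
    {G : Matrix n n ℂ} {c : ℝ} (hG : ‖G‖ ≤ c) : Gᴴ * G ≤ c ^ 2 • (1 : Matrix n n ℂ) := by
  have h : ‖G‖ ^ 2 • (1 : Matrix n n ℂ) ≤ c ^ 2 • (1 : Matrix n n ℂ) := by gcongr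
  refine le_trans ?_ h
  rw [← Algebra.algebraMap_eq_smul_one]
  exact CStarAlgebra.star_mul_le_algebraMap_norm_sq

theorem norm_rpow_le_one {n : Type*} [Fintype n] [DecidableEq n] {Z : Matrix n n ℂ} (hZ : Z ≤ 1)
    {t : ℝ} (ht : t ∈ Set.Icc 0 1) : ‖Z ^ t‖ ≤ 1 := by
  have h : Z ^ t ≤ 1 := by simpa only [CFC.one_rpow] using CFC.rpow_le_rpow ht hZ
  exact (CStarAlgebra.norm_le_one_iff_of_nonneg (Z ^ t) CFC.rpow_nonneg).mpr h

theorem norm_rpow_mul_rpow_comm {n : Type*} [Fintype n] [DecidableEq n] (P Q : Matrix n n ℂ)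
    (s t : ℝ) : ‖P ^ s * Q ^ t‖ = ‖Q ^ t * P ^ s‖ := by
  rw [← l2_opNorm_conjTranspose, conjTranspose_mul, conjTranspose_rpow, conjTranspose_rpow]

variable [DecidableEq A] [Fintype Y] [Nonempty X] [Nonempty Y] {M : X → Matrix A A ℂ}
  {N : Y → Matrix A A ℂ} {c α β : ℝ}

theorem two_mul_log_le_condSandwichedRenyiUp_of_one_lt (hM : ∀ x, (M x).PosSemidef)
    (hM1 : ∑ x, M x = 1) (hN : ∀ y, (N y).PosSemidef) (hN1 : ∑ y, N y = 1)
    (hc : ∀ x y, ‖M x ^ (1 / 2 : ℝ) * N y ^ (1 / 2 : ℝ)‖ ≤ c)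
    {ρ : Matrix (A × B × C) (A × B × C) ℂ} (hρ : ρ ∈ densityMatrices (A × B × C))
    (hα : 1 < α) (hβ : 0 < β) (hαβ : 1 / α + 1 / β = 2) :
    2 * Real.log (1 / c) ≤ condSandwichedRenyiUp α (postMeasurementState M ρ) +
      condSandwichedRenyiUp β (postMeasurementState N
        (ρ.submatrix (swapSndThird A B C).symm (swapSndThird A B C).symm)) := by
  have hM' : (fun x => (M x ^ (1 / 2 : ℝ))ᴴ * M x ^ (1 / 2 : ℝ)) = M := funext fun x => by
    rw [conjTranspose_rpow, rpow_half_mul_rpow_half (hM x)]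
  have hN' : (fun y => (N y ^ (1 / 2 : ℝ))ᴴ * N y ^ (1 / 2 : ℝ)) = N := funext fun y => by
    rw [conjTranspose_rpow, rpow_half_mul_rpow_half (hN y)]
  have hNM (y x) : ‖N y ^ (1 / 2 : ℝ) * (M x ^ (1 / 2 : ℝ))ᴴ‖ ≤ c := by
    rw [conjTranspose_rpow, norm_rpow_mul_rpow_comm]
    exact hc x y
  have key := neg_log_le_condSandwichedRenyiUp_postMeasurementState
    (m := fun x => M x ^ (1 / 2 : ℝ)) (n := fun y => N y ^ (1 / 2 : ℝ))
    ((congrArg (fun F => ∑ x, F x) hM').trans hM1) ((congrArg (fun F => ∑ y, F y) hN').trans hN1)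
    (sq_nonneg c) (fun y x => conjTranspose_mul_self_le_of_norm_le (hNM y x)) hρ hα hβ hαβ
  rw [hM', hN', Real.log_pow] at key
  rw [one_div, Real.log_inv, mul_neg]
  exact key

theorem two_mul_log_le_condSandwichedRenyiUp (hM : ∀ x, (M x).PosSemidef)
    (hM1 : ∑ x, M x = 1) (hN : ∀ y, (N y).PosSemidef) (hN1 : ∑ y, N y = 1)
    (hc : ∀ x y, ‖M x ^ (1 / 2 : ℝ) * N y ^ (1 / 2 : ℝ)‖ ≤ c)
    {ρ : Matrix (A × B × C) (A × B × C) ℂ} (hρ : ρ ∈ densityMatrices (A × B × C))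
    (hα : 0 < α) (hβ : 0 < β) (hαβ : 1 / α + 1 / β = 2) (hα1 : α ≠ 1) :
    2 * Real.log (1 / c) ≤ condSandwichedRenyiUp α (postMeasurementState M ρ) +
      condSandwichedRenyiUp β (postMeasurementState N
        (ρ.submatrix (swapSndThird A B C).symm (swapSndThird A B C).symm)) := by
  rcases hα1.lt_or_gt with hα1 | hα1
  · have hβ1 : 1 < β := (div_lt_one hβ).mp (by linarith [one_lt_one_div hα hα1])
    have hρ' : ρ.submatrix (swapSndThird A B C).symm (swapSndThird A B C).symm ∈
        densityMatrices (A × C × B) :=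
      ⟨hρ.1.submatrix _, hρ.2 ▸ (swapSndThird A B C).symm.sum_comp ρ.diag⟩
    rw [add_comm]
    exact two_mul_log_le_condSandwichedRenyiUp_of_one_lt hN hN1 hM hM1
      (fun y x => (norm_rpow_mul_rpow_comm _ _ _ _).trans_le (hc x y)) hρ' hβ1 hα
      ((add_comm _ _).trans hαβ)
  · exact two_mul_log_le_condSandwichedRenyiUp_of_one_lt hM hM1 hN hN1 hc hρ hα1 hβ hαβ

end Uncertainty

section Statement

variable {A X Y : Type*} [Fintype A] [DecidableEq A] {M : X → Matrix A A ℂ}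
  {N : Y → Matrix A A ℂ}

theorem norm_toEuclideanCLM_matRpow_half_mul (hM : ∀ x, (M x).PosSemidef)
    (hN : ∀ y, (N y).PosSemidef) (x : X) (y : Y) :
    ‖Matrix.toEuclideanCLM (𝕜 := ℂ) (matRpow (M x) (1 / 2) * matRpow (N y) (1 / 2))‖ =
      ‖M x ^ (1 / 2 : ℝ) * N y ^ (1 / 2 : ℝ)‖ := by
  rw [matRpow_eq_rpow (hM x) one_half_pos.ne', matRpow_eq_rpow (hN y) one_half_pos.ne']
  rfl

theorem le_ciSup_ciSup {ι κ : Type*} [Finite ι] [Finite κ] (f : ι → κ → ℝ) (i : ι) (k : κ) :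
    f i k ≤ ⨆ i, ⨆ k, f i k :=
  (le_ciSup (Set.finite_range (f i)).bddAbove k).trans
    (le_ciSup (f := fun i => ⨆ k, f i k) (Set.finite_range _).bddAbove i)

variable [Fintype X] [Fintype Y]

theorem norm_povm_rpow_half_mul_rpow_half_le_one (hM : ∀ x, (M x).PosSemidef) (hM1 : ∑ x, M x = 1)
    (hN : ∀ y, (N y).PosSemidef) (hN1 : ∑ y, N y = 1) (x : X) (y : Y) :
    ‖M x ^ (1 / 2 : ℝ) * N y ^ (1 / 2 : ℝ)‖ ≤ 1 := by
  have hMx : M x ≤ 1 := hM1 ▸ Finset.single_le_sum (fun j _ => (hM j).nonneg) (Finset.mem_univ x)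
  have hNy : N y ≤ 1 := hN1 ▸ Finset.single_le_sum (fun j _ => (hN j).nonneg) (Finset.mem_univ y)
  have ht : (1 / 2 : ℝ) ∈ Set.Icc 0 1 := by norm_num
  exact (l2_opNorm_mul _ _).trans
    (mul_le_one₀ (norm_rpow_le_one hMx ht) (norm_nonneg _) (norm_rpow_le_one hNy ht))

theorem log_one_div_iSup_iSup_norm_nonneg [Nonempty X] [Nonempty Y] (hM : ∀ x, (M x).PosSemidef)
    (hM1 : ∑ x, M x = 1) (hN : ∀ y, (N y).PosSemidef) (hN1 : ∑ y, N y = 1) :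
    0 ≤ Real.log (1 / ⨆ x, ⨆ y, ‖Matrix.toEuclideanCLM (𝕜 := ℂ)
      (matRpow (M x) (1 / 2) * matRpow (N y) (1 / 2))‖) := by
  simp only [norm_toEuclideanCLM_matRpow_half_mul hM hN]
  rw [one_div, Real.log_inv, neg_nonneg]
  exact Real.log_nonpos (Real.iSup_nonneg fun _ => Real.iSup_nonneg fun _ => norm_nonneg _)
    (ciSup_le fun x => ciSup_le fun y =>
      norm_povm_rpow_half_mul_rpow_half_le_one hM hM1 hN hN1 x y)

end Statement

theorem uncertainty_sandwiched_up_general {A B C X Y : Type*}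
    [Fintype A] [DecidableEq A] [Fintype B] [DecidableEq B] [Fintype C] [DecidableEq C]
    [Fintype X] [DecidableEq X] [Nonempty X] [Fintype Y] [DecidableEq Y] [Nonempty Y]
    (ρ : Matrix (A × B × C) (A × B × C) ℂ) (hρ : ρ.PosSemidef) (hρ1 : ρ.trace = 1)
    (M : X → Matrix A A ℂ) (N : Y → Matrix A A ℂ)
    (hM : ∀ x, (M x).PosSemidef) (hMsum : ∑ x, M x = 1)
    (hN : ∀ y, (N y).PosSemidef) (hNsum : ∑ y, N y = 1)
    (c : ℝ)
    (hc : c = ⨆ x : X, ⨆ y : Y, ‖Matrix.toEuclideanCLM (𝕜 := ℂ)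
      (matRpow (M x) (1 / 2) * matRpow (N y) (1 / 2))‖)
    (α β : ℝ) (hα : (1 : ℝ) / 2 < α) (hβ : (1 : ℝ) / 2 < β)
    (hab : 1 / α + 1 / β = 2) (hα1 : α ≠ 1) :
    let ρXB : Matrix (X × B) (X × B) ℂ := Matrix.of fun p p' =>
      if p.1 = p'.1 then
        trFstThird ((M p.1 ⊗ₖ (1 : Matrix (B × C) (B × C) ℂ)) * ρ) p.2 p'.2 else 0;
    let ρYC : Matrix (Y × C) (Y × C) ℂ := Matrix.of fun p p' =>
      if p.1 = p'.1 then
        trFstSnd ((N p.1 ⊗ₖ (1 : Matrix (B × C) (B × C) ℂ)) * ρ) p.2 p'.2 else 0;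
    condSandwichedRenyiUp α ρXB + condSandwichedRenyiUp β ρYC ≥ 2 * Real.log (1 / c) := by
  intro ρXB ρYC
  simp only [norm_toEuclideanCLM_matRpow_half_mul hM hN] at hc
  rw [show ρYC = _ from (postMeasurementState_swapSndThird N ρ).symm]
  exact two_mul_log_le_condSandwichedRenyiUp hM hMsum hN hNsum
    (fun x y => hc ▸ le_ciSup_ciSup (fun x y => ‖M x ^ (1 / 2 : ℝ) * N y ^ (1 / 2 : ℝ)‖) x y)
    ⟨hρ, hρ1⟩ (one_half_pos.trans hα) (one_half_pos.trans hβ) hab hα1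

theorem uncertainty_sandwiched_up {A B C X Y : Type*}
    [Fintype A] [DecidableEq A] [Fintype B] [DecidableEq B] [Fintype C] [DecidableEq C]
    [Fintype X] [DecidableEq X] [Nonempty X] [Fintype Y] [DecidableEq Y] [Nonempty Y]
    (ρ : Matrix (A × B × C) (A × B × C) ℂ) (hρ : ρ.PosSemidef) (hρ1 : ρ.trace = 1)
    (M : X → Matrix A A ℂ) (N : Y → Matrix A A ℂ)
    (hM : ∀ x, (M x).PosSemidef) (hMsum : ∑ x, M x = 1)
    (hN : ∀ y, (N y).PosSemidef) (hNsum : ∑ y, N y = 1)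
    (c : ℝ)
    (hc : c = ⨆ x : X, ⨆ y : Y, ‖Matrix.toEuclideanCLM (𝕜 := ℂ)
      (matRpow (M x) (1 / 2) * matRpow (N y) (1 / 2))‖)
    (α β : ℝ) (hα : (1 : ℝ) / 2 < α) (hβ : (1 : ℝ) / 2 < β)
    (hab : 1 / α + 1 / β = 2) (hα1 : α ≠ 1) :
    let ρXB : Matrix (X × B) (X × B) ℂ := Matrix.of fun p p' =>
      if p.1 = p'.1 then
        trFstThird ((M p.1 ⊗ₖ (1 : Matrix (B × C) (B × C) ℂ)) * ρ) p.2 p'.2 else 0;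
    let ρYC : Matrix (Y × C) (Y × C) ℂ := Matrix.of fun p p' =>
      if p.1 = p'.1 then
        trFstSnd ((N p.1 ⊗ₖ (1 : Matrix (B × C) (B × C) ℂ)) * ρ) p.2 p'.2 else 0;
    condSandwichedRenyiUp α ρXB + condSandwichedRenyiUp β ρYC ≥ Real.log (1 / c) := by
  have hlog : 0 ≤ Real.log (1 / c) := hc ▸ log_one_div_iSup_iSup_norm_nonneg hM hMsum hN hNsum
  exact (le_mul_of_one_le_left hlog one_le_two).trans <|
    uncertainty_sandwiched_up_general ρ hρ hρ1 M N hM hMsum hN hNsum c hc α β hα hβ hab hα1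
end
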